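/- Let n ≥ 1 and let T be a nice extension of ZFC. Assume T. Suppose that M and N are inner models each of which Σ_n-resembles the core model over T, and M is Σ_n-rigid. Then M = N. -/

import Mathlib

/- ## A framework for transitive class/set models of fragments of ZFC,
     inside the universe `ZFSet` of ZF sets. -/

open FirstOrder FirstOrder.Language

/-- The language of set theory: a single binary relation symbol `∈`. -/
inductive SetLRel : ℕ → Type
  | mem : SetLRel 2

/-- The first-order language of set theory. -/
def setL : FirstOrder.Language := ⟨fun _ => Empty, SetLRel⟩

/-- Evaluation of a term of the language of set theory (terms are just variables). -/
def tval {n : ℕ} (v : Fin n → ZFSet) : setL.Term (Empty ⊕ Fin n) → ZFSet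
  | .var (Sum.inl e) => e.elim
  | .var (Sum.inr i) => v i
  | .func f _ => f.elim

/-- Tarskian satisfaction of a formula of the language of set theory in a class `S` of
ZF-sets (equipped with true membership), under the assignment `v`. -/
def ZSat (S : Set ZFSet) : ∀ {n : ℕ}, setL.BoundedFormula Empty n → (Fin n → ZFSet) → Prop
  | _, .falsum, _ => False
  | _, .equal t u, v => tval v t = tval v u
  | _, .rel R ts, v =>
      match R with
      | SetLRel.mem => tval v (ts 0) ∈ tval v (ts 1)
  | _, .imp φ ψ, v => ZSat S φ v → ZSat S ψ v
  | _, .all φ, v => ∀ x ∈ S, ZSat S φ (Fin.snoc v x)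

/-- Satisfaction of a sentence in a class of ZF-sets. -/
def SatS (S : Set ZFSet) (σ : setL.Sentence) : Prop := ZSat S σ finZeroElim

/-- A class of ZF-sets is transitive. -/
def IsTransClass (S : Set ZFSet) : Prop := ∀ x ∈ S, ∀ y ∈ x, y ∈ S

/-- `r` is a well-ordering of the set `x`, from the point of view of the class `S`
(Kuratowski pairs code the relation; minimality is required for nonempty subsets of `x`
lying in `S`). -/
def WellOrders (S : Set ZFSet) (r x : ZFSet) : Prop :=
  (∀ a ∈ x, ZFSet.pair a a ∉ r) ∧
  (∀ a ∈ x, ∀ b ∈ x, ∀ c ∈ x, ZFSet.pair a b ∈ r → ZFSet.pair b c ∈ r → ZFSet.pair a c ∈ r) ∧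
  (∀ a ∈ x, ∀ b ∈ x, a ≠ b → (ZFSet.pair a b ∈ r ∨ ZFSet.pair b a ∈ r)) ∧
  (∀ y ∈ S, (∀ z ∈ y, z ∈ x) → y ≠ ∅ → ∃ m ∈ y, ∀ z ∈ y, ZFSet.pair z m ∉ r)

/-- `S` is a transitive model of ZFC⁻, i.e. of ZFC stated with the Replacement Scheme and
the Well-Ordering Theorem but without the Power Set Axiom.  (Extensionality and Foundation
are automatic for transitive classes of ZF-sets.) -/
def ModelsZFCminus (S : Set ZFSet) : Prop :=
  IsTransClass S ∧
  (∅ : ZFSet) ∈ S ∧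
  (∀ x ∈ S, ∀ y ∈ S, ({x, y} : ZFSet) ∈ S) ∧
  (∀ x ∈ S, (ZFSet.sUnion x : ZFSet) ∈ S) ∧
  ZFSet.omega ∈ S ∧
  (∀ (n : ℕ) (φ : setL.BoundedFormula Empty (n + 1)) (p : Fin n → ZFSet),
    (∀ i, p i ∈ S) → ∀ a ∈ S, ∃ b ∈ S, ∀ y, y ∈ b ↔ (y ∈ a ∧ ZSat S φ (Fin.snoc p y))) ∧
  (∀ (n : ℕ) (φ : setL.BoundedFormula Empty (n + 2)) (p : Fin n → ZFSet),
    (∀ i, p i ∈ S) → ∀ a ∈ S,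
      (∀ x ∈ a, ∃! y, y ∈ S ∧ ZSat S φ (Fin.snoc (Fin.snoc p x) y)) →
      ∃ b ∈ S, ∀ y, y ∈ b ↔ ∃ x ∈ a, y ∈ S ∧ ZSat S φ (Fin.snoc (Fin.snoc p x) y)) ∧
  (∀ x ∈ S, ∃ r ∈ S, WellOrders S r x)

/-- `S` is a transitive model of ZFC. -/
def ModelsZFC (S : Set ZFSet) : Prop :=
  ModelsZFCminus S ∧ ∀ x ∈ S, ∃ p ∈ S, ∀ y, y ∈ p ↔ (y ∈ S ∧ y ⊆ x)

/-- `f` is (the graph of) a surjection of `a` onto `b`. -/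
def SurjFun (f a b : ZFSet) : Prop :=
  ZFSet.IsFunc a b f ∧ ∀ y ∈ b, ∃ x ∈ a, ZFSet.pair x y ∈ f

/-- `f` is (the graph of) an injection of `a` into `b`. -/
def InjFun (f a b : ZFSet) : Prop :=
  ZFSet.IsFunc a b f ∧ ∀ x ∈ a, ∀ x' ∈ a, ∀ y, ZFSet.pair x y ∈ f → ZFSet.pair x' y ∈ f → x = x'

/-- `f` is (the graph of) a cofinal function from `β` into the ordinal `α`. -/
def CofinalFun (f β α : ZFSet) : Prop :=
  ZFSet.IsFunc β α f ∧ ∀ ξ ∈ α, ∃ η ∈ β, ∃ ζ, ZFSet.pair η ζ ∈ f ∧ (ξ ∈ ζ ∨ ξ = ζ)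

/-- `μ = cof(α)` as computed inside the class `S` (for `S = Set.univ`, the true cofinality). -/
def IsCofOf (S : Set ZFSet) (α μ : ZFSet) : Prop :=
  μ ∈ S ∧ μ.IsOrdinal ∧ (∃ f ∈ S, CofinalFun f μ α) ∧
  ∀ ν ∈ S, ZFSet.IsOrdinal ν → (∃ f ∈ S, CofinalFun f ν α) → μ ⊆ ν

/-- `κ` is a cardinal from the point of view of the class `S`
(for `S = Set.univ`, a true cardinal). -/
def IsCardIn (S : Set ZFSet) (κ : ZFSet) : Prop :=
  κ.IsOrdinal ∧ ∀ α ∈ κ, ∀ f ∈ S, ¬ SurjFun f α κ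

/-- `μ` is an (infinite) regular cardinal from the point of view of the class `S`. -/
def IsRegularIn (S : Set ZFSet) (μ : ZFSet) : Prop :=
  ZFSet.omega ⊆ μ ∧ IsCardIn S μ ∧ IsCofOf S μ μ

/-- `ν = μ⁺`, the cardinal successor of `μ`, as computed in the class `S`. -/
def CardSuccIn (S : Set ZFSet) (μ ν : ZFSet) : Prop :=
  ν ∈ S ∧ IsCardIn S ν ∧ μ ∈ ν ∧ ∀ ξ ∈ S, IsCardIn S ξ → μ ∈ ξ → ν ⊆ ξ

/-- `μ` is the largest cardinal of the model `S`. -/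
def IsLargestCardIn (S : Set ZFSet) (μ : ZFSet) : Prop :=
  μ ∈ S ∧ IsCardIn S μ ∧ ∀ x ∈ S, IsCardIn S x → x ⊆ μ

/-- `α = sup A`, for `A` a collection of ordinals: `α` is the least ordinal above all of them. -/
def IsSupOf (α : ZFSet) (A : Set ZFSet) : Prop :=
  α.IsOrdinal ∧ (∀ a ∈ A, a ⊆ α) ∧ ∀ β : ZFSet, β.IsOrdinal → (∀ a ∈ A, a ⊆ β) → α ⊆ β

/-- `π` is an elementary embedding (for the language of set theory) from the class `S`
into the class `T`. -/
def IsElem (S T : Set ZFSet) (π : ZFSet → ZFSet) : Prop :=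
  (∀ x ∈ S, π x ∈ T) ∧
  ∀ (n : ℕ) (φ : setL.BoundedFormula Empty n) (v : Fin n → ZFSet),
    (∀ i, v i ∈ S) → (ZSat S φ v ↔ ZSat T φ (fun i => π (v i)))

/-- `S` is an inner model (of ZFC): a transitive proper class model of ZFC containing
all the ordinals. -/
def IsInnerModel (S : Set ZFSet) : Prop :=
  ModelsZFC S ∧ ∀ x : ZFSet, x.IsOrdinal → x ∈ S

/-- `μ` is a measurable cardinal from the point of view of the class `S`: there is a
`μ`-complete nonprincipal ultrafilter on `μ` in `S`. -/
def MeasurableIn (S : Set ZFSet) (μ : ZFSet) : Prop :=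
  IsCardIn S μ ∧ ZFSet.omega ∈ μ ∧
  ∃ U ∈ S,
    (∀ x ∈ U, x ⊆ μ) ∧ μ ∈ U ∧ (∅ : ZFSet) ∉ U ∧
    (∀ x ∈ U, ∀ y ∈ S, y ⊆ μ → x ⊆ y → y ∈ U) ∧
    (∀ x ∈ S, ∀ y ∈ S, x ⊆ μ → y ⊆ μ → (∀ w ∈ μ, (w ∈ x ↔ w ∉ y)) → (x ∈ U ∨ y ∈ U)) ∧
    (∀ z ∈ μ, ∃ x ∈ U, z ∉ x) ∧
    (∀ γ ∈ μ, ∀ f ∈ S,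
      (∀ η ∈ γ, ∃ x ∈ U, ZFSet.pair η x ∈ f) →
      (∀ p ∈ f, ∃ η ∈ γ, ∃ x ∈ U, p = ZFSet.pair η x) →
      ∃ b ∈ U, ∀ w : ZFSet, w ∈ b ↔ (w ∈ μ ∧ ∀ η ∈ γ, ∀ x, ZFSet.pair η x ∈ f → w ∈ x))

/-- `μ` is singular from the point of view of `S`: some function in `S` maps a smaller
ordinal cofinally into `μ`. -/
def SingularIn (S : Set ZFSet) (μ : ZFSet) : Prop :=
  ∃ γ : ZFSet, γ.IsOrdinal ∧ γ ∈ μ ∧ ∃ f ∈ S, CofinalFun f γ μ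

/-- `μ` is a strong limit cardinal from the point of view of `S`: `2^κ < μ` for all `κ < μ`,
as computed in `S`. -/
def StrongLimitIn (S : Set ZFSet) (μ : ZFSet) : Prop :=
  IsCardIn S μ ∧ ZFSet.omega ∈ μ ∧
  ∀ κ ∈ μ, ∀ p ∈ S, (∀ z : ZFSet, z ∈ p ↔ (z ∈ S ∧ z ⊆ κ)) →
    ∃ α ∈ μ, ∃ f ∈ S, InjFun f p α

/-- `M` is close to `N` (`M ⊆ N` inner models): every cardinal `μ` of `N` which is
measurable or a singular strong limit in `N` is measurable or singular in `M`, and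
`μ⁺` is computed correctly by `M`, i.e. `μ^{+,M} = μ^{+,N}`. -/
def CloseTo (M N : Set ZFSet) : Prop :=
  ∀ μ ∈ N, IsCardIn N μ →
    (MeasurableIn N μ ∨ (SingularIn N μ ∧ StrongLimitIn N μ)) →
    ((MeasurableIn M μ ∨ SingularIn M μ) ∧
      ∀ ν : ZFSet, (CardSuccIn M μ ν ↔ CardSuccIn N μ ν))

/-- `S ⊨ "V = HOD"`: every member of `S` is (the unique element) definable over `(S, ∈)`
from ordinal parameters. -/
def ModelsVeqHOD (S : Set ZFSet) : Prop :=
  ∀ x ∈ S, ∃ (n : ℕ) (φ : setL.BoundedFormula Empty (n + 1)) (p : Fin n → ZFSet),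
    (∀ i, p i ∈ S ∧ (p i).IsOrdinal) ∧ ∀ y ∈ S, (ZSat S φ (Fin.snoc p y) ↔ y = x)

/-- `t` is the transitive closure of `x`. -/
def IsTransClosureOf (t x : ZFSet) : Prop :=
  x ⊆ t ∧ t.IsTransitive ∧ ∀ u : ZFSet, x ⊆ u → u.IsTransitive → t ⊆ u

/-- `H^S_ν`: the class of members of `S` whose transitive closure has size `< ν`,
as computed in `S`. -/
def HIn (S : Set ZFSet) (ν : ZFSet) : Set ZFSet :=
  {x | x ∈ S ∧ ∃ t ∈ S, IsTransClosureOf t x ∧ ∃ κ ∈ ν, ∃ f ∈ S, SurjFun f κ t}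

/-- The von Neumann natural number `n` as a ZF-set. -/
def natZ : ℕ → ZFSet
  | 0 => ∅
  | n + 1 => insert (natZ n) (natZ n)

/-- The term given by the `i`-th bounded variable. -/
def mvar {n : ℕ} (i : Fin n) : setL.Term (Empty ⊕ Fin n) :=
  FirstOrder.Language.Term.var (Sum.inr i)

/-- The atomic formula `v i ∈ v j`. -/
def memF {n : ℕ} (i j : Fin n) : setL.BoundedFormula Empty n :=
  FirstOrder.Language.Relations.boundedFormula₂ SetLRel.mem (mvar i) (mvar j)

/-- Δ₀ (bounded) formulas of the language of set theory. -/
inductive IsDelta0 : ∀ {n : ℕ}, setL.BoundedFormula Empty n → Prop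
  | falsum {n : ℕ} : IsDelta0 (n := n) FirstOrder.Language.BoundedFormula.falsum
  | equal {n : ℕ} (t u : setL.Term (Empty ⊕ Fin n)) :
      IsDelta0 (FirstOrder.Language.BoundedFormula.equal t u)
  | rel {n l : ℕ} (R : setL.Relations l) (ts : Fin l → setL.Term (Empty ⊕ Fin n)) :
      IsDelta0 (FirstOrder.Language.BoundedFormula.rel R ts)
  | imp {n : ℕ} {φ ψ : setL.BoundedFormula Empty n} :
      IsDelta0 φ → IsDelta0 ψ → IsDelta0 (φ.imp ψ)
  | ball {n : ℕ} (j : Fin n) {φ : setL.BoundedFormula Empty (n + 1)} :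
      IsDelta0 φ →
      IsDelta0 (((memF (Fin.last n) j.castSucc).imp φ).all)

mutual
  /-- Σ_k formulas of the Levy hierarchy. -/
  inductive LevySigma : ℕ → ∀ {n : ℕ}, setL.BoundedFormula Empty n → Prop
    | delta0 {n : ℕ} {φ : setL.BoundedFormula Empty n} : IsDelta0 φ → LevySigma 0 φ
    | ofPi {k : ℕ} {n : ℕ} {φ : setL.BoundedFormula Empty n} :
        LevyPi k φ → LevySigma (k + 1) φ
    | ex {k : ℕ} {n : ℕ} {φ : setL.BoundedFormula Empty (n + 1)} :
        LevySigma (k + 1) φ → LevySigma (k + 1) φ.ex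

  /-- Π_k formulas of the Levy hierarchy. -/
  inductive LevyPi : ℕ → ∀ {n : ℕ}, setL.BoundedFormula Empty n → Prop
    | delta0 {n : ℕ} {φ : setL.BoundedFormula Empty n} : IsDelta0 φ → LevyPi 0 φ
    | ofSigma {k : ℕ} {n : ℕ} {φ : setL.BoundedFormula Empty n} :
        LevySigma k φ → LevyPi (k + 1) φ
    | all {k : ℕ} {n : ℕ} {φ : setL.BoundedFormula Empty (n + 1)} :
        LevyPi (k + 1) φ → LevyPi (k + 1) φ.all
end

/-- `L[A]`, for `A` a set (of ordinals): the smallest inner model containing `A`. -/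
def LSet (A : ZFSet) : Set ZFSet :=
  ⋂₀ {W : Set ZFSet | IsInnerModel W ∧ A ∈ W}

/-- The sentence "for every set of ordinals `A`, `L[A] ⊨ θ`", interpreted in the
transitive class `S`.  (For `A ∈ S`, `L[A]` as computed in `S` is the true `L[A]`.) -/
def NiceHolds (θ : setL.Sentence) (S : Set ZFSet) : Prop :=
  ∀ A ∈ S, (∀ x ∈ A, ZFSet.IsOrdinal x) → SatS (LSet A) θ

/-- The nice extension `T = ZFC + "∀ set of ordinals A, L[A] ⊨ θ"` of ZFC holds in the
transitive class `S`. -/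
def THolds (θ : setL.Sentence) (S : Set ZFSet) : Prop :=
  ModelsZFC S ∧ NiceHolds θ S

/-- `C` is an inner model of ZFC from the point of view of the inner model `S`. -/
def InnerModelIn (S C : Set ZFSet) : Prop :=
  C ⊆ S ∧ ModelsZFC C ∧ ∀ x : ZFSet, x.IsOrdinal → x ∈ C

/-- The class defined, in the transitive class model `S`, by the formula
`φ(v) = ∃μ (μ is a strong limit cardinal ∧ v ∈ H_μ ∧ H_μ ⊨ θ(v))`, where `θ` is the
witnessing formula.  This is `φ^S`. -/
def locClass (S : Set ZFSet) (θ : setL.BoundedFormula Empty 1) : Set ZFSet :=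
  {x | ∃ μ ∈ S, StrongLimitIn S μ ∧ x ∈ HIn S μ ∧ ZSat (HIn S μ) θ ![x]}

universe u

/-- The formula `φ(v) = ∃μ (μ strong limit ∧ v ∈ H_μ ∧ H_μ ⊨ θ(v))` (determined by its
witnessing formula `θ`) locally defines an inner model over the nice extension
`T = ZFC + "∀ A, L[A] ⊨ θT"`:  provably in `T`, `φ^V` is an inner model of ZFC and, for
every strong limit cardinal `μ`, `H^{φ^V}_μ = θ^{H_μ}`. -/
def LocallyDefinesInner (θT : setL.Sentence) (θ : setL.BoundedFormula Empty 1) : Prop :=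
  ∀ S : Set ZFSet.{u}, IsInnerModel S → THolds θT S →
    InnerModelIn S (locClass S θ) ∧
    ∀ μ ∈ S, StrongLimitIn S μ →
      HIn (locClass S θ) μ = {x | x ∈ HIn S μ ∧ ZSat (HIn S μ) θ ![x]}

/-- The formula `φ` (given by its witnessing formula `θφ`) locally defines a *close* inner
model over `T`:  it locally defines an inner model over `T`, and `T` proves that `φ^V` is
close to `V`. -/
def LocallyDefinesCloseInner (θT : setL.Sentence) (θφ : setL.BoundedFormula Empty 1) : Prop :=
  LocallyDefinesInner.{u} θT θφ ∧
  ∀ S : Set ZFSet.{u}, IsInnerModel S → THolds θT S → CloseTo (locClass S θφ) S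

/-- `M` Σ_n-resembles the core model over the nice extension `T = ZFC + "∀ A, L[A] ⊨ θT"`,
relative to the fixed Gödel numbering `code` of formulas:  there are a formula `φ` (given
by its witnessing formula `θφ`) locally defining a close inner model over `T` with
`M = φ^V`, and a Σ_n formula `ψ(u, v, w)` such that, provably in `T`:
(1) `φ^V ⊨ V = HOD`;  (2) `φ^V ⊨ ∀x φ(x)`;  and (3) for any Σ₂ formula `γ`, if `W = γ^V`
is a close inner model of ZFC then `ψ(⌜γ⌝, v, w)` defines an elementary embedding from
`φ^V` into `φ^W`. -/
def SigmaResemblesCore (n : ℕ) (θT : setL.Sentence)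
    (code : setL.BoundedFormula Empty 1 → ℕ) (M : Set ZFSet.{u}) : Prop :=
  ∃ (θφ : setL.BoundedFormula Empty 1) (ψ : setL.BoundedFormula Empty 3),
    LevySigma n ψ ∧
    LocallyDefinesCloseInner.{u} θT θφ ∧
    M = locClass Set.univ θφ ∧
    ∀ S : Set ZFSet.{u}, IsInnerModel S → THolds θT S →
      ModelsVeqHOD (locClass S θφ) ∧
      locClass (locClass S θφ) θφ = locClass S θφ ∧
      ∀ γ : setL.BoundedFormula Empty 1, LevySigma 2 γ →
        InnerModelIn S {x | x ∈ S ∧ ZSat S γ ![x]} →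
        CloseTo {x | x ∈ S ∧ ZSat S γ ![x]} S →
        ∃ j : ZFSet → ZFSet,
          IsElem (locClass S θφ) (locClass {x | x ∈ S ∧ ZSat S γ ![x]} θφ) j ∧
          ∀ x y : ZFSet, ((x ∈ locClass S θφ ∧ j x = y) ↔ ZSat S ψ ![natZ (code γ), x, y])

/-- `M` is Σ_n-rigid: there is no nontrivial elementary embedding `j : M → M` whose graph
is definable by a Σ_n formula. -/
def SigmaRigid (n : ℕ) (M : Set ZFSet) : Prop :=
  ¬ ∃ (j : ZFSet → ZFSet) (γ : setL.BoundedFormula Empty 2),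
      LevySigma n γ ∧
      (∀ x y : ZFSet, (x ∈ M ∧ j x = y) ↔ ZSat Set.univ γ ![x, y]) ∧
      IsElem M M j ∧ ∃ x ∈ M, j x ≠ x

open FirstOrder FirstOrder.Language

abbrev BF (n : ℕ) := setL.BoundedFormula Empty n

/-! ### Formula combinators -/
def notF {n : ℕ} (φ : BF n) : BF n := φ.imp BoundedFormula.falsum
def andF {n : ℕ} (φ ψ : BF n) : BF n := notF (φ.imp (notF ψ))
def eqF {n : ℕ} (i j : Fin n) : BF n := BoundedFormula.equal (mvar i) (mvar j)
def exF {n : ℕ} (φ : BF (n+1)) : BF n := notF (BoundedFormula.all (notF φ))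

theorem ZSat_not {S : Set ZFSet} {n : ℕ} {φ : BF n} {v : Fin n → ZFSet} :
    ZSat S (notF φ) v ↔ ¬ ZSat S φ v := Iff.rfl
theorem ZSat_imp {S : Set ZFSet} {n : ℕ} {φ ψ : BF n} {v : Fin n → ZFSet} :
    ZSat S (φ.imp ψ) v ↔ (ZSat S φ v → ZSat S ψ v) := Iff.rfl
theorem ZSat_all {S : Set ZFSet} {n : ℕ} {φ : BF (n+1)} {v : Fin n → ZFSet} :
    ZSat S φ.all v ↔ ∀ x ∈ S, ZSat S φ (Fin.snoc v x) := Iff.rfl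
theorem ZSat_and {S : Set ZFSet} {n : ℕ} {φ ψ : BF n} {v : Fin n → ZFSet} :
    ZSat S (andF φ ψ) v ↔ (ZSat S φ v ∧ ZSat S ψ v) := by
  simp only [andF, ZSat_not, ZSat_imp]; tauto
theorem ZSat_ex {S : Set ZFSet} {n : ℕ} {φ : BF (n+1)} {v : Fin n → ZFSet} :
    ZSat S (exF φ) v ↔ ∃ x ∈ S, ZSat S φ (Fin.snoc v x) := by
  simp only [exF, ZSat_not, ZSat_all]; push Not; rfl
theorem ZSat_ex' {S : Set ZFSet} {n : ℕ} {φ : BF (n+1)} {v : Fin n → ZFSet} :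
    ZSat S φ.ex v ↔ ∃ x ∈ S, ZSat S φ (Fin.snoc v x) := ZSat_ex
theorem ZSat_mem {S : Set ZFSet} {n : ℕ} {i j : Fin n} {v : Fin n → ZFSet} :
    ZSat S (memF i j) v ↔ v i ∈ v j := Iff.rfl
theorem ZSat_eq {S : Set ZFSet} {n : ℕ} {i j : Fin n} {v : Fin n → ZFSet} :
    ZSat S (eqF i j) v ↔ v i = v j := Iff.rfl
theorem ZSat_fls {S : Set ZFSet} {n : ℕ} {v : Fin n → ZFSet} :
    ZSat S (BoundedFormula.falsum) v ↔ False := Iff.rfl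

/-- variable index of a term -/
def tidx {n : ℕ} : setL.Term (Empty ⊕ Fin n) → Fin n
  | .var (Sum.inl e) => e.elim
  | .var (Sum.inr i) => i
  | .func f _ => f.elim

theorem tval_eq {n : ℕ} (v : Fin n → ZFSet) (t : setL.Term (Empty ⊕ Fin n)) :
    tval v t = v (tidx t) := by
  match t with
  | .var (Sum.inl e) => exact e.elim
  | .var (Sum.inr i) => rfl
  | .func f _ => exact f.elim

def liftR {m n : ℕ} (ρ : Fin m → Fin n) : Fin (m+1) → Fin (n+1) :=
  Fin.snoc (α := fun _ => Fin (n+1)) (fun i => (ρ i).castSucc) (Fin.last n)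

theorem snoc_liftR {m n : ℕ} (ρ : Fin m → Fin n) (v : Fin n → ZFSet) (x : ZFSet) :
    (Fin.snoc v x : Fin (n+1) → ZFSet) ∘ liftR ρ = (Fin.snoc (v ∘ ρ) x : Fin (m+1) → ZFSet) := by
  funext i
  refine Fin.lastCases ?_ (fun i => ?_) i <;> simp [liftR]

def ren : ∀ {m n : ℕ}, (Fin m → Fin n) → BF m → BF n
  | _, _, _, .falsum => .falsum
  | _, _, ρ, .equal t u => .equal (mvar (ρ (tidx t))) (mvar (ρ (tidx u)))
  | _, _, ρ, .rel R ts => .rel R (fun i => mvar (ρ (tidx (ts i))))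
  | _, _, ρ, .imp φ ψ => .imp (ren ρ φ) (ren ρ ψ)
  | _, _, ρ, .all φ => .all (ren (liftR ρ) φ)

theorem ZSat_ren {S : Set ZFSet} {m : ℕ} (φ : BF m) : ∀ {n : ℕ} (ρ : Fin m → Fin n)
    (v : Fin n → ZFSet), ZSat S (ren ρ φ) v ↔ ZSat S φ (v ∘ ρ) := by
  induction φ with
  | falsum => intros; rfl
  | equal t u => intro n ρ v; simp only [ren, ZSat, tval_eq]; rfl
  | rel R ts => 
    intro n ρ v; cases R
    simp only [ren, ZSat, tval_eq]; rfl
  | imp φ ψ h1 h2 => intro n ρ v; simp only [ren, ZSat, h1, h2]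
  | all φ h => intro n ρ v; simp only [ren, ZSat, h, snoc_liftR]

theorem ren_delta0 {m : ℕ} {φ : BF m} (h : IsDelta0 φ) : ∀ {n : ℕ} (ρ : Fin m → Fin n),
    IsDelta0 (ren ρ φ) := by
  induction h with
  | falsum => intros; exact .falsum
  | equal t u => intros; exact .equal _ _
  | rel R ts => intros; exact .rel _ _
  | imp _ _ h1 h2 => intro n ρ; exact .imp (h1 ρ) (h2 ρ)
  | @ball m j φ h1 h2 => 
    intro n ρ
    have : ren ρ (((memF (Fin.last m) j.castSucc).imp φ).all) =
      (((memF (Fin.last n) (ρ j).castSucc).imp (ren (liftR ρ) φ)).all) := by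
      simp only [ren, memF, Relations.boundedFormula₂, Relations.boundedFormula]
      congr 3
      funext i
      fin_cases i
      · simp [tidx, mvar, liftR]
      · simp [tidx, mvar, liftR]
    rw [this]
    exact .ball _ (h2 _)

mutual
theorem ren_sigma : ∀ {k m : ℕ} {φ : BF m}, LevySigma k φ → ∀ {n : ℕ} (ρ : Fin m → Fin n),
    LevySigma k (ren ρ φ)
  | _, _, _, .delta0 h, _, ρ => .delta0 (ren_delta0 h ρ)
  | _, _, _, .ofPi h, _, ρ => .ofPi (ren_pi h ρ)
  | _, _, _, .ex h, _, ρ => .ex (ren_sigma h (liftR ρ))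
theorem ren_pi : ∀ {k m : ℕ} {φ : BF m}, LevyPi k φ → ∀ {n : ℕ} (ρ : Fin m → Fin n),
    LevyPi k (ren ρ φ)
  | _, _, _, .delta0 h, _, ρ => .delta0 (ren_delta0 h ρ)
  | _, _, _, .ofSigma h, _, ρ => .ofSigma (ren_sigma h ρ)
  | _, _, _, .all h, _, ρ => .all (ren_pi h (liftR ρ))
end

/-- relativization of φ to class defined by γ -/
def relf (γ : BF 1) : ∀ {n : ℕ}, BF n → BF n
  | _, .falsum => .falsum
  | _, .equal t u => .equal t u
  | _, .rel R ts => .rel R ts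
  | _, .imp φ ψ => .imp (relf γ φ) (relf γ ψ)
  | n, .all φ => .all (.imp (ren (fun _ => Fin.last n) γ) (relf γ φ))

theorem ZSat_relf {S : Set ZFSet} {γ : BF 1} {n : ℕ} (φ : BF n) : ∀ (v : Fin n → ZFSet),
    ZSat S (relf γ φ) v ↔ ZSat {x | x ∈ S ∧ ZSat S γ ![x]} φ v := by
  induction φ with
  | falsum => intros; rfl
  | equal t u => intro v; rfl
  | rel R ts => intro v; cases R; rfl
  | imp φ ψ h1 h2 => intro v; simp only [relf, ZSat, h1, h2]
  | @all k φ h => 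
    intro v; simp only [relf, ZSat, h, ZSat_ren, Set.mem_setOf_eq, and_imp]
    refine forall₂_congr fun x hx => ?_
    have : ((Fin.snoc v x : Fin (k+1) → ZFSet) ∘ fun (_ : Fin 1) => Fin.last k) = ![x] := by
      funext i; simp
    rw [this]

/-- relativization to the set denoted by variable `j` -/
def relb : ∀ {m n : ℕ}, (Fin m → Fin n) → Fin n → BF m → BF n
  | _, _, _, _, .falsum => .falsum
  | _, _, ρ, _, .equal t u => .equal (mvar (ρ (tidx t))) (mvar (ρ (tidx u)))
  | _, _, ρ, _, .rel R ts => .rel R (fun i => mvar (ρ (tidx (ts i))))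
  | _, _, ρ, j, .imp φ ψ => .imp (relb ρ j φ) (relb ρ j ψ)
  | _, n, ρ, j, .all φ => .all (.imp (memF (Fin.last n) j.castSucc) (relb (liftR ρ) j.castSucc φ))

theorem relb_delta0 {m : ℕ} (φ : BF m) : ∀ {n : ℕ} (ρ : Fin m → Fin n) (j : Fin n),
    IsDelta0 (relb ρ j φ) := by
  induction φ with
  | falsum => intros; exact .falsum
  | equal t u => intros; exact .equal _ _
  | rel R ts => intros; exact .rel _ _
  | imp _ _ h1 h2 => intro n ρ j; exact .imp (h1 ρ j) (h2 ρ j)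
  | all φ h => intro n ρ j; exact .ball _ (h _ _)

theorem ZSat_relb {S : Set ZFSet} (hS : IsTransClass S) {m : ℕ} (φ : BF m) :
    ∀ {n : ℕ} (ρ : Fin m → Fin n) (j : Fin n) (v : Fin n → ZFSet), (v j ∈ S) →
    (ZSat S (relb ρ j φ) v ↔ ZSat {x | x ∈ v j} φ (v ∘ ρ)) := by
  induction φ with
  | falsum => intros; rfl
  | equal t u => intro n ρ j v _; simp only [relb, ZSat, tval_eq]; rfl
  | rel R ts => 
    intro n ρ j v _; cases R
    simp only [relb, ZSat, tval_eq]; rfl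
  | imp φ ψ h1 h2 => intro n ρ j v hv; simp only [relb, ZSat, h1 _ _ v hv, h2 _ _ v hv]
  | all φ h => 
    intro n ρ j v hv
    simp only [relb, ZSat_all, ZSat_imp, ZSat_mem, Fin.snoc_last, Fin.snoc_castSucc, Set.mem_setOf_eq]
    constructor
    · intro H x hx
      have := H x (hS _ hv _ hx) hx
      rw [h _ _ _ (by simpa using hv), snoc_liftR] at this
      simpa using this
    · intro H x hx hxj
      rw [h _ _ _ (by simpa using hv), snoc_liftR]
      simpa using H x hxj

open FirstOrder FirstOrder.Language
set_option linter.unusedVariables false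

/-! ### Definable predicates -/
def Var {n : ℕ} (f : (Fin n → ZFSet) → ZFSet) : Prop := ∃ i, ∀ v, f v = v i

theorem Var.ini {n : ℕ} {f : (Fin n → ZFSet) → ZFSet} (h : Var f) :
    Var (fun w : Fin (n+1) → ZFSet => f (Fin.init w)) := by
  obtain ⟨i, hi⟩ := h
  exact ⟨i.castSucc, fun v => by simp only [hi]; rfl⟩

theorem Var.last {n : ℕ} : Var (fun w : Fin (n+1) → ZFSet => w (Fin.last n)) := ⟨_, fun _ => rfl⟩
theorem Var.idx {n : ℕ} (i : Fin n) : Var (fun w : Fin n → ZFSet => w i) := ⟨_, fun _ => rfl⟩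

def D0 {n : ℕ} (P : (Fin n → ZFSet) → Prop) : Prop :=
  ∃ φ : BF n, IsDelta0 φ ∧ ∀ S, IsTransClass S → ∀ v : Fin n → ZFSet, (∀ i, v i ∈ S) →
    (ZSat S φ v ↔ P v)

def UD {n : ℕ} (P : Set ZFSet → (Fin n → ZFSet) → Prop) : Prop :=
  ∃ φ : BF n, ∀ S, IsInnerModel S → ∀ v : Fin n → ZFSet, (∀ i, v i ∈ S) →
    (ZSat S φ v ↔ P S v)

theorem IsInnerModel.tr {S : Set ZFSet} (h : IsInnerModel S) : IsTransClass S := h.1.1.1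

theorem D0.ud {n : ℕ} {P : (Fin n → ZFSet) → Prop} (h : D0 P) : UD (fun _ v => P v) := by
  obtain ⟨φ, _, h⟩ := h
  exact ⟨φ, fun S hS v hv => h S hS.tr v hv⟩

theorem snoc_mem {S : Set ZFSet} {n : ℕ} {v : Fin n → ZFSet} {x : ZFSet} (hv : ∀ i, v i ∈ S)
    (hx : x ∈ S) (i : Fin (n+1)) : (Fin.snoc v x : Fin (n+1) → ZFSet) i ∈ S := by
  refine Fin.lastCases ?_ (fun i => ?_) i
  · simpa using hx
  · simpa using hv i

section
variable {n : ℕ}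

theorem D0.congr {P Q : (Fin n → ZFSet) → Prop} (h : D0 P) (e : ∀ v, P v ↔ Q v) : D0 Q := by
  have : P = Q := by funext v; exact propext (e v)
  rwa [← this]

theorem D0.mem {f g : (Fin n → ZFSet) → ZFSet} (hf : Var f) (hg : Var g) :
    D0 (fun v => f v ∈ g v) := by
  obtain ⟨i, hi⟩ := hf
  obtain ⟨j, hj⟩ := hg
  exact ⟨memF i j, .rel _ _, fun S _ v _ => by simp only [hi, hj]; rfl⟩
theorem D0.eq {f g : (Fin n → ZFSet) → ZFSet} (hf : Var f) (hg : Var g) :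
    D0 (fun v => f v = g v) := by
  obtain ⟨i, hi⟩ := hf
  obtain ⟨j, hj⟩ := hg
  exact ⟨eqF i j, .equal _ _, fun S _ v _ => by simp only [hi, hj]; rfl⟩
theorem D0.fls : D0 (fun _ : Fin n → ZFSet => False) :=
  ⟨.falsum, .falsum, fun S _ v _ => Iff.rfl⟩
theorem D0.imp {P Q : (Fin n → ZFSet) → Prop} (hP : D0 P) (hQ : D0 Q) :
    D0 (fun v => P v → Q v) := by
  obtain ⟨φ, h, e⟩ := hP
  obtain ⟨ψ, h', e'⟩ := hQ
  exact ⟨φ.imp ψ, h.imp h', fun S hS v hv => by rw [ZSat_imp, e S hS v hv, e' S hS v hv]⟩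
theorem D0.not {P : (Fin n → ZFSet) → Prop} (hP : D0 P) : D0 (fun v => ¬ P v) :=
  hP.imp D0.fls
theorem D0.and {P Q : (Fin n → ZFSet) → Prop} (hP : D0 P) (hQ : D0 Q) :
    D0 (fun v => P v ∧ Q v) :=
  ((hP.imp hQ.not).not).congr fun v => by tauto
theorem D0.or {P Q : (Fin n → ZFSet) → Prop} (hP : D0 P) (hQ : D0 Q) :
    D0 (fun v => P v ∨ Q v) :=
  (hP.not.imp hQ).congr fun v => by tauto
theorem D0.iff {P Q : (Fin n → ZFSet) → Prop} (hP : D0 P) (hQ : D0 Q) :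
    D0 (fun v => P v ↔ Q v) :=
  ((hP.imp hQ).and (hQ.imp hP)).congr fun v => by tauto
theorem D0.ball {f : (Fin n → ZFSet) → ZFSet} (hf : Var f) {P : (Fin n → ZFSet) → ZFSet → Prop}
    (hP : D0 (fun w : Fin (n+1) → ZFSet => P (Fin.init w) (w (Fin.last n)))) :
    D0 (fun v => ∀ x ∈ f v, P v x) := by
  obtain ⟨φ, h, e⟩ := hP
  obtain ⟨i, hi⟩ := hf
  refine ⟨((memF (Fin.last n) i.castSucc).imp φ).all, .ball _ h, fun S hS v hv => ?_⟩
  simp only [ZSat_all, ZSat_imp, ZSat_mem, Fin.snoc_last, Fin.snoc_castSucc, hi]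
  constructor
  · intro H x hx
    have hx' := hS _ (hv i) _ hx
    have := (e S hS _ (snoc_mem hv hx')).1 (H x hx' hx)
    simpa using this
  · intro H x hx' hx
    rw [e S hS _ (snoc_mem hv hx')]
    simpa using H x hx
theorem D0.bex {f : (Fin n → ZFSet) → ZFSet} (hf : Var f) {P : (Fin n → ZFSet) → ZFSet → Prop}
    (hP : D0 (fun w : Fin (n+1) → ZFSet => P (Fin.init w) (w (Fin.last n)))) :
    D0 (fun v => ∃ x ∈ f v, P v x) :=
  (D0.ball (P := fun v x => ¬ P v x) hf hP.not).not.congr fun v => by push Not; rfl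

theorem UD.congr {P Q : Set ZFSet → (Fin n → ZFSet) → Prop} (h : UD P)
    (e : ∀ S, IsInnerModel S → ∀ v : Fin n → ZFSet, (∀ i, v i ∈ S) → (P S v ↔ Q S v)) : UD Q := by
  obtain ⟨φ, h⟩ := h
  exact ⟨φ, fun S hS v hv => (h S hS v hv).trans (e S hS v hv)⟩
theorem UD.imp {P Q : Set ZFSet → (Fin n → ZFSet) → Prop} (hP : UD P) (hQ : UD Q) :
    UD (fun S v => P S v → Q S v) := by
  obtain ⟨φ, e⟩ := hP
  obtain ⟨ψ, e'⟩ := hQ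
  exact ⟨φ.imp ψ, fun S hS v hv => by rw [ZSat_imp, e S hS v hv, e' S hS v hv]⟩
theorem UD.not {P : Set ZFSet → (Fin n → ZFSet) → Prop} (hP : UD P) : UD (fun S v => ¬ P S v) :=
  hP.imp D0.fls.ud
theorem UD.and {P Q : Set ZFSet → (Fin n → ZFSet) → Prop} (hP : UD P) (hQ : UD Q) :
    UD (fun S v => P S v ∧ Q S v) :=
  ((hP.imp hQ.not).not).congr fun S _ v _ => by tauto
theorem UD.or {P Q : Set ZFSet → (Fin n → ZFSet) → Prop} (hP : UD P) (hQ : UD Q) :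
    UD (fun S v => P S v ∨ Q S v) :=
  (hP.not.imp hQ).congr fun S _ v _ => by tauto
theorem UD.iff {P Q : Set ZFSet → (Fin n → ZFSet) → Prop} (hP : UD P) (hQ : UD Q) :
    UD (fun S v => P S v ↔ Q S v) :=
  ((hP.imp hQ).and (hQ.imp hP)).congr fun S _ v _ => by tauto
theorem UD.all {P : Set ZFSet → (Fin n → ZFSet) → ZFSet → Prop}
    (hP : UD (fun S (w : Fin (n+1) → ZFSet) => P S (Fin.init w) (w (Fin.last n)))) :
    UD (fun S v => ∀ x ∈ S, P S v x) := by
  obtain ⟨φ, e⟩ := hP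
  refine ⟨φ.all, fun S hS v hv => ?_⟩
  rw [ZSat_all]
  refine forall₂_congr fun x hx => ?_
  rw [e S hS _ (snoc_mem hv hx)]; simp
theorem UD.ex {P : Set ZFSet → (Fin n → ZFSet) → ZFSet → Prop}
    (hP : UD (fun S (w : Fin (n+1) → ZFSet) => P S (Fin.init w) (w (Fin.last n)))) :
    UD (fun S v => ∃ x ∈ S, P S v x) :=
  (UD.all (P := fun S v x => ¬ P S v x) hP.not).not.congr fun S _ v _ => by push Not; rfl
theorem Var.mem {f : (Fin n → ZFSet) → ZFSet} (hf : Var f) {S : Set ZFSet} {v : Fin n → ZFSet}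
    (hv : ∀ i, v i ∈ S) : f v ∈ S := by
  obtain ⟨i, hi⟩ := hf
  rw [hi]; exact hv i
theorem UD.ball {f : (Fin n → ZFSet) → ZFSet} (hf : Var f)
    {P : Set ZFSet → (Fin n → ZFSet) → ZFSet → Prop}
    (hP : UD (fun S (w : Fin (n+1) → ZFSet) => P S (Fin.init w) (w (Fin.last n)))) :
    UD (fun S v => ∀ x ∈ f v, P S v x) :=
  (UD.all (P := fun S v x => x ∈ f v → P S v x)
    ((D0.mem Var.last hf.ini).ud.imp hP)).congr fun S hS v hv =>
    ⟨fun h x hx => h x (hS.tr _ (hf.mem hv) _ hx) hx, fun h x _ hx => h x hx⟩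
theorem UD.bex {f : (Fin n → ZFSet) → ZFSet} (hf : Var f)
    {P : Set ZFSet → (Fin n → ZFSet) → ZFSet → Prop}
    (hP : UD (fun S (w : Fin (n+1) → ZFSet) => P S (Fin.init w) (w (Fin.last n)))) :
    UD (fun S v => ∃ x ∈ f v, P S v x) :=
  (UD.ball (P := fun S v x => ¬ P S v x) hf hP.not).not.congr fun S _ v _ => by push Not; rfl

theorem UD.raw (φ : BF n) : UD (fun S v => ZSat S φ v) := ⟨φ, fun _ _ _ _ => Iff.rfl⟩

theorem UD.sub {m : ℕ} {P : Set ZFSet → (Fin m → ZFSet) → Prop} (hP : UD P)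
    {f : (Fin n → ZFSet) → Fin m → ZFSet} (hf : ∀ i, Var (fun v => f v i)) :
    UD (fun S v => P S (f v)) := by
  obtain ⟨φ, e⟩ := hP
  choose ρ hρ using hf
  have : ∀ v, f v = v ∘ ρ := fun v => funext fun i => hρ i v
  refine ⟨ren ρ φ, fun S hS v hv => ?_⟩
  simp only [this]
  rw [ZSat_ren, e S hS (v ∘ ρ) fun i => hv _]
theorem UD.sub1 {R : Set ZFSet → ZFSet → Prop} (h : UD (fun S (v : Fin 1 → ZFSet) => R S (v 0)))
    {a : (Fin n → ZFSet) → ZFSet} (ha : Var a) : UD (fun S v => R S (a v)) :=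
  h.sub (f := fun v => ![a v]) fun i => by fin_cases i; exact ha
theorem UD.sub2 {R : Set ZFSet → ZFSet → ZFSet → Prop}
    (h : UD (fun S (v : Fin 2 → ZFSet) => R S (v 0) (v 1)))
    {a b : (Fin n → ZFSet) → ZFSet} (ha : Var a) (hb : Var b) : UD (fun S v => R S (a v) (b v)) :=
  h.sub (f := fun v => ![a v, b v]) fun i => by fin_cases i; exacts [ha, hb]
theorem UD.sub3 {R : Set ZFSet → ZFSet → ZFSet → ZFSet → Prop}
    (h : UD (fun S (v : Fin 3 → ZFSet) => R S (v 0) (v 1) (v 2)))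
    {a b c : (Fin n → ZFSet) → ZFSet} (ha : Var a) (hb : Var b) (hc : Var c) :
    UD (fun S v => R S (a v) (b v) (c v)) :=
  h.sub (f := fun v => ![a v, b v, c v]) fun i => by fin_cases i; exacts [ha, hb, hc]

/-- relativization to a definable inner model -/
theorem UD.rel {F : Set ZFSet → Set ZFSet}
    (hF : UD (fun S (v : Fin 1 → ZFSet) => v 0 ∈ F S)) (hsub : ∀ S, IsInnerModel S → F S ⊆ S)
    (hin : ∀ S, IsInnerModel S → IsInnerModel (F S))
    {P : Set ZFSet → (Fin n → ZFSet) → Prop} (hP : UD P) :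
    UD (fun S v => (∀ i, v i ∈ F S) ∧ P (F S) v) := by
  obtain ⟨φ, e⟩ := hP
  have h1 : UD (fun S (v : Fin n → ZFSet) => ∀ i, v i ∈ F S) := by
    have : ∀ m (ρ : Fin m → Fin n), UD (fun S (v : Fin n → ZFSet) => ∀ i, v (ρ i) ∈ F S) := by
      intro m
      induction m with
      | zero => intro ρ; exact (D0.fls.not.ud).congr fun S _ v _ => by simp
      | succ m ih => 
        intro ρ
        have hF' := hF.sub1 (R := fun S x => x ∈ F S) (Var.idx (ρ (Fin.last m)))
        exact ((ih (fun i => ρ i.castSucc)).and hF').congr fun S _ v _ => by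
          rw [Fin.forall_fin_succ']
    exact this n id
  obtain ⟨γ, hγ⟩ := hF
  have h2 := UD.raw (relf γ φ)
  refine (h1.and h2).congr fun S hS v hv => and_congr_right fun H => ?_
  rw [ZSat_relf]
  have : {x | x ∈ S ∧ ZSat S γ ![x]} = F S := by
    ext x
    constructor
    · rintro ⟨h1, h2⟩
      exact (hγ S hS ![x] (by simpa using h1)).1 h2
    · intro h
      exact ⟨hsub S hS h, (hγ S hS ![x] (by simpa using hsub S hS h)).2 h⟩
  rw [this, e _ (hin S hS) v H]

end

/-! ### transfer -/
theorem UD.trans {n : ℕ} {P : Set ZFSet → (Fin n → ZFSet) → Prop} (hP : UD P) {A B : Set ZFSet}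
    (hA : IsInnerModel A) (hB : IsInnerModel B) {f : ZFSet → ZFSet} (hf : IsElem A B f)
    {v : Fin n → ZFSet} (hv : ∀ i, v i ∈ A) : P A v ↔ P B (fun i => f (v i)) := by
  obtain ⟨φ, e⟩ := hP
  rw [← e A hA v hv, hf.2 n φ v hv, e B hB _ fun i => hf.1 _ (hv i)]
theorem UD.trans1 {R : Set ZFSet → ZFSet → Prop} (h : UD (fun S (v : Fin 1 → ZFSet) => R S (v 0)))
    {A B : Set ZFSet}
    (hA : IsInnerModel A) (hB : IsInnerModel B) {f : ZFSet → ZFSet} (hf : IsElem A B f)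
    {x : ZFSet} (hx : x ∈ A) : R A x ↔ R B (f x) :=
  h.trans hA hB hf (v := ![x]) (by simpa using hx)
theorem UD.trans2 {R : Set ZFSet → ZFSet → ZFSet → Prop}
    (h : UD (fun S (v : Fin 2 → ZFSet) => R S (v 0) (v 1))) {A B : Set ZFSet}
    (hA : IsInnerModel A) (hB : IsInnerModel B) {f : ZFSet → ZFSet} (hf : IsElem A B f)
    {x y : ZFSet} (hx : x ∈ A) (hy : y ∈ A) : R A x y ↔ R B (f x) (f y) :=
  h.trans hA hB hf (v := ![x, y]) (by simp [Fin.forall_fin_two, hx, hy])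

theorem IsElem.restr {F : Set ZFSet → Set ZFSet}
    (hF : UD (fun S (v : Fin 1 → ZFSet) => v 0 ∈ F S)) (hsub : ∀ S, IsInnerModel S → F S ⊆ S)
    (hin : ∀ S, IsInnerModel S → IsInnerModel (F S)) {A B : Set ZFSet}
    (hA : IsInnerModel A) (hB : IsInnerModel B) {f : ZFSet → ZFSet} (hf : IsElem A B f) :
    IsElem (F A) (F B) f := by
  refine ⟨fun x hx => ?_, fun n φ v hv => ?_⟩
  · exact (hF.trans1 (R := fun S x => x ∈ F S) hA hB hf (hsub A hA hx)).1 hx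
  · have := (UD.rel hF hsub hin (UD.raw φ)).trans hA hB hf (v := v) fun i => hsub A hA (hv i)
    have h2 : ∀ i, f (v i) ∈ F B := fun i =>
      (hF.trans1 (R := fun S x => x ∈ F S) hA hB hf (hsub A hA (hv i))).1 (hv i)
    simpa [hv, h2] using this

/-! ### basic Δ₀ facts -/
section
variable {n : ℕ}
theorem D0.sub {f g : (Fin n → ZFSet) → ZFSet} (hf : Var f) (hg : Var g) :
    D0 (fun v => f v ⊆ g v) :=
  (D0.ball hf (P := fun v x => x ∈ g v) (D0.mem Var.last hg.ini)).congr fun v => Iff.rfl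

theorem D0.isPair {f g h : (Fin n → ZFSet) → ZFSet} (hf : Var f) (hg : Var g) (hh : Var h) :
    D0 (fun v => f v = ({g v, h v} : ZFSet)) :=
  (((D0.mem hg hf).and (D0.mem hh hf)).and
    (D0.ball hf (P := fun v x => x = g v ∨ x = h v) ((D0.eq Var.last hg.ini).or
      (D0.eq Var.last hh.ini)))).congr fun v => by
    constructor
    · rintro ⟨⟨h1, h2⟩, h3⟩
      ext z
      simp only [ZFSet.mem_pair]
      refine ⟨h3 z, ?_⟩
      rintro (rfl | rfl) <;> assumption
    · intro h; rw [h]; simp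

theorem D0.isOPair {f g h : (Fin n → ZFSet) → ZFSet} (hf : Var f) (hg : Var g) (hh : Var h) :
    D0 (fun v => f v = ZFSet.pair (g v) (h v)) :=
  (D0.bex hf (P := fun v x => x = {g v, g v} ∧ ∃ y ∈ f v, y = {g v, h v} ∧ f v = {x, y})
    ((D0.isPair Var.last hg.ini hg.ini).and (D0.bex hf.ini
      (P := fun v y => y = {g (Fin.init v), h (Fin.init v)} ∧ f (Fin.init v) = {v (Fin.last n), y})
      ((D0.isPair Var.last hg.ini.ini hh.ini.ini).and
      (D0.isPair hf.ini.ini Var.last.ini Var.last))))).congr fun v => by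
    have e : ({g v, g v} : ZFSet) = {g v} := by ext; simp
    constructor
    · rintro ⟨x, _, rfl, y, _, rfl, h⟩
      rw [h, e]; rfl
    · intro h1
      refine ⟨{g v, g v}, ?_, rfl, {g v, h v}, ?_, rfl, ?_⟩ <;> simp [h1, e, ZFSet.pair]

theorem D0.pairMem {f g h : (Fin n → ZFSet) → ZFSet} (hf : Var f) (hg : Var g) (hh : Var h) :
    D0 (fun v => ZFSet.pair (g v) (h v) ∈ f v) :=
  (D0.bex hf (P := fun v x => x = ZFSet.pair (g v) (h v))
    (D0.isOPair Var.last hg.ini hh.ini)).congr fun v => by simp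
end

open FirstOrder FirstOrder.Language
set_option linter.unusedVariables false

/-! ### Set theory in inner models -/
section
variable {S : Set ZFSet} (hS : IsInnerModel S)
include hS

theorem IsInnerModel.emp : (∅ : ZFSet) ∈ S := hS.1.1.2.1
theorem IsInnerModel.upair {x y : ZFSet} (hx : x ∈ S) (hy : y ∈ S) : ({x, y} : ZFSet) ∈ S :=
  hS.1.1.2.2.1 x hx y hy
theorem IsInnerModel.sing {x : ZFSet} (hx : x ∈ S) : ({x} : ZFSet) ∈ S := by
  have := hS.upair hx hx
  have e : ({x, x} : ZFSet) = {x} := by ext; simp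
  rwa [e] at this
theorem IsInnerModel.pair {x y : ZFSet} (hx : x ∈ S) (hy : y ∈ S) : ZFSet.pair x y ∈ S :=
  hS.upair (hS.sing hx) (hS.upair hx hy)
theorem IsInnerModel.sU {x : ZFSet} (hx : x ∈ S) : ZFSet.sUnion x ∈ S := hS.1.1.2.2.2.1 x hx
theorem IsInnerModel.union {x y : ZFSet} (hx : x ∈ S) (hy : y ∈ S) : x ∪ y ∈ S :=
  hS.sU (hS.upair hx hy)
theorem IsInnerModel.om : ZFSet.omega ∈ S := hS.1.1.2.2.2.2.1
theorem IsInnerModel.pow {x : ZFSet} (hx : x ∈ S) : ∃ p ∈ S, ∀ y, y ∈ p ↔ (y ∈ S ∧ y ⊆ x) :=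
  hS.1.2 x hx
theorem IsInnerModel.memPair {x y z : ZFSet} (hz : z ∈ S) (h : ZFSet.pair x y ∈ z) :
    x ∈ S ∧ y ∈ S := by
  have h1 := hS.tr _ hz _ h
  have h2 : ({x, y} : ZFSet) ∈ S := hS.tr _ h1 _ (by simp [ZFSet.pair])
  exact ⟨hS.tr _ h2 _ (by simp), hS.tr _ h2 _ (by simp)⟩

theorem IsInnerModel.sepn {n : ℕ} {P : Set ZFSet → (Fin (n+1) → ZFSet) → Prop} (hP : UD P)
    {p : Fin n → ZFSet} (hp : ∀ i, p i ∈ S) {a : ZFSet} (ha : a ∈ S) :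
    ∃ b ∈ S, ∀ y, y ∈ b ↔ (y ∈ a ∧ P S (Fin.snoc p y)) := by
  obtain ⟨φ, e⟩ := hP
  obtain ⟨b, hb, h⟩ := hS.1.1.2.2.2.2.2.1 n φ p hp a ha
  refine ⟨b, hb, fun y => ?_⟩
  rw [h]
  refine and_congr_right fun hy => ?_
  exact e S hS _ (snoc_mem hp (hS.tr _ ha _ hy))

theorem IsInnerModel.repn {n : ℕ} {P : Set ZFSet → (Fin (n+2) → ZFSet) → Prop} (hP : UD P)
    {p : Fin n → ZFSet} (hp : ∀ i, p i ∈ S) {a : ZFSet} (ha : a ∈ S)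
    (hfun : ∀ x ∈ a, ∀ y ∈ S, ∀ y' ∈ S, P S (Fin.snoc (Fin.snoc p x : Fin (n+1) → ZFSet) y) →
      P S (Fin.snoc (Fin.snoc p x : Fin (n+1) → ZFSet) y') → y = y') :
    ∃ b ∈ S, ∀ y, y ∈ b ↔ ∃ x ∈ a, y ∈ S ∧
      P S (Fin.snoc (Fin.snoc p x : Fin (n+1) → ZFSet) y) := by
  have hP' : UD (fun S (w : Fin (n+1) → ZFSet) => ∃ y ∈ S, P S (Fin.snoc w y)) :=
    UD.ex (P := fun S w y => P S (Fin.snoc w y)) (by simpa using hP)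
  obtain ⟨a', ha', h'⟩ := hS.sepn hP' hp ha
  obtain ⟨φ, e⟩ := hP
  have e' : ∀ x ∈ a', ∀ y ∈ S, ZSat S φ (Fin.snoc (Fin.snoc p x : Fin (n+1) → ZFSet) y) ↔
      P S (Fin.snoc (Fin.snoc p x : Fin (n+1) → ZFSet) y) := fun x hx y hy =>
    e S hS _ (snoc_mem (snoc_mem hp (hS.tr _ ha' _ hx)) hy)
  obtain ⟨b, hb, h⟩ := hS.1.1.2.2.2.2.2.2.1 n φ p hp a' ha' (by
    intro x hx
    obtain ⟨hxa, y, hy, hPy⟩ := (h' x).1 hx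
    refine ⟨y, ⟨hy, (e' x hx y hy).2 hPy⟩, ?_⟩
    rintro y' ⟨hy', hP'⟩
    exact hfun x hxa y' hy' y hy ((e' x hx y' hy').1 hP') hPy)
  refine ⟨b, hb, fun y => ?_⟩
  rw [h]
  constructor
  · rintro ⟨x, hx, hy, hh⟩
    exact ⟨x, ((h' x).1 hx).1, hy, (e' x hx y hy).1 hh⟩
  · rintro ⟨x, hx, hy, hh⟩
    have hx' : x ∈ a' := (h' x).2 ⟨hx, y, hy, hh⟩
    exact ⟨x, hx', hy, (e' x hx' y hy).2 hh⟩

theorem IsInnerModel.sep0 {R : Set ZFSet → ZFSet → Prop}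
    (hR : UD (fun S (v : Fin 1 → ZFSet) => R S (v 0))) {a : ZFSet} (ha : a ∈ S) :
    ∃ b ∈ S, ∀ y, y ∈ b ↔ (y ∈ a ∧ R S y) :=
  hS.sepn hR (p := ![]) (by simp) ha
theorem IsInnerModel.sep1 {R : Set ZFSet → ZFSet → ZFSet → Prop}
    (hR : UD (fun S (v : Fin 2 → ZFSet) => R S (v 0) (v 1))) {p a : ZFSet} (hp : p ∈ S)
    (ha : a ∈ S) :
    ∃ b ∈ S, ∀ y, y ∈ b ↔ (y ∈ a ∧ R S p y) :=
  hS.sepn hR (p := ![p]) (by simpa using hp) ha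
theorem IsInnerModel.sep2 {R : Set ZFSet → ZFSet → ZFSet → ZFSet → Prop}
    (hR : UD (fun S (v : Fin 3 → ZFSet) => R S (v 0) (v 1) (v 2))) {p q a : ZFSet} (hp : p ∈ S)
    (hq : q ∈ S) (ha : a ∈ S) :
    ∃ b ∈ S, ∀ y, y ∈ b ↔ (y ∈ a ∧ R S p q y) :=
  hS.sepn hR (p := ![p, q]) (by simp [Fin.forall_fin_two, hp, hq]) ha
theorem IsInnerModel.sep3 {R : Set ZFSet → ZFSet → ZFSet → ZFSet → ZFSet → Prop}
    (hR : UD (fun S (v : Fin 4 → ZFSet) => R S (v 0) (v 1) (v 2) (v 3))) {p q r a : ZFSet}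
    (hp : p ∈ S) (hq : q ∈ S) (hr : r ∈ S) (ha : a ∈ S) :
    ∃ b ∈ S, ∀ y, y ∈ b ↔ (y ∈ a ∧ R S p q r y) :=
  hS.sepn hR (p := ![p, q, r]) (by simp [Fin.forall_fin_succ, hp, hq, hr]) ha
theorem IsInnerModel.rep0 {R : Set ZFSet → ZFSet → ZFSet → Prop}
    (hR : UD (fun S (v : Fin 2 → ZFSet) => R S (v 0) (v 1))) {a : ZFSet} (ha : a ∈ S)
    (hfun : ∀ x ∈ a, ∀ y ∈ S, ∀ y' ∈ S, R S x y → R S x y' → y = y') :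
    ∃ b ∈ S, ∀ y, y ∈ b ↔ ∃ x ∈ a, y ∈ S ∧ R S x y :=
  hS.repn hR (p := ![]) (by simp) ha hfun
theorem IsInnerModel.rep1 {R : Set ZFSet → ZFSet → ZFSet → ZFSet → Prop}
    (hR : UD (fun S (v : Fin 3 → ZFSet) => R S (v 0) (v 1) (v 2))) {p a : ZFSet} (hp : p ∈ S)
    (ha : a ∈ S)
    (hfun : ∀ x ∈ a, ∀ y ∈ S, ∀ y' ∈ S, R S p x y → R S p x y' → y = y') :
    ∃ b ∈ S, ∀ y, y ∈ b ↔ ∃ x ∈ a, y ∈ S ∧ R S p x y :=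
  hS.repn hR (p := ![p]) (by simpa using hp) ha hfun

theorem IsInnerModel.prod {a b : ZFSet} (ha : a ∈ S) (hb : b ∈ S) : ZFSet.prod a b ∈ S := by
  have h1 : ∀ x ∈ S, ∃ c ∈ S, ∀ z, z ∈ c ↔ ∃ y ∈ b, z = ZFSet.pair x y := by
    intro x hx
    obtain ⟨c, hc, h⟩ := hS.rep1 (R := fun S p x y => y = ZFSet.pair p x)
      (D0.isOPair (.idx 2) (.idx 0) (.idx 1)).ud hx hb (by rintro x hx y hy y' hy' rfl rfl; rfl)
    refine ⟨c, hc, fun z => (h z).trans ⟨?_, ?_⟩⟩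
    · rintro ⟨y, hy, hz, rfl⟩; exact ⟨y, hy, rfl⟩
    · rintro ⟨y, hy, rfl⟩; exact ⟨y, hy, hS.pair hx (hS.tr _ hb _ hy), rfl⟩
  obtain ⟨c, hc, h⟩ := hS.rep1 (R := fun S b x c => (∀ z ∈ c, ∃ y ∈ b, z = ZFSet.pair x y) ∧
      (∀ y ∈ b, ZFSet.pair x y ∈ c))
    (((D0.ball (.idx 2) (P := fun v z => ∃ y ∈ v 0, z = ZFSet.pair (v 1) y)
      (D0.bex (P := fun v y => v (Fin.last 3) = ZFSet.pair (Fin.init v 1) y) (Var.idx 0).ini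
        (D0.isOPair Var.last.ini (Var.idx 1).ini.ini Var.last))).and
      (D0.ball (.idx 0) (P := fun v y => ZFSet.pair (v 1) y ∈ v 2)
        (D0.pairMem (Var.idx 2).ini (Var.idx 1).ini Var.last))).ud) hb ha (by
      rintro x hx c hc c' hc' ⟨h1, h2⟩ ⟨h3, h4⟩
      ext z
      constructor
      · intro hz; obtain ⟨y, hy, rfl⟩ := h1 z hz; exact h4 y hy
      · intro hz; obtain ⟨y, hy, rfl⟩ := h3 z hz; exact h2 y hy)
  have : ZFSet.prod a b = ZFSet.sUnion c := by
    ext z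
    simp only [ZFSet.mem_prod, ZFSet.mem_sUnion]
    constructor
    · rintro ⟨x, hx, y, hy, rfl⟩
      obtain ⟨d, hd, hd'⟩ := h1 x (hS.tr _ ha _ hx)
      refine ⟨d, (h d).2 ⟨x, hx, hd, ?_, ?_⟩, ?_⟩
      · intro z hz; exact (hd' z).1 hz
      · intro y hy; exact (hd' _).2 ⟨y, hy, rfl⟩
      · exact (hd' _).2 ⟨y, hy, rfl⟩
    · rintro ⟨d, hd, hz⟩
      obtain ⟨x, hx, hd, h3, h4⟩ := (h d).1 hd
      obtain ⟨y, hy, rfl⟩ := h3 z hz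
      exact ⟨x, hx, y, hy, rfl⟩
  rw [this]; exact hS.sU hc

end

theorem D0.transit {n : ℕ} {f : (Fin n → ZFSet) → ZFSet} (hf : Var f) :
    D0 (fun v => (f v).IsTransitive) :=
  (D0.ball hf (P := fun v x => x ⊆ f v) (D0.sub Var.last hf.ini)).congr fun v => Iff.rfl

theorem D0.ord {n : ℕ} {f : (Fin n → ZFSet) → ZFSet} (hf : Var f) :
    D0 (fun v => (f v).IsOrdinal) :=
  ((D0.transit hf).and (D0.ball hf (P := fun v x => x.IsTransitive) (D0.transit Var.last))).congr
    fun v => by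
    constructor
    · rintro ⟨h1, h2⟩
      exact ⟨h1, fun {x y z} hxy hyz hz => h2 z hz y hyz hxy⟩
    · intro h
      exact ⟨h.isTransitive, fun x hx => (h.mem hx).isTransitive⟩

/-- transitive closures exist -/
theorem IsInnerModel.trcl {S : Set ZFSet} (hS : IsInnerModel S) (x : ZFSet) : x ∈ S →
    ∃ t ∈ S, IsTransClosureOf t x := by
  induction x using ZFSet.inductionOn with
  | h x ih => 
  intro hx
  have hR : UD (fun S (v : Fin 2 → ZFSet) => (v 0 ⊆ v 1 ∧ (v 1).IsTransitive ∧
    ∀ u ∈ S, v 0 ⊆ u → u.IsTransitive → v 1 ⊆ u)) :=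
    (D0.sub (.idx 0) (.idx 1)).ud.and ((D0.transit (.idx 1)).ud.and (UD.all
      (P := fun S v u => v 0 ⊆ u → u.IsTransitive → v 1 ⊆ u)
      ((D0.sub (Var.idx 0).ini Var.last).ud.imp ((D0.transit Var.last).ud.imp
        (D0.sub (Var.idx 1).ini Var.last).ud))))
  obtain ⟨b, hb, h⟩ := hS.rep0 (R := fun S x t => x ⊆ t ∧ t.IsTransitive ∧
    ∀ u ∈ S, x ⊆ u → u.IsTransitive → t ⊆ u) hR hx (by
      rintro x hx t ht t' ht' ⟨h1, h2, h3⟩ ⟨h4, h5, h6⟩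
      exact ZFSet.ext fun z => ⟨fun hz => h3 t' ht' h4 h5 hz, fun hz => h6 t ht h1 h2 hz⟩)
  refine ⟨x ∪ ZFSet.sUnion b, hS.union hx (hS.sU hb), ?_, ?_, ?_⟩
  · intro z hz; exact ZFSet.mem_union.2 (.inl hz)
  · intro y hy z hz
    rw [ZFSet.mem_union] at hy ⊢
    right
    rcases hy with hy | hy
    · obtain ⟨t, ht, h1, h2, h3⟩ := ih y hy (hS.tr _ hx _ hy)
      exact ZFSet.mem_sUnion.2 ⟨t, (h t).2 ⟨y, hy, ht, h1, h2, fun u _ => h3 u⟩, h1 hz⟩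
    · obtain ⟨t, ht, hyt⟩ := ZFSet.mem_sUnion.1 hy
      obtain ⟨_, _, _, _, h2, _⟩ := (h t).1 ht
      exact ZFSet.mem_sUnion.2 ⟨t, ht, h2 _ hyt hz⟩
  · intro u hxu hu z hz
    rcases ZFSet.mem_union.1 hz with hz | hz
    · exact hxu hz
    · obtain ⟨t, ht, hyt⟩ := ZFSet.mem_sUnion.1 hz
      obtain ⟨y, hy, htS, h1, h2, h3⟩ := (h t).1 ht
      obtain ⟨t', ht', h1', h2', h3'⟩ := ih y hy (hS.tr _ hx _ hy)
      have : z ∈ t' := h3 t' ht' h1' h2' hyt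
      exact h3' u (hu _ (hxu hy)) hu this

open FirstOrder FirstOrder.Language
set_option linter.unusedVariables false

/-! ### Elementary embeddings -/
theorem IsElem.comp {A B C : Set ZFSet.{u}} {f g : ZFSet.{u} → ZFSet.{u}} (hf : IsElem A B f)
    (hg : IsElem B C g) : IsElem A C (fun x => g (f x)) :=
  ⟨fun x hx => hg.1 _ (hf.1 x hx), fun n φ v hv =>
    (hf.2 n φ v hv).trans (hg.2 n φ _ fun i => hf.1 _ (hv i))⟩

theorem IsElem.mem {A B : Set ZFSet.{u}} {f : ZFSet.{u} → ZFSet.{u}} (hf : IsElem A B f) {x y : ZFSet}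
    (hx : x ∈ A) (hy : y ∈ A) : x ∈ y ↔ f x ∈ f y :=
  hf.2 2 (memF 0 1) ![x, y] (by simp [Fin.forall_fin_two, hx, hy])
theorem IsElem.inj {A B : Set ZFSet.{u}} {f : ZFSet.{u} → ZFSet.{u}} (hf : IsElem A B f) {x y : ZFSet}
    (hx : x ∈ A) (hy : y ∈ A) : x = y ↔ f x = f y :=
  hf.2 2 (eqF 0 1) ![x, y] (by simp [Fin.forall_fin_two, hx, hy])
theorem IsElem.ord {A B : Set ZFSet.{u}} {f : ZFSet.{u} → ZFSet.{u}} (hf : IsElem A B f)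
    (hA : IsInnerModel A) (hB : IsInnerModel B) {x : ZFSet}
    (hx : x ∈ A) : x.IsOrdinal ↔ (f x).IsOrdinal :=
  (D0.ord (.idx 0)).ud.trans1 (R := fun _ x => x.IsOrdinal) hA hB hf hx

theorem UD.subsnoc {m k : ℕ} {P : Set ZFSet → (Fin (m+1) → ZFSet) → Prop} (hP : UD P)
    (ρ : Fin m → Fin k) {a : (Fin k → ZFSet) → ZFSet} (ha : Var a) :
    UD (fun S v => P S (Fin.snoc (fun i => v (ρ i)) (a v))) :=
  hP.sub (f := fun v => Fin.snoc (fun i => v (ρ i)) (a v)) fun i => by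
    refine Fin.lastCases ?_ (fun i => ?_) i
    · simpa using ha
    · simpa using Var.idx (ρ i)

section
variable {A B : Set ZFSet.{u}} (hA : IsInnerModel A) (hB : IsInnerModel B) {f g : ZFSet.{u} → ZFSet.{u}}
  (hf : IsElem A B f) (hg : IsElem A B g)
include hA hB hf hg

theorem agree_of_def {n : ℕ} {P : Set ZFSet → (Fin (n+1) → ZFSet) → Prop} (hP : UD P)
    {p : Fin n → ZFSet} (hp : ∀ i, p i ∈ A) (hfg : ∀ i, f (p i) = g (p i)) {x : ZFSet}
    (hx : x ∈ A) (h : ∀ y ∈ A, P A (Fin.snoc p y) ↔ y = x) : f x = g x := by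
  have hU : UD (fun S (w : Fin n → ZFSet) => ∀ x ∈ S, P S (Fin.snoc w x) →
      ∀ y ∈ S, P S (Fin.snoc w y) → x = y) :=
    UD.all (P := fun S w x => P S (Fin.snoc w x) → ∀ y ∈ S, P S (Fin.snoc w y) → x = y)
      (UD.imp (hP.subsnoc (fun i => i.castSucc) Var.last)
        (UD.all (P := fun S w y => P S (Fin.snoc (Fin.init w) y) → w (Fin.last n) = y)
          (UD.imp (hP.subsnoc (fun i => i.castSucc.castSucc) Var.last)
            (D0.eq Var.last.ini Var.last).ud)))
  have h1 := (hU.trans hA hB hf (v := p) hp).1 (by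
    intro x' hx' h1 y' hy' h2
    rw [(h x' hx').1 h1, (h y' hy').1 h2])
  have key : ∀ f : ZFSet.{u} → ZFSet.{u}, IsElem A B f → P B (Fin.snoc (fun i => f (p i)) (f x)) := by
    intro f hf
    have := (hP.trans hA hB hf (v := Fin.snoc p x) (snoc_mem hp hx)).1 ((h x hx).2 rfl)
    convert this using 1
    funext i
    refine Fin.lastCases ?_ (fun i => ?_) i <;> simp
  have h2 := key f hf
  have h3 := key g hg
  simp only [← hfg] at h3
  exact h1 _ (hf.1 x hx) h2 _ (hg.1 x hx) h3

theorem agree_least {n : ℕ} {P : Set ZFSet → (Fin (n+1) → ZFSet) → Prop} (hP : UD P)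
    {p : Fin n → ZFSet} (hp : ∀ i, p i ∈ A) (hfg : ∀ i, f (p i) = g (p i)) {x : ZFSet}
    (hx : x ∈ A) (hxo : x.IsOrdinal) (h : P A (Fin.snoc p x)) :
    ∃ y ∈ A, y.IsOrdinal ∧ P A (Fin.snoc p y) ∧ f y = g y := by
  obtain ⟨y, ⟨hy, hyo, hPy⟩, hmin⟩ := ZFSet.mem_wf.has_min
    {y | y ∈ A ∧ y.IsOrdinal ∧ P A (Fin.snoc p y)} ⟨x, hx, hxo, h⟩
  refine ⟨y, hy, hyo, hPy, ?_⟩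
  refine agree_of_def hA hB hf hg (n := n) (P := fun S w => (w (Fin.last n)).IsOrdinal ∧ P S w ∧
    ∀ z ∈ w (Fin.last n), ¬ P S (Fin.snoc (fun i => w i.castSucc) z))
    ((D0.ord Var.last).ud.and (hP.and (UD.ball Var.last
      (P := fun S w z => ¬ P S (Fin.snoc (fun i => w i.castSucc) z))
      (hP.subsnoc (fun i => i.castSucc.castSucc) Var.last).not))) hp hfg hy ?_
  intro z hz
  simp only [Fin.snoc_last, Fin.snoc_castSucc]
  constructor
  · rintro ⟨hzo, hPz, hzm⟩
    rcases hzo.mem_trichotomous hyo with h | h | h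
    · exact absurd h (hmin z ⟨hz, hzo, hPz⟩)
    · exact h
    · exact absurd hPy (hzm y h)
  · rintro rfl
    refine ⟨hyo, hPy, fun w hw hPw => ?_⟩
    exact hmin w ⟨hA.tr _ hz _ hw, hyo.mem hw, hPw⟩ hw

/-- Woodin's uniqueness argument -/
theorem woodin (hH : ModelsVeqHOD A) {R : Set ZFSet → ZFSet → Prop}
    (hR : UD (fun S (v : Fin 1 → ZFSet) => R S (v 0))) (h : ∀ x ∈ A, R A x ↔ f x ≠ g x) :
    ∀ x ∈ A, f x = g x := by
  have h1 : ∀ x ∈ A, x.IsOrdinal → f x = g x := by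
    intro x hx hxo
    by_contra hne
    obtain ⟨y, hy, hyo, hRy, hfy⟩ := agree_least hA hB hf hg (n := 0) hR (p := ![]) (by simp)
      (by simp) hx hxo ((h x hx).2 hne)
    exact (h y hy).1 hRy hfy
  intro x hx
  obtain ⟨n, φ, p, hp, hh⟩ := hH x hx
  exact agree_of_def hA hB hf hg (UD.raw φ) (fun i => (hp i).1) (fun i => h1 _ (hp i).1 (hp i).2)
    hx hh

theorem agree_many {k : ℕ} (s : Finset (Fin k)) :
    ∀ {P : Set ZFSet → (Fin k → ZFSet) → Prop} (hP : UD P)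
    (w : Fin k → ZFSet) (hw : ∀ i, w i ∈ A) (hs : ∀ i ∈ s, (w i).IsOrdinal)
    (hs' : ∀ i ∉ s, f (w i) = g (w i)) (h : P A w),
    ∃ w' : Fin k → ZFSet, (∀ i, w' i ∈ A) ∧ (∀ i, f (w' i) = g (w' i)) ∧
      (∀ i ∉ s, w' i = w i) ∧ P A w' := by
  classical
  have hemp : f ∅ = g ∅ := by
    refine agree_of_def hA hB hf hg (n := 0) (P := fun S w => ∀ z ∈ w 0, False)
      (UD.ball (.idx 0) (P := fun _ _ _ => False) D0.fls.ud) (p := ![]) (by simp) (by simp) hA.emp ?_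
    intro y hy
    constructor
    · intro h; exact (ZFSet.eq_empty _).2 fun z hz => h z hz
    · rintro rfl z hz; exact ZFSet.notMem_empty _ hz
  induction s using Finset.induction_on with
  | empty => 
    intro P hP w hw hs hs' h
    exact ⟨w, hw, fun i => hs' i (by simp), fun _ _ => rfl, h⟩
  | insert a s ha ih => 
    intro P hP w hw hs hs' h
    have hP1 : UD (fun S (w : Fin (k+1) → ZFSet) =>
        P S (Function.update (Fin.init w) a (w (Fin.last k)))) :=
      hP.sub (f := fun w => Function.update (Fin.init w) a (w (Fin.last k))) fun i => by
        by_cases hi : i = a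
        · subst hi; simpa using Var.last
        · simp only [Function.update_of_ne hi]; exact Var.idx i.castSucc
    have hP2 : UD (fun S (w : Fin k → ZFSet) => ∃ x ∈ S, x.IsOrdinal ∧
        P S (Function.update w a x)) :=
      UD.ex (P := fun S w x => x.IsOrdinal ∧ P S (Function.update w a x))
        ((D0.ord Var.last).ud.and hP1)
    obtain ⟨w1, hw1, hfg1, he1, x, hx, hxo, hPx⟩ := ih hP2 (Function.update w a ∅) (by
        intro i
        by_cases hi : i = a
        · subst hi; simpa using hA.emp
        · simpa [hi] using hw i) (by
        intro i hi
        have : i ≠ a := fun h => ha (h ▸ hi)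
        simpa [this] using hs i (by simp [hi])) (by
        intro i hi
        by_cases h : i = a
        · subst h; simpa using hemp
        · simpa [h] using hs' i (by simp [h, hi])) ⟨w a, hw a, hs a (by simp), by simpa using h⟩
    obtain ⟨y, hy, hyo, hPy, hfy⟩ := agree_least hA hB hf hg hP1 hw1 hfg1 hx hxo (by simpa using hPx)
    refine ⟨Function.update w1 a y, ?_, ?_, ?_, by simpa using hPy⟩
    · intro i
      by_cases hi : i = a
      · subst hi; simpa using hy
      · simpa [hi] using hw1 i
    · intro i
      by_cases hi : i = a
      · subst hi; simpa using hfy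
      · simpa [hi] using hfg1 i
    · intro i hi
      simp only [Finset.mem_insert, not_or] at hi
      simp [hi.1, he1 i hi.2]

theorem agree_tv (hH : ModelsVeqHOD A) {n : ℕ} {P : Set ZFSet → (Fin (n+1) → ZFSet) → Prop}
    (hP : UD P) {e : Fin n → ZFSet} (he : ∀ i, e i ∈ A) (hfg : ∀ i, f (e i) = g (e i)) {x : ZFSet}
    (hx : x ∈ A) (h : P A (Fin.snoc e x)) :
    ∃ y ∈ A, P A (Fin.snoc e y) ∧ f y = g y := by
  obtain ⟨m, φ, p, hp, hh⟩ := hH x hx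
  have hQ : UD (fun S (w : Fin (n+m) → ZFSet) => ∃ x ∈ S,
      P S (Fin.snoc (fun i => w (Fin.castAdd m i)) x) ∧
      ∀ y ∈ S, ZSat S φ (Fin.snoc (fun i => w (Fin.natAdd n i)) y) ↔ y = x) :=
    UD.ex (P := fun S w x => P S (Fin.snoc (fun i => w (Fin.castAdd m i)) x) ∧
      ∀ y ∈ S, ZSat S φ (Fin.snoc (fun i => w (Fin.natAdd n i)) y) ↔ y = x)
      ((hP.subsnoc (fun i => (Fin.castAdd m i).castSucc) Var.last).and
       (UD.all (P := fun S w y => ZSat S φ (Fin.snoc (fun i => Fin.init w (Fin.natAdd n i)) y) ↔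
          y = w (Fin.last (n+m)))
        (((UD.raw φ).subsnoc (fun i => (Fin.natAdd n i).castSucc.castSucc) Var.last).iff
          (D0.eq Var.last Var.last.ini).ud)))
  obtain ⟨w, hw, hfgw, hew, y, hy, hPy, hdef⟩ := agree_many hA hB hf hg
    (Finset.univ.image (Fin.natAdd n)) hQ (Fin.append e p)
    (by intro i; refine Fin.addCases (fun i => ?_) (fun i => ?_) i
        · simpa using he i
        · simpa using (hp i).1)
    (by intro i hi
        obtain ⟨i, _, rfl⟩ := Finset.mem_image.1 hi
        simpa using (hp i).2)
    (by intro i; refine Fin.addCases (fun i => ?_) (fun i => ?_) i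
        · intro _; simpa using hfg i
        · intro h; exact absurd (Finset.mem_image_of_mem _ (Finset.mem_univ i)) h)
    ⟨x, hx, by simpa using h, by simpa using hh⟩
  have hwe : ∀ i, w (Fin.castAdd m i) = e i := by
    intro i
    rw [hew, Fin.append_left]
    intro h
    obtain ⟨i', _, h⟩ := Finset.mem_image.1 h
    have := congrArg Fin.val h
    have := i.2
    simp at *
    omega
  refine ⟨y, hy, by simpa [hwe] using hPy, ?_⟩
  exact agree_of_def hA hB hf hg (UD.raw φ) (fun i => hw _) (fun i => hfgw _) hy hdef

theorem agree_elem (hH : ModelsVeqHOD A) {n : ℕ} (φ : BF n) : ∀ (v : Fin n → ZFSet)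
    (hv : ∀ i, v i ∈ {x | x ∈ A ∧ f x = g x}),
    ZSat {x | x ∈ A ∧ f x = g x} φ v ↔ ZSat A φ v := by
  induction φ with
  | falsum => intros; rfl
  | equal t u => intros; rfl
  | rel R ts => intros; cases R; rfl
  | imp φ ψ h1 h2 => intro v hv; simp only [ZSat, h1 v hv, h2 v hv]
  | all φ ih => 
    intro v hv
    simp only [ZSat_all]
    constructor
    · intro H
      by_contra hc
      push Not at hc
      obtain ⟨x, hx, hn⟩ := hc
      obtain ⟨y, hy, hP, hfy⟩ := agree_tv hA hB hf hg hH (UD.raw φ).not (fun i => (hv i).1)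
        (fun i => (hv i).2) hx hn
      exact hP ((ih _ (snoc_mem hv (by exact ⟨hy, hfy⟩))).1 (H y ⟨hy, hfy⟩))
    · intro H x hx
      exact (ih _ (snoc_mem hv hx)).2 (H x hx.1)

end

open FirstOrder FirstOrder.Language
set_option linter.unusedVariables false

/-! ### Mostowski collapse -/
noncomputable def col (X : Set ZFSet.{u}) : ZFSet.{u} → ZFSet.{u} :=
  ZFSet.mem_wf.fix fun w rec =>
    ZFSet.range (fun v : ↥(ZFSet.sep (fun v => v ∈ X) w) =>
      rec v.1 (ZFSet.mem_sep.1 v.2).1)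

theorem mem_col {X : Set ZFSet.{u}} {w z : ZFSet.{u}} :
    z ∈ col X w ↔ ∃ v ∈ w, v ∈ X ∧ z = col X v := by
  rw [col, ZFSet.mem_wf.fix_eq]
  simp only [ZFSet.mem_range, Set.mem_range, Subtype.exists]
  constructor
  · rintro ⟨v, hv, rfl⟩; exact ⟨v, (ZFSet.mem_sep.1 hv).1, (ZFSet.mem_sep.1 hv).2, rfl⟩
  · rintro ⟨v, hv, hX, rfl⟩; exact ⟨v, ZFSet.mem_sep.2 ⟨hv, hX⟩, rfl⟩

def goodC (S X : Set ZFSet.{u}) (f : ZFSet.{u}) : Prop :=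
  ∀ u ∈ S, ∀ z ∈ S, ZFSet.pair u z ∈ f →
    (∀ v ∈ u, ∃ z' ∈ S, ZFSet.pair v z' ∈ f) ∧
    (∀ z' ∈ z, ∃ v ∈ u, v ∈ X ∧ ZFSet.pair v z' ∈ f) ∧
    (∀ v ∈ u, v ∈ X → ∃ z' ∈ z, ZFSet.pair v z' ∈ f)

theorem goodC.eq {S X : Set ZFSet.{u}} (hS : IsInnerModel S) {f : ZFSet.{u}} (hf : f ∈ S)
    (h : goodC S X f) (u : ZFSet) : ∀ z, ZFSet.pair u z ∈ f → z = col X u := by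
  induction u using ZFSet.inductionOn with
  | h u ih => 
  intro z hz
  obtain ⟨hu, hzS⟩ := hS.memPair hf hz
  obtain ⟨_, h2, h3⟩ := h u hu z hzS hz
  ext y
  rw [mem_col]
  constructor
  · intro hy
    obtain ⟨v, hv, hX, hp⟩ := h2 y hy
    exact ⟨v, hv, hX, ih v hv _ hp⟩
  · rintro ⟨v, hv, hX, rfl⟩
    obtain ⟨z', hz', hp⟩ := h3 v hv hX
    rwa [← ih v hv _ hp]

section
variable {E : Set ZFSet.{u} → Set ZFSet.{u}} (hE : UD (fun S (v : Fin 1 → ZFSet) => v 0 ∈ E S))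
include hE

theorem UD.goodC : UD (fun S (v : Fin 1 → ZFSet) => goodC S (E S) (v 0)) :=
  UD.all (P := fun S v u => ∀ z ∈ S, ZFSet.pair u z ∈ v 0 →
    (∀ v' ∈ u, ∃ z' ∈ S, ZFSet.pair v' z' ∈ v 0) ∧
    (∀ z' ∈ z, ∃ v' ∈ u, v' ∈ E S ∧ ZFSet.pair v' z' ∈ v 0) ∧
    (∀ v' ∈ u, v' ∈ E S → ∃ z' ∈ z, ZFSet.pair v' z' ∈ v 0))
  (UD.all (P := fun S v z => ZFSet.pair (v 1) z ∈ v 0 →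
    (∀ v' ∈ v 1, ∃ z' ∈ S, ZFSet.pair v' z' ∈ v 0) ∧
    (∀ z' ∈ z, ∃ v' ∈ v 1, v' ∈ E S ∧ ZFSet.pair v' z' ∈ v 0) ∧
    (∀ v' ∈ v 1, v' ∈ E S → ∃ z' ∈ z, ZFSet.pair v' z' ∈ v 0))
   (UD.imp (D0.pairMem (.idx 0) (.idx 1) (.idx 2)).ud
    (UD.and
     (UD.ball (.idx 1) (P := fun S v v' => ∃ z' ∈ S, ZFSet.pair v' z' ∈ v 0)
       (UD.ex (P := fun S v z' => ZFSet.pair (v 3) z' ∈ v 0)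
         (D0.pairMem (.idx 0) (.idx 3) (.idx 4)).ud))
     (UD.and
      (UD.ball (.idx 2) (P := fun S v z' => ∃ v' ∈ v 1, v' ∈ E S ∧ ZFSet.pair v' z' ∈ v 0)
        (UD.bex (.idx 1) (P := fun S v v' => v' ∈ E S ∧ ZFSet.pair v' (v 3) ∈ v 0)
          (UD.and (hE.sub1 (R := fun S x => x ∈ E S) (.idx 4))
            (D0.pairMem (.idx 0) (.idx 4) (.idx 3)).ud)))
      (UD.ball (.idx 1) (P := fun S v v' => v' ∈ E S → ∃ z' ∈ v 2, ZFSet.pair v' z' ∈ v 0)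
        (UD.imp (hE.sub1 (R := fun S x => x ∈ E S) (.idx 3))
          (UD.bex (.idx 2) (P := fun S v z' => ZFSet.pair (v 3) z' ∈ v 0)
            (D0.pairMem (.idx 0) (.idx 3) (.idx 4)).ud)))))))

theorem UD.preCol : UD (fun S (v : Fin 2 → ZFSet) =>
    ∃ f ∈ S, _root_.goodC S (E S) f ∧ ZFSet.pair (v 0) (v 1) ∈ f) :=
  UD.ex (P := fun S v f => _root_.goodC S (E S) f ∧ ZFSet.pair (v 0) (v 1) ∈ f)
    (UD.and ((UD.goodC hE).sub1 (R := fun S f => _root_.goodC S (E S) f) (.idx 2))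
      (D0.pairMem (.idx 2) (.idx 0) (.idx 1)).ud)

theorem col_exists {S : Set ZFSet.{u}} (hS : IsInnerModel S) (w : ZFSet) : w ∈ S →
    ∃ f ∈ S, goodC S (E S) f ∧ ∃ z ∈ S, ZFSet.pair w z ∈ f := by
  induction w using ZFSet.inductionOn with
  | h w ih => 
  intro hw
  obtain ⟨t, ht, h1, h2, h3⟩ := hS.trcl w hw
  have hD : t ⊆ ZFSet.sep (fun u => ∃ f ∈ S, goodC S (E S) f ∧ ∃ z ∈ S, ZFSet.pair u z ∈ f) t := by
    apply h3
    · intro v hv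
      rw [ZFSet.mem_sep]
      exact ⟨h1 hv, ih v hv (hS.tr _ hw _ hv)⟩
    · intro y hy z hz
      rw [ZFSet.mem_sep] at hy ⊢
      obtain ⟨hyt, f, hf, hg, z', hz', hp⟩ := hy
      refine ⟨h2 _ hyt hz, f, hf, hg, ?_⟩
      exact (hg y (hS.tr _ ht _ hyt) z' hz' hp).1 z hz
  have hfun : ∀ u z z', (∃ f ∈ S, goodC S (E S) f ∧ ZFSet.pair u z ∈ f) →
      (∃ f ∈ S, goodC S (E S) f ∧ ZFSet.pair u z' ∈ f) → z = z' := by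
    rintro u z z' ⟨f, hf, hg, hp⟩ ⟨f', hf', hg', hp'⟩
    rw [hg.eq hS hf _ _ hp, hg'.eq hS hf' _ _ hp']
  -- graph on t
  have hR : UD (fun S (v : Fin 2 → ZFSet) => ∃ z ∈ S, (∃ f ∈ S, goodC S (E S) f ∧
      ZFSet.pair (v 0) z ∈ f) ∧ v 1 = ZFSet.pair (v 0) z) :=
    UD.ex (P := fun S v z => (∃ f ∈ S, goodC S (E S) f ∧
      ZFSet.pair (v 0) z ∈ f) ∧ v 1 = ZFSet.pair (v 0) z)
      (UD.and ((UD.preCol hE).sub2 (R := fun S a b => ∃ f ∈ S, goodC S (E S) f ∧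
        ZFSet.pair a b ∈ f) (.idx 0) (.idx 2)) (D0.isOPair (.idx 1) (.idx 0) (.idx 2)).ud)
  obtain ⟨g, hg, hgm⟩ := hS.rep0 (R := fun S a b => ∃ z ∈ S, (∃ f ∈ S, goodC S (E S) f ∧
      ZFSet.pair a z ∈ f) ∧ b = ZFSet.pair a z) hR ht (by
    rintro x hx y hy y' hy' ⟨z, hz, hh, rfl⟩ ⟨z', hz', hh', rfl⟩
    rw [hfun x z z' hh hh'])
  have hgp : ∀ u z, ZFSet.pair u z ∈ g ↔ u ∈ t ∧ z ∈ S ∧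
      ∃ f ∈ S, goodC S (E S) f ∧ ZFSet.pair u z ∈ f := by
    intro u z
    rw [hgm]
    constructor
    · rintro ⟨x, hx, hy, z', hz', hh, he⟩
      obtain ⟨rfl, rfl⟩ := ZFSet.pair_injective he
      exact ⟨hx, hz', hh⟩
    · rintro ⟨hu, hz, hh⟩
      exact ⟨u, hu, hS.pair (hS.tr _ ht _ hu) hz, z, hz, hh, rfl⟩
  have hdef : ∀ u ∈ t, ZFSet.pair u (col (E S) u) ∈ g := by
    intro u hu
    obtain ⟨_, f, hf, hgf, z, hz, hp⟩ := ZFSet.mem_sep.1 (hD hu)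
    have := hgf.eq hS hf _ _ hp
    subst this
    exact (hgp _ _).2 ⟨hu, hz, f, hf, hgf, hp⟩
  have hval : ∀ u z, ZFSet.pair u z ∈ g → z = col (E S) u := by
    intro u z h
    obtain ⟨hu, hz, f, hf, hgf, hp⟩ := (hgp _ _).1 h
    exact hgf.eq hS hf _ _ hp
  have hsat : ∀ u, u ⊆ t → ∀ g', g ⊆ g' →
      (∀ v ∈ u, ∃ z' ∈ S, ZFSet.pair v z' ∈ g') ∧
      (∀ z' ∈ col (E S) u, ∃ v ∈ u, v ∈ E S ∧ ZFSet.pair v z' ∈ g') ∧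
      (∀ v ∈ u, v ∈ E S → ∃ z' ∈ col (E S) u, ZFSet.pair v z' ∈ g') := by
    intro u hu g' hg'
    refine ⟨?_, ?_, ?_⟩
    · intro v hv
      exact ⟨_, (hS.memPair hg (hdef v (hu hv))).2, hg' (hdef v (hu hv))⟩
    · intro z' hz'
      obtain ⟨v, hv, hX, rfl⟩ := mem_col.1 hz'
      exact ⟨v, hv, hX, hg' (hdef v (hu hv))⟩
    · intro v hv hX
      exact ⟨_, mem_col.2 ⟨v, hv, hX, rfl⟩, hg' (hdef v (hu hv))⟩
  -- the value at w
  have hcw : col (E S) w ∈ S := by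
    obtain ⟨c, hc, hcm⟩ := hS.rep1 (R := fun S g v z => v ∈ E S ∧ ZFSet.pair v z ∈ g)
      (UD.and (hE.sub1 (R := fun S x => x ∈ E S) (.idx 1))
        (D0.pairMem (.idx 0) (.idx 1) (.idx 2)).ud) hg hw (by
        rintro x hx y hy y' hy' ⟨_, h⟩ ⟨_, h'⟩
        rw [hval _ _ h, hval _ _ h'])
    have : col (E S) w = c := by
      ext z
      rw [mem_col, hcm]
      constructor
      · rintro ⟨v, hv, hX, rfl⟩
        have := hdef v (h1 hv)
        exact ⟨v, hv, (hS.memPair hg this).2, hX, this⟩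
      · rintro ⟨v, hv, hz, hX, hp⟩
        exact ⟨v, hv, hX, hval _ _ hp⟩
    rw [this]; exact hc
  refine ⟨g ∪ {ZFSet.pair w (col (E S) w)}, hS.union hg (hS.sing (hS.pair hw hcw)), ?_,
    col (E S) w, hcw, by simp⟩
  have hsub : g ⊆ g ∪ {ZFSet.pair w (col (E S) w)} := fun x hx => ZFSet.mem_union.2 (.inl hx)
  intro u hu z hz hp
  rw [ZFSet.mem_union, ZFSet.mem_singleton] at hp
  rcases hp with hp | hp
  · have := hval _ _ hp
    subst this
    exact hsat u (h2 _ ((hgp _ _).1 hp).1) _ hsub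
  · obtain ⟨rfl, rfl⟩ := ZFSet.pair_injective hp
    exact hsat u h1 _ hsub

theorem col_mem_S {S : Set ZFSet.{u}} (hS : IsInnerModel S) {w : ZFSet} (hw : w ∈ S) :
    col (E S) w ∈ S := by
  obtain ⟨f, hf, hg, z, hz, hp⟩ := col_exists hE hS w hw
  rwa [← hg.eq hS hf _ _ hp]

theorem UD.col : UD (fun S (v : Fin 2 → ZFSet) => _root_.col (E S) (v 0) = v 1) :=
  (UD.preCol hE).congr fun S hS v hv => by
    constructor
    · rintro ⟨f, hf, hg, hp⟩
      exact (hg.eq hS hf _ _ hp).symm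
    · intro h
      obtain ⟨f, hf, hg, z, hz, hp⟩ := col_exists hE hS (v 0) (hv 0)
      refine ⟨f, hf, hg, ?_⟩
      rw [← h, ← hg.eq hS hf _ _ hp]; exact hp
end

theorem col_inj {X : Set ZFSet.{u}} (hext : ∀ v ∈ X, ∀ w ∈ X, (∀ u ∈ X, u ∈ v ↔ u ∈ w) → v = w)
    (w : ZFSet) : w ∈ X → ∀ w' ∈ X, col X w = col X w' → w = w' := by
  induction w using ZFSet.inductionOn with
  | h w ih => 
  intro hw w' hw' he
  refine hext w hw w' hw' fun u hu => ⟨fun h => ?_, fun h => ?_⟩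
  · have : col X u ∈ col X w' := he ▸ mem_col.2 ⟨u, h, hu, rfl⟩
    obtain ⟨u', hu', hX, he'⟩ := mem_col.1 this
    rw [ih u h hu u' hX he']; exact hu'
  · have : col X u ∈ col X w := he ▸ mem_col.2 ⟨u, h, hu, rfl⟩
    obtain ⟨u', hu', hX, he'⟩ := mem_col.1 this
    rw [← ih u' hu' hX u hu he'.symm]; exact hu'

/-- isomorphism invariance -/
theorem ZSat_iso {X Y : Set ZFSet.{u}} {π : ZFSet.{u} → ZFSet.{u}} (hXY : ∀ x ∈ X, π x ∈ Y)
    (hsurj : ∀ y ∈ Y, ∃ x ∈ X, π x = y) (hinj : ∀ x ∈ X, ∀ x' ∈ X, π x = π x' → x = x')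
    (hmem : ∀ x ∈ X, ∀ x' ∈ X, x ∈ x' ↔ π x ∈ π x') {n : ℕ} (φ : BF n) :
    ∀ (v : Fin n → ZFSet) (hv : ∀ i, v i ∈ X), ZSat X φ v ↔ ZSat Y φ (fun i => π (v i)) := by
  induction φ with
  | falsum => intros; rfl
  | equal t u => 
    intro v hv; simp only [ZSat, tval_eq]
    exact ⟨fun h => by rw [h], fun h => hinj _ (hv _) _ (hv _) h⟩
  | rel R ts => 
    intro v hv; cases R; simp only [ZSat, tval_eq]
    exact hmem _ (hv _) _ (hv _)
  | imp φ ψ h1 h2 => intro v hv; simp only [ZSat, h1 v hv, h2 v hv]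
  | @all n φ ih => 
    intro v hv
    simp only [ZSat_all]
    have key : ∀ x, (fun i => π ((Fin.snoc v x : Fin (n+1) → ZFSet) i)) =
        (Fin.snoc (fun i => π (v i)) (π x) : Fin (n+1) → ZFSet) := by
      intro x; funext i
      refine Fin.lastCases ?_ (fun i => ?_) i <;> simp
    constructor
    · intro H y hy
      obtain ⟨x, hx, rfl⟩ := hsurj y hy
      rw [← key, ← ih _ (snoc_mem hv hx)]
      exact H x hx
    · intro H x hx
      rw [ih _ (snoc_mem hv hx), key]
      exact H _ (hXY x hx)

open FirstOrder FirstOrder.Language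
set_option linter.unusedVariables false

structure IsOp (F : Set ZFSet.{u} → Set ZFSet.{u}) : Prop where
  ud : UD (fun S (v : Fin 1 → ZFSet) => v 0 ∈ F S)
  sub : ∀ S, IsInnerModel S → F S ⊆ S
  inn : ∀ S, IsInnerModel S → IsInnerModel (F S)

theorem IsOp.rel1 {F : Set ZFSet.{u} → Set ZFSet.{u}} (hF : IsOp F)
    {R : Set ZFSet.{u} → ZFSet.{u} → Prop} (hR : UD (fun S (v : Fin 1 → ZFSet) => R S (v 0))) :
    UD (fun S (v : Fin 1 → ZFSet) => v 0 ∈ F S ∧ R (F S) (v 0)) :=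
  (UD.rel hF.ud hF.sub hF.inn hR).congr fun S hS v hv => by simp [Fin.forall_fin_one]
theorem IsOp.rel2 {F : Set ZFSet.{u} → Set ZFSet.{u}} (hF : IsOp F)
    {R : Set ZFSet.{u} → ZFSet.{u} → ZFSet.{u} → Prop}
    (hR : UD (fun S (v : Fin 2 → ZFSet) => R S (v 0) (v 1))) :
    UD (fun S (v : Fin 2 → ZFSet) => (v 0 ∈ F S ∧ v 1 ∈ F S) ∧ R (F S) (v 0) (v 1)) :=
  (UD.rel hF.ud hF.sub hF.inn hR).congr fun S hS v hv => by simp [Fin.forall_fin_two]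
theorem IsOp.comp {F G : Set ZFSet.{u} → Set ZFSet.{u}} (hF : IsOp F) (hG : IsOp G) :
    IsOp (fun S => G (F S)) where
  ud := (hF.rel1 (R := fun S x => x ∈ G S) hG.ud).congr fun S hS v hv =>
    ⟨fun h => h.2, fun h => ⟨hG.sub _ (hF.inn S hS) h, h⟩⟩
  sub S hS := (hG.sub _ (hF.inn S hS)).trans (hF.sub S hS)
  inn S hS := hG.inn _ (hF.inn S hS)
theorem IsOp.restr {F : Set ZFSet.{u} → Set ZFSet.{u}} (hF : IsOp F) {A B : Set ZFSet.{u}}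
    (hA : IsInnerModel A) (hB : IsInnerModel B) {f : ZFSet.{u} → ZFSet.{u}} (hf : IsElem A B f) :
    IsElem (F A) (F B) f := hf.restr hF.ud hF.sub hF.inn hA hB

structure CoreHyp (F G : Set ZFSet.{u} → Set ZFSet.{u})
    (j i : Set ZFSet.{u} → ZFSet.{u} → ZFSet.{u}) : Prop where
  hF : IsOp F
  hG : IsOp G
  FF : ∀ S, IsInnerModel S → F (F S) = F S
  GG : ∀ S, IsInnerModel S → G (G S) = G S
  FH : ∀ S, IsInnerModel S → ModelsVeqHOD (F S)
  GH : ∀ S, IsInnerModel S → ModelsVeqHOD (G S)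
  jE : ∀ S, IsInnerModel S → IsElem (F S) (F (G S)) (j S)
  iE : ∀ S, IsInnerModel S → IsElem (G S) (G (F S)) (i S)
  jU : UD (fun S (v : Fin 2 → ZFSet) => v 0 ∈ F S ∧ j S (v 0) = v 1)
  iU : UD (fun S (v : Fin 2 → ZFSet) => v 0 ∈ G S ∧ i S (v 0) = v 1)

def EE (F G : Set ZFSet.{u} → Set ZFSet.{u})
    (j i : Set ZFSet.{u} → ZFSet.{u} → ZFSet.{u}) (S : Set ZFSet.{u}) : Set ZFSet.{u} :=
  {x | x ∈ F S ∧ x ∈ G S ∧ i S x = j (F S) x}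

section
variable {F G : Set ZFSet.{u} → Set ZFSet.{u}} {j i : Set ZFSet.{u} → ZFSet.{u} → ZFSet.{u}}
  (H : CoreHyp F G j i)
include H

theorem CoreHyp.j_mem {S : Set ZFSet.{u}} (hS : IsInnerModel S) {x : ZFSet} (hx : x ∈ F S) :
    j S x ∈ F (G S) := (H.jE S hS).1 x hx
theorem CoreHyp.i_mem {S : Set ZFSet.{u}} (hS : IsInnerModel S) {x : ZFSet} (hx : x ∈ G S) :
    i S x ∈ G (F S) := (H.iE S hS).1 x hx

theorem CoreHyp.EU : UD (fun S (v : Fin 1 → ZFSet) => v 0 ∈ EE F G j i S) :=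
  (UD.and H.hF.ud (UD.ex (P := fun S v y => (v 0 ∈ G S ∧ i S (v 0) = y) ∧
      ((v 0 ∈ F S ∧ y ∈ F S) ∧ (v 0 ∈ F (F S) ∧ j (F S) (v 0) = y)))
    (UD.and (H.iU.sub2 (R := fun S a b => a ∈ G S ∧ i S a = b) (.idx 0) (.idx 1))
      ((H.hF.rel2 (R := fun S a b => a ∈ F S ∧ j S a = b) H.jU).sub2
        (R := fun S a b => (a ∈ F S ∧ b ∈ F S) ∧ (a ∈ F (F S) ∧ j (F S) a = b))
        (.idx 0) (.idx 1))))).congr fun S hS v hv => by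
    have hFS := H.hF.inn S hS
    constructor
    · rintro ⟨h1, y, hy, ⟨h2, rfl⟩, _, _, h3⟩
      exact ⟨h1, h2, h3.symm⟩
    · rintro ⟨h1, h2, h3⟩
      refine ⟨h1, i S (v 0), H.hF.sub _ hS (H.hG.sub _ hFS (H.i_mem hS h2)), ⟨h2, rfl⟩,
        ⟨h1, H.hG.sub _ hFS (H.i_mem hS h2)⟩, ?_, h3.symm⟩
      rwa [H.FF S hS]

/-- For `S` with `G S = S`, `EE S` is an elementary submodel of `F S`. -/
theorem CoreHyp.E_elem {S : Set ZFSet.{u}} (hS : IsInnerModel S) (hGS : G S = S) {n : ℕ}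
    (φ : BF n) (v : Fin n → ZFSet) (hv : ∀ k, v k ∈ EE F G j i S) :
    ZSat (EE F G j i S) φ v ↔ ZSat (F S) φ v := by
  have hFS := H.hF.inn S hS
  have hGFS := H.hG.inn _ hFS
  have e : EE F G j i S = {x | x ∈ F S ∧ i S x = j (F S) x} := by
    ext x
    exact ⟨fun h => ⟨h.1, h.2.2⟩, fun h => ⟨h.1, by rw [hGS]; exact H.hF.sub S hS h.1, h.2⟩⟩
  rw [e]
  rw [e] at hv
  have h1 : IsElem (F S) (F (G (F S))) (i S) := by
    have := H.iE S hS
    rw [hGS] at this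
    exact H.hF.restr hS hGFS this
  have h2 : IsElem (F S) (F (G (F S))) (j (F S)) := by
    have := H.jE _ hFS
    rwa [H.FF S hS] at this
  exact agree_elem hFS (H.hF.inn _ hGFS) h1 h2 (H.FH S hS) φ v hv

theorem CoreHyp.E_col_inj {S : Set ZFSet.{u}} (hS : IsInnerModel S) (hGS : G S = S) :
    ∀ w ∈ EE F G j i S, ∀ w' ∈ EE F G j i S,
      col (EE F G j i S) w = col (EE F G j i S) w' → w = w' := by
  intro w hw w' hw' he
  refine col_inj ?_ w hw w' hw' he
  intro v hv w hw h
  have := (H.E_elem hS hGS (((memF 2 0).imp (memF 2 1)).all.imp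
    (((memF 2 1).imp (memF 2 0)).all.imp (eqF 0 1)) : BF 2) ![v, w]
    (by simp [Fin.forall_fin_two, hv, hw])).2 (by
      intro h1 h2
      have htr := (H.hF.inn S hS).tr
      apply ZFSet.ext
      intro z
      exact ⟨fun hz => h1 z (htr _ hv.1 _ hz) hz, fun hz => h2 z (htr _ hw.1 _ hz) hz⟩)
  exact this (fun z hz => (h z hz).1) (fun z hz => (h z hz).2)

theorem CoreHyp.core {A : Set ZFSet.{u}} (hA : IsInnerModel A) (hFA : F A = A) : G A = A := by
  obtain ⟨N, hNdef⟩ : ∃ N, N = G A := ⟨_, rfl⟩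
  have hN : IsInnerModel N := hNdef ▸ H.hG.inn A hA
  obtain ⟨K, hKdef⟩ : ∃ K, K = F N := ⟨_, rfl⟩
  have hK : IsInnerModel K := hKdef ▸ H.hF.inn N hN
  obtain ⟨N2, hN2def⟩ : ∃ X, X = G K := ⟨_, rfl⟩
  have hN2 : IsInnerModel N2 := hN2def ▸ H.hG.inn _ hK
  obtain ⟨K2, hK2def⟩ : ∃ X, X = F N2 := ⟨_, rfl⟩
  have hK2 : IsInnerModel K2 := hK2def ▸ H.hF.inn _ hN2
  obtain ⟨N3, hN3def⟩ : ∃ X, X = G K2 := ⟨_, rfl⟩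
  have hN3 : IsInnerModel N3 := hN3def ▸ H.hG.inn _ hK2
  obtain ⟨K3, hK3def⟩ : ∃ X, X = F N3 := ⟨_, rfl⟩
  have hK3 : IsInnerModel K3 := hK3def ▸ H.hF.inn _ hN3
  have gN : G N = N := by rw [hNdef, H.GG A hA]
  have gN2 : G N2 = N2 := by rw [hN2def, H.GG K hK]
  have fK : F K = K := by rw [hKdef, H.FF N hN]
  have fK2 : F K2 = K2 := by rw [hK2def, H.FF N2 hN2]
  have sKN : K ⊆ N := hKdef ▸ H.hF.sub N hN
  have sN2K : N2 ⊆ K := hN2def ▸ H.hG.sub K hK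
  have sK2N2 : K2 ⊆ N2 := hK2def ▸ H.hF.sub N2 hN2
  have sN3K2 : N3 ⊆ K2 := hN3def ▸ H.hG.sub K2 hK2
  have HN : ModelsVeqHOD N := hNdef ▸ H.GH A hA
  have HK : ModelsVeqHOD K := hKdef ▸ H.FH N hN
  have eiN : IsElem N N2 (i N) := by
    have := H.iE N hN
    rwa [gN, ← hKdef, ← hN2def] at this
  have eiNK : IsElem K K2 (i N) := by
    have := H.hF.restr hN hN2 eiN
    rwa [← hKdef, ← hK2def] at this
  have ejK : IsElem K K2 (j K) := by
    have := H.jE K hK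
    rwa [fK, ← hN2def, ← hK2def] at this
  have ejKN : IsElem N2 N3 (j K) := by
    have := H.hG.restr hK hK2 ejK
    rwa [← hN2def, ← hN3def] at this
  have eiN2 : IsElem N2 N3 (i N2) := by
    have := H.iE N2 hN2
    rwa [gN2, ← hK2def, ← hN3def] at this
  have eiN2K : IsElem K2 K3 (i N2) := by
    have := H.hF.restr hN2 hN3 eiN2
    rwa [← hK2def, ← hK3def] at this
  have ejK2 : IsElem K2 K3 (j K2) := by
    have := H.jE K2 hK2
    rwa [fK2, ← hN3def, ← hK3def] at this
  obtain ⟨E, hE⟩ : ∃ E, E = EE F G j i := ⟨_, rfl⟩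
  have EU : UD (fun S (v : Fin 1 → ZFSet) => v 0 ∈ E S) := hE ▸ H.EU
  have memEN : ∀ x, x ∈ E N ↔ x ∈ K ∧ i N x = j K x := by
    intro x
    rw [hE]; show (x ∈ F N ∧ x ∈ G N ∧ i N x = j (F N) x) ↔ _
    rw [← hKdef, gN]
    exact ⟨fun h => ⟨h.1, h.2.2⟩, fun h => ⟨h.1, sKN h.1, h.2⟩⟩
  have memEN2 : ∀ x, x ∈ E N2 ↔ x ∈ K2 ∧ i N2 x = j K2 x := by
    intro x
    rw [hE]; show (x ∈ F N2 ∧ x ∈ G N2 ∧ i N2 x = j (F N2) x) ↔ _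
    rw [← hK2def, gN2]
    exact ⟨fun h => ⟨h.1, h.2.2⟩, fun h => ⟨h.1, sK2N2 h.1, h.2⟩⟩
  -- W1
  have W1 : ∀ x ∈ K, i N2 (j K x) = j K2 (j K x) := by
    refine woodin hK hK3 (ejK.comp eiN2K) (ejK.comp ejK2) HK
      (R := fun S x => ∃ y ∈ S, (x ∈ F S ∧ j S x = y) ∧ ¬ (y ∈ G S ∧ y ∈ E (G S)))
      (UD.ex (P := fun S v y => (v 0 ∈ F S ∧ j S (v 0) = y) ∧ ¬ (y ∈ G S ∧ y ∈ E (G S)))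
        (UD.and (H.jU.sub2 (R := fun S a b => a ∈ F S ∧ j S a = b) (.idx 0) (.idx 1))
          (((H.hG.rel1 (R := fun S x => x ∈ E S) EU).sub1
            (R := fun S x => x ∈ G S ∧ x ∈ E (G S)) (.idx 1)).not))) ?_
    intro x hx
    have hj : j K x ∈ K2 := ejK.1 x hx
    simp only [← hN2def, memEN2, fK]
    constructor
    · rintro ⟨y, hy, ⟨_, rfl⟩, h⟩ he
      exact h ⟨sK2N2 hj, hj, he⟩
    · intro h
      exact ⟨_, sN2K (sK2N2 hj), ⟨hx, rfl⟩, fun h' => h h'.2.2⟩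
  have W1' : ∀ x ∈ K, j K x ∈ E N2 := fun x hx => (memEN2 _).2 ⟨ejK.1 x hx, W1 x hx⟩
  -- W2
  have hFG := H.hF.comp H.hG
  have W2 : ∀ y ∈ N, i N2 (i N y) = j K (i N y) := by
    refine woodin hN hN3 (eiN.comp eiN2) (eiN.comp ejKN) HN
      (R := fun S y => ∃ a ∈ S, (y ∈ G S ∧ i S y = a) ∧ ∃ b ∈ S,
        ((a ∈ G (F S) ∧ b ∈ G (F S)) ∧ (a ∈ G (G (F S)) ∧ i (G (F S)) a = b)) ∧
        ¬ ((a ∈ F S ∧ b ∈ F S) ∧ (a ∈ F (F S) ∧ j (F S) a = b)))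
      (UD.ex (P := fun S v a => (v 0 ∈ G S ∧ i S (v 0) = a) ∧ ∃ b ∈ S,
        ((a ∈ G (F S) ∧ b ∈ G (F S)) ∧ (a ∈ G (G (F S)) ∧ i (G (F S)) a = b)) ∧
        ¬ ((a ∈ F S ∧ b ∈ F S) ∧ (a ∈ F (F S) ∧ j (F S) a = b)))
       (UD.and (H.iU.sub2 (R := fun S a b => a ∈ G S ∧ i S a = b) (.idx 0) (.idx 1))
        (UD.ex (P := fun S v b =>
          ((v 1 ∈ G (F S) ∧ b ∈ G (F S)) ∧ (v 1 ∈ G (G (F S)) ∧ i (G (F S)) (v 1) = b)) ∧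
          ¬ ((v 1 ∈ F S ∧ b ∈ F S) ∧ (v 1 ∈ F (F S) ∧ j (F S) (v 1) = b)))
         (UD.and
          ((hFG.rel2 (R := fun S a b => a ∈ G S ∧ i S a = b) H.iU).sub2
            (R := fun S a b => (a ∈ G (F S) ∧ b ∈ G (F S)) ∧
              (a ∈ G (G (F S)) ∧ i (G (F S)) a = b)) (.idx 1) (.idx 2))
          ((H.hF.rel2 (R := fun S a b => a ∈ F S ∧ j S a = b) H.jU).sub2
            (R := fun S a b => (a ∈ F S ∧ b ∈ F S) ∧ (a ∈ F (F S) ∧ j (F S) a = b))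
            (.idx 1) (.idx 2)).not)))) ?_
    intro y hy
    have ha := eiN.1 y hy
    have hb := eiN2.1 _ ha
    simp only [gN, ← hKdef, ← hN2def, gN2, fK]
    constructor
    · rintro ⟨a, _, ⟨_, rfl⟩, b, _, ⟨⟨h1, h2⟩, _, rfl⟩, h3⟩ he
      exact h3 ⟨⟨sN2K h1, sN2K h2⟩, sN2K h1, he.symm⟩
    · intro h
      have hb' : i N2 (i N y) ∈ N2 := sK2N2 (sN3K2 hb)
      refine ⟨_, sKN (sN2K ha), ⟨hy, rfl⟩, _, sKN (sN2K hb'),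
        ⟨⟨ha, hb'⟩, ha, rfl⟩, fun h' => h h'.2.2.symm⟩
  have cEN2 : ∀ x ∈ N2, col (E N2) x ∈ N2 := fun x hx => col_mem_S EU hN2 hx
  have cEN : ∀ x ∈ N, col (E N) x ∈ N := fun x hx => col_mem_S EU hN hx
  have inj2 : ∀ w ∈ E N2, ∀ w' ∈ E N2, col (E N2) w = col (E N2) w' → w = w' := by
    rw [hE]; exact H.E_col_inj hN2 gN2
  have inj1 : ∀ w ∈ E N, ∀ w' ∈ E N, col (E N) w = col (E N) w' → w = w' := by
    rw [hE]; exact H.E_col_inj hN gN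
  -- ρ
  let Rρ : Set ZFSet.{u} → ZFSet.{u} → ZFSet.{u} → Prop := fun S v u =>
    ∃ y ∈ S, (v ∈ F S ∧ j S v = y) ∧ ((y ∈ G S ∧ u ∈ G S) ∧ col (E (G S)) y = u)
  have hRρ : UD (fun S (v : Fin 2 → ZFSet) => Rρ S (v 0) (v 1)) :=
    UD.ex (P := fun S v y => (v 0 ∈ F S ∧ j S (v 0) = y) ∧
      ((y ∈ G S ∧ v 1 ∈ G S) ∧ col (E (G S)) y = v 1))
      (UD.and (H.jU.sub2 (R := fun S a b => a ∈ F S ∧ j S a = b) (.idx 0) (.idx 2))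
        ((H.hG.rel2 (R := fun S a b => col (E S) a = b) (UD.col EU)).sub2
          (R := fun S y u => (y ∈ G S ∧ u ∈ G S) ∧ col (E (G S)) y = u) (.idx 2) (.idx 1)))
  have eRρ : ∀ v u, Rρ K v u ↔ v ∈ K ∧ col (E N2) (j K v) = u := by
    intro v u
    simp only [Rρ, ← hN2def, fK]
    constructor
    · rintro ⟨y, _, ⟨h1, rfl⟩, _, h⟩; exact ⟨h1, h⟩
    · rintro ⟨h1, rfl⟩
      have := sK2N2 (ejK.1 v h1)
      exact ⟨_, sN2K this, ⟨h1, rfl⟩, ⟨this, cEN2 _ this⟩, rfl⟩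
  let Pw : Set ZFSet.{u} → ZFSet.{u} → ZFSet.{u} → Prop := fun S a w =>
    ∀ v ∈ S, v ∈ w ↔ ∃ u ∈ a, Rρ S v u
  have hPw : UD (fun S (v : Fin 2 → ZFSet) => Pw S (v 0) (v 1)) :=
    UD.all (P := fun S v x => x ∈ v 1 ↔ ∃ u ∈ v 0, Rρ S x u)
      (UD.iff (D0.mem (.idx 2) (.idx 1)).ud
        (UD.bex (.idx 0) (P := fun S v u => Rρ S (v 2) u) (hRρ.sub2 (.idx 2) (.idx 3))))
  have surj : ∀ y, y ∈ N → ∃ w ∈ E N, col (E N) w = y := by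
    intro y
    induction y using ZFSet.inductionOn with
    | h y ih => 
    intro hy
    have ha : i N y ∈ N2 := eiN.1 y hy
    obtain ⟨w, hw, hwm⟩ := hK.rep0 (R := fun S u v => Rρ S v u)
      (hRρ.sub2 (.idx 1) (.idx 0)) (sN2K ha) (by
        intro u hu v hv v' hv' h1 h2
        rw [eRρ] at h1 h2
        exact (ejK.inj hv hv').2 (inj2 _ (W1' v hv) _ (W1' v' hv') (h1.2.trans h2.2.symm)))
    have hP : Pw K (i N y) w := by
      intro v hv
      rw [hwm]
      exact ⟨fun ⟨u, hu, _, h⟩ => ⟨u, hu, h⟩, fun ⟨u, hu, h⟩ => ⟨u, hu, hv, h⟩⟩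
    have hP1 := (hPw.trans2 hK hK2 eiNK (sN2K ha) hw).1 hP
    have hP2 := (hPw.trans2 hK hK2 ejK (sN2K ha) hw).1 hP
    have e1 : i N2 (i N y) = i N (i N y) :=
      ((H.iU.trans2 (R := fun S a b => a ∈ G S ∧ i S a = b) hN hN2 eiN hy (sKN (sN2K ha))).1
        ⟨by rwa [gN], rfl⟩).2
    rw [← e1, W2 y hy] at hP1
    have hwE : w ∈ E N := by
      rw [memEN]
      refine ⟨hw, ZFSet.ext fun z => ?_⟩
      have t1 := eiNK.1 w hw
      have t2 := ejK.1 w hw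
      exact ⟨fun hz => (hP2 z (hK2.tr _ t1 _ hz)).2 ((hP1 z (hK2.tr _ t1 _ hz)).1 hz),
        fun hz => (hP1 z (hK2.tr _ t2 _ hz)).2 ((hP2 z (hK2.tr _ t2 _ hz)).1 hz)⟩
    have hv : ∀ v ∈ E N, v ∈ w ↔ col (E N) v ∈ y := by
      intro v hv
      have hvK := ((memEN v).1 hv).1
      have e2 := ((memEN v).1 hv).2
      have hc := cEN v (sKN hvK)
      have e3 : col (E N2) (i N v) = i N (col (E N) v) :=
        ((UD.col EU).trans2 (R := fun S a b => col (E S) a = b) hN hN2 eiN (sKN hvK) hc).1 rfl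
      rw [hP v hvK, eiN.mem hc hy, ← e3, e2]
      simp only [eRρ]
      constructor
      · rintro ⟨u, hu, _, rfl⟩; exact hu
      · intro h; exact ⟨_, h, hvK, rfl⟩
    refine ⟨w, hwE, ZFSet.ext fun z => ?_⟩
    rw [mem_col]
    constructor
    · rintro ⟨v, hvw, hvE, rfl⟩; exact (hv v hvE).1 hvw
    · intro hz
      obtain ⟨v, hvE, rfl⟩ := ih z hz (hN.tr _ hy _ hz)
      exact ⟨v, (hv v hvE).2 hz, hvE, rfl⟩
  -- conclusion
  have hΓ : UD (fun S (v : Fin 0 → ZFSet) => ∀ x ∈ S, x ∈ G S) :=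
    UD.all (P := fun S v x => x ∈ G S) (H.hG.ud.sub1 (R := fun S x => x ∈ G S) (.idx 0))
  obtain ⟨Γ, hΓ'⟩ := id hΓ
  have k1 : ZSat N Γ finZeroElim := (hΓ' N hN finZeroElim (by simp)).2 (by simp [gN])
  have k2 : ZSat (E N) Γ finZeroElim := by
    refine (ZSat_iso (X := E N) (Y := N) (π := col (E N)) ?_ surj inj1 ?_ Γ finZeroElim
      (by simp)).2 ?_
    · intro x hx; exact cEN x (sKN ((memEN x).1 hx).1)
    · intro x hx x' hx'
      constructor
      · intro h; exact mem_col.2 ⟨x, h, hx, rfl⟩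
      · intro h
        obtain ⟨v, hv, hvE, he⟩ := mem_col.1 h
        rwa [inj1 x hx v hvE he]
    · convert k1
  have k3 : ZSat K Γ finZeroElim := by
    rw [hE] at k2
    have := (H.E_elem hN gN Γ finZeroElim (by simp)).1 k2
    rwa [← hKdef] at this
  have k4 : ZSat A Γ finZeroElim := by
    have ejA := H.jE A hA
    rw [hFA, ← hNdef, ← hKdef] at ejA
    rw [ejA.2 0 Γ finZeroElim (by simp)]
    convert k3
  exact Set.Subset.antisymm (H.hG.sub A hA) ((hΓ' A hA finZeroElim (by simp)).1 k4)
end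

open FirstOrder FirstOrder.Language
set_option linter.unusedVariables false

/-! ### Levy classes, semantically -/
def SD {n : ℕ} (k : ℕ) (P : Set ZFSet → (Fin n → ZFSet) → Prop) : Prop :=
  ∃ φ : BF n, LevySigma k φ ∧ ∀ S, IsInnerModel S → ∀ v : Fin n → ZFSet, (∀ i, v i ∈ S) →
    (ZSat S φ v ↔ P S v)
def PD {n : ℕ} (k : ℕ) (P : Set ZFSet → (Fin n → ZFSet) → Prop) : Prop :=
  ∃ φ : BF n, LevyPi k φ ∧ ∀ S, IsInnerModel S → ∀ v : Fin n → ZFSet, (∀ i, v i ∈ S) →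
    (ZSat S φ v ↔ P S v)

theorem SD.ud {n k : ℕ} {P : Set ZFSet → (Fin n → ZFSet) → Prop} (h : SD k P) : UD P := by
  obtain ⟨φ, _, h⟩ := h
  exact ⟨φ, h⟩
theorem SD.congr {n k : ℕ} {P Q : Set ZFSet → (Fin n → ZFSet) → Prop} (h : SD k P)
    (e : ∀ S, IsInnerModel S → ∀ v : Fin n → ZFSet, (∀ i, v i ∈ S) → (P S v ↔ Q S v)) : SD k Q := by
  obtain ⟨φ, h0, h⟩ := h
  exact ⟨φ, h0, fun S hS v hv => (h S hS v hv).trans (e S hS v hv)⟩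
theorem PD.congr {n k : ℕ} {P Q : Set ZFSet → (Fin n → ZFSet) → Prop} (h : PD k P)
    (e : ∀ S, IsInnerModel S → ∀ v : Fin n → ZFSet, (∀ i, v i ∈ S) → (P S v ↔ Q S v)) : PD k Q := by
  obtain ⟨φ, h0, h⟩ := h
  exact ⟨φ, h0, fun S hS v hv => (h S hS v hv).trans (e S hS v hv)⟩
theorem PD.sd {n k : ℕ} {P : Set ZFSet → (Fin n → ZFSet) → Prop} (h : PD k P) : SD (k+1) P := by
  obtain ⟨φ, h0, h⟩ := h
  exact ⟨φ, .ofPi h0, h⟩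
theorem SD.pd {n k : ℕ} {P : Set ZFSet → (Fin n → ZFSet) → Prop} (h : SD k P) : PD (k+1) P := by
  obtain ⟨φ, h0, h⟩ := h
  exact ⟨φ, .ofSigma h0, h⟩
theorem D0.sp {n : ℕ} {P : (Fin n → ZFSet) → Prop} (h : D0 P) (k : ℕ) :
    SD k (fun _ => P) ∧ PD k (fun _ => P) := by
  induction k with
  | zero =>
    obtain ⟨φ, h0, h⟩ := h
    exact ⟨⟨φ, .delta0 h0, fun S hS => h S hS.tr⟩, ⟨φ, .delta0 h0, fun S hS => h S hS.tr⟩⟩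
  | succ k ih => exact ⟨ih.2.sd, ih.1.pd⟩
theorem D0.sd {n : ℕ} {P : (Fin n → ZFSet) → Prop} (h : D0 P) (k : ℕ) : SD k (fun _ => P) :=
  (h.sp k).1
theorem D0.pd {n : ℕ} {P : (Fin n → ZFSet) → Prop} (h : D0 P) (k : ℕ) : PD k (fun _ => P) :=
  (h.sp k).2
theorem SD.ex {n k : ℕ} {P : Set ZFSet → (Fin n → ZFSet) → ZFSet → Prop}
    (hP : SD (k+1) (fun S (w : Fin (n+1) → ZFSet) => P S (Fin.init w) (w (Fin.last n)))) :
    SD (k+1) (fun S v => ∃ x ∈ S, P S v x) := by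
  obtain ⟨φ, h, e⟩ := hP
  refine ⟨φ.ex, .ex h, fun S hS v hv => ?_⟩
  rw [ZSat_ex']
  refine exists_congr fun x => and_congr_right fun hx => ?_
  rw [e S hS _ (snoc_mem hv hx)]; simp
theorem PD.all {n k : ℕ} {P : Set ZFSet → (Fin n → ZFSet) → ZFSet → Prop}
    (hP : PD (k+1) (fun S (w : Fin (n+1) → ZFSet) => P S (Fin.init w) (w (Fin.last n)))) :
    PD (k+1) (fun S v => ∀ x ∈ S, P S v x) := by
  obtain ⟨φ, h, e⟩ := hP
  refine ⟨φ.all, .all h, fun S hS v hv => ?_⟩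
  rw [ZSat_all]
  refine forall₂_congr fun x hx => ?_
  rw [e S hS _ (snoc_mem hv hx)]; simp
theorem SD.sub {n k m : ℕ} {P : Set ZFSet → (Fin m → ZFSet) → Prop} (hP : SD k P)
    {f : (Fin n → ZFSet) → Fin m → ZFSet} (hf : ∀ i, Var (fun v => f v i)) :
    SD k (fun S v => P S (f v)) := by
  obtain ⟨φ, h0, e⟩ := hP
  choose ρ hρ using hf
  have : ∀ v, f v = v ∘ ρ := fun v => funext fun i => hρ i v
  refine ⟨ren ρ φ, ren_sigma h0 ρ, fun S hS v hv => ?_⟩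
  simp only [this]
  rw [ZSat_ren, e S hS (v ∘ ρ) fun i => hv _]
theorem PD.sub {n k m : ℕ} {P : Set ZFSet → (Fin m → ZFSet) → Prop} (hP : PD k P)
    {f : (Fin n → ZFSet) → Fin m → ZFSet} (hf : ∀ i, Var (fun v => f v i)) :
    PD k (fun S v => P S (f v)) := by
  obtain ⟨φ, h0, e⟩ := hP
  choose ρ hρ using hf
  have : ∀ v, f v = v ∘ ρ := fun v => funext fun i => hρ i v
  refine ⟨ren ρ φ, ren_pi h0 ρ, fun S hS v hv => ?_⟩
  simp only [this]
  rw [ZSat_ren, e S hS (v ∘ ρ) fun i => hv _]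

theorem sig_ind {k : ℕ} {motive : ∀ n, BF n → Prop}
    (h1 : ∀ n φ, LevyPi k φ → motive n φ)
    (h2 : ∀ n φ, LevySigma (k+1) φ → motive (n+1) φ → motive n φ.ex) {n : ℕ} {φ : BF n}
    (h : LevySigma (k+1) φ) : motive n φ := by
  have := LevySigma.rec (motive_1 := fun k' n φ _ => k' = k+1 → motive n φ)
    (motive_2 := fun _ _ _ _ => True) (by intro _ _ _ h; exact absurd h (by omega))
    (by intro k' n φ h' _ e; obtain rfl : k' = k := by omega
        exact h1 _ _ h')
    (by intro k' n φ h' ih e; obtain rfl : k' = k := by omega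
        exact h2 _ _ h' (ih rfl))
    (by intros; trivial) (by intros; trivial) (by intros; trivial) h
  exact this rfl
theorem pi_ind {k : ℕ} {motive : ∀ n, BF n → Prop}
    (h1 : ∀ n φ, LevySigma k φ → motive n φ)
    (h2 : ∀ n φ, LevyPi (k+1) φ → motive (n+1) φ → motive n φ.all) {n : ℕ} {φ : BF n}
    (h : LevyPi (k+1) φ) : motive n φ := by
  have := LevyPi.rec (motive_2 := fun k' n φ _ => k' = k+1 → motive n φ)
    (motive_1 := fun _ _ _ _ => True) 
    (by intros; trivial) (by intros; trivial) (by intros; trivial) 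
    (by intro _ _ _ h; exact absurd h (by omega))
    (by intro k' n φ h' _ e; obtain rfl : k' = k := by omega
        exact h1 _ _ h')
    (by intro k' n φ h' ih e; obtain rfl : k' = k := by omega
        exact h2 _ _ h' (ih rfl)) h
  exact this rfl

theorem SD.wk {n k : ℕ} {P : Set ZFSet → (Fin n → ZFSet) → Prop} (hP : SD k P) :
    SD k (fun S (w : Fin (n+1) → ZFSet) => P S (Fin.init w)) :=
  hP.sub (f := fun w => Fin.init w) fun i => ⟨i.castSucc, fun _ => rfl⟩
theorem PD.wk {n k : ℕ} {P : Set ZFSet → (Fin n → ZFSet) → Prop} (hP : PD k P) :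
    PD k (fun S (w : Fin (n+1) → ZFSet) => P S (Fin.init w)) :=
  hP.sub (f := fun w => Fin.init w) fun i => ⟨i.castSucc, fun _ => rfl⟩

theorem IsInnerModel.emp' {S : Set ZFSet} (h : IsInnerModel S) : ∃ x, x ∈ S := ⟨_, h.emp⟩

theorem sp_and (k : ℕ) : (∀ {n : ℕ} {P Q : Set ZFSet.{u} → (Fin n → ZFSet) → Prop}, SD k P → SD k Q →
    SD k (fun S v => P S v ∧ Q S v)) ∧ (∀ {n : ℕ} {P Q : Set ZFSet.{u} → (Fin n → ZFSet) → Prop},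
    PD k P → PD k Q → PD k (fun S v => P S v ∧ Q S v)) := by
  induction k with
  | zero =>
    constructor
    · rintro n P Q ⟨φ, h, e⟩ ⟨ψ, h', e'⟩
      cases h with | delta0 h => 
      cases h' with | delta0 h' => 
      refine ⟨andF φ ψ, .delta0 ?_, fun S hS v hv => by
        rw [ZSat_and, e S hS v hv, e' S hS v hv]⟩
      exact (h.imp (h'.imp .falsum)).imp .falsum
    · rintro n P Q ⟨φ, h, e⟩ ⟨ψ, h', e'⟩
      cases h with | delta0 h => 
      cases h' with | delta0 h' => 
      refine ⟨andF φ ψ, .delta0 ?_, fun S hS v hv => by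
        rw [ZSat_and, e S hS v hv, e' S hS v hv]⟩
      exact (h.imp (h'.imp .falsum)).imp .falsum
  | succ k ih =>
    constructor
    · have step1 : ∀ n (ψ : BF n), LevySigma (k+1) ψ →
          ∀ P : Set ZFSet.{u} → (Fin n → ZFSet) → Prop, PD k P →
          SD (k+1) (fun S v => P S v ∧ ZSat S ψ v) := by
        intro n ψ h
        refine sig_ind (motive := fun n ψ => ∀ P : Set ZFSet.{u} → (Fin n → ZFSet) → Prop, PD k P →
          SD (k+1) (fun S v => P S v ∧ ZSat S ψ v)) ?_ ?_ h
        · intro n φ hφ P hP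
          exact (ih.2 hP ⟨φ, hφ, fun S _ v _ => Iff.rfl⟩).sd
        · intro n φ _ H P hP
          have := SD.ex (P := fun S v x => P S v ∧ ZSat S φ (Fin.snoc v x)) 
            ((H _ hP.wk).congr fun S hS v hv => by simp [Fin.snoc_init_self])
          refine this.congr fun S hS v hv => ?_
          rw [ZSat_ex']
          constructor
          · rintro ⟨x, hx, h, h'⟩; exact ⟨h, x, hx, h'⟩
          · rintro ⟨h, x, hx, h'⟩; exact ⟨x, hx, h, h'⟩
      rintro n P Q ⟨φ, h, e⟩ hQ
      have : SD (k+1) (fun S v => Q S v ∧ ZSat S φ v) := by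
        clear e
        revert hQ
        generalize Q = Q'
        revert Q'
        refine sig_ind (motive := fun n φ => ∀ Q : Set ZFSet.{u} → (Fin n → ZFSet) → Prop, SD (k+1) Q →
          SD (k+1) (fun S v => Q S v ∧ ZSat S φ v)) ?_ ?_ h
        · rintro n φ hφ Q ⟨ψ, hψ, e⟩
          exact (step1 n ψ hψ _ ⟨φ, hφ, fun S _ v _ => Iff.rfl⟩).congr fun S hS v hv => by
            rw [e S hS v hv, and_comm]
        · intro n φ _ H P hP
          have := SD.ex (P := fun S v x => P S v ∧ ZSat S φ (Fin.snoc v x)) 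
            ((H _ hP.wk).congr fun S hS v hv => by simp [Fin.snoc_init_self])
          refine this.congr fun S hS v hv => ?_
          rw [ZSat_ex']
          constructor
          · rintro ⟨x, hx, h, h'⟩; exact ⟨h, x, hx, h'⟩
          · rintro ⟨h, x, hx, h'⟩; exact ⟨x, hx, h, h'⟩
      exact this.congr fun S hS v hv => by rw [e S hS v hv, and_comm]
    · have step1 : ∀ n (ψ : BF n), LevyPi (k+1) ψ →
          ∀ P : Set ZFSet.{u} → (Fin n → ZFSet) → Prop, SD k P →
          PD (k+1) (fun S v => P S v ∧ ZSat S ψ v) := by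
        intro n ψ h
        refine pi_ind (motive := fun n ψ => ∀ P : Set ZFSet.{u} → (Fin n → ZFSet) → Prop, SD k P →
          PD (k+1) (fun S v => P S v ∧ ZSat S ψ v)) ?_ ?_ h
        · intro n φ hφ P hP
          exact (ih.1 hP ⟨φ, hφ, fun S _ v _ => Iff.rfl⟩).pd
        · intro n φ _ H P hP
          have := PD.all (P := fun S v x => P S v ∧ ZSat S φ (Fin.snoc v x)) 
            ((H _ hP.wk).congr fun S hS v hv => by simp [Fin.snoc_init_self])
          refine this.congr fun S hS v hv => ?_
          rw [ZSat_all]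
          constructor
          · intro h; exact ⟨(h _ hS.emp).1, fun x hx => (h x hx).2⟩
          · rintro ⟨h, h'⟩ x hx; exact ⟨h, h' x hx⟩
      rintro n P Q ⟨φ, h, e⟩ hQ
      have : PD (k+1) (fun S v => Q S v ∧ ZSat S φ v) := by
        clear e
        revert hQ
        generalize Q = Q'
        revert Q'
        refine pi_ind (motive := fun n φ => ∀ Q : Set ZFSet.{u} → (Fin n → ZFSet) → Prop, PD (k+1) Q →
          PD (k+1) (fun S v => Q S v ∧ ZSat S φ v)) ?_ ?_ h
        · rintro n φ hφ Q ⟨ψ, hψ, e⟩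
          exact (step1 n ψ hψ _ ⟨φ, hφ, fun S _ v _ => Iff.rfl⟩).congr fun S hS v hv => by
            rw [e S hS v hv, and_comm]
        · intro n φ _ H P hP
          have := PD.all (P := fun S v x => P S v ∧ ZSat S φ (Fin.snoc v x)) 
            ((H _ hP.wk).congr fun S hS v hv => by simp [Fin.snoc_init_self])
          refine this.congr fun S hS v hv => ?_
          rw [ZSat_all]
          constructor
          · intro h; exact ⟨(h _ hS.emp).1, fun x hx => (h x hx).2⟩
          · rintro ⟨h, h'⟩ x hx; exact ⟨h, h' x hx⟩
      exact this.congr fun S hS v hv => by rw [e S hS v hv, and_comm]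

theorem SD.and {n k : ℕ} {P Q : Set ZFSet → (Fin n → ZFSet) → Prop} (hP : SD k P) (hQ : SD k Q) :
    SD k (fun S v => P S v ∧ Q S v) := (sp_and k).1 hP hQ
theorem PD.and {n k : ℕ} {P Q : Set ZFSet → (Fin n → ZFSet) → Prop} (hP : PD k P) (hQ : PD k Q) :
    PD k (fun S v => P S v ∧ Q S v) := (sp_and k).2 hP hQ

/-! ### constants -/
theorem D0.isNat {n : ℕ} (c : ℕ) {f : (Fin n → ZFSet) → ZFSet} (hf : Var f) :
    D0 (fun v => f v = natZ c) := by
  induction c generalizing n with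
  | zero =>
    refine (D0.ball hf (P := fun v x => False) D0.fls).congr fun v => ?_
    rw [natZ, ZFSet.eq_empty]
  | succ c ih =>
    refine (D0.bex hf (P := fun v x => x = natZ c ∧ (∀ y ∈ f v, y ∈ x ∨ y = x) ∧ (∀ y ∈ x, y ∈ f v))
      ((ih Var.last).and ((D0.ball hf.ini (P := fun w y => y ∈ w (Fin.last n) ∨ y = w (Fin.last n))
        ((D0.mem Var.last Var.last.ini).or (D0.eq Var.last Var.last.ini))).and
        (D0.ball Var.last (P := fun w y => y ∈ f (Fin.init w)) 
          (D0.mem Var.last hf.ini.ini))))).congr fun v => ?_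
    rw [natZ]
    constructor
    · rintro ⟨x, hx, rfl, h1, h2⟩
      ext z
      rw [ZFSet.mem_insert_iff]
      constructor
      · intro h; exact (h1 z h).symm
      · rintro (rfl | h)
        exacts [hx, h2 z h]
    · intro h
      refine ⟨natZ c, ?_, rfl, ?_, ?_⟩ <;> simp [h]
      all_goals intro y; tauto
theorem IsInnerModel.nat {S : Set ZFSet} (hS : IsInnerModel S) (c : ℕ) : natZ c ∈ S := by
  induction c with
  | zero => exact hS.emp
  | succ c ih => 
    have := hS.union (hS.sing ih) ih
    convert this using 1
    ext; simp [natZ]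

open FirstOrder FirstOrder.Language
set_option linter.unusedVariables false

theorem D0.rn {n m : ℕ} {P : (Fin m → ZFSet) → Prop} (hP : D0 P)
    {f : (Fin n → ZFSet) → Fin m → ZFSet} (hf : ∀ i, Var (fun v => f v i)) :
    D0 (fun v => P (f v)) := by
  obtain ⟨φ, h0, e⟩ := hP
  choose ρ hρ using hf
  have : ∀ v, f v = v ∘ ρ := fun v => funext fun i => hρ i v
  refine ⟨ren ρ φ, ren_delta0 h0 ρ, fun S hS v hv => ?_⟩
  simp only [this]
  rw [ZSat_ren, e S hS (v ∘ ρ) fun i => hv _]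
theorem D0.s1 {n : ℕ} {R : ZFSet → Prop} (h : D0 (fun (v : Fin 1 → ZFSet) => R (v 0)))
    {a : (Fin n → ZFSet) → ZFSet} (ha : Var a) : D0 (fun v => R (a v)) :=
  h.rn (f := fun v => ![a v]) fun i => by fin_cases i; exact ha
theorem D0.s3 {n : ℕ} {R : ZFSet → ZFSet → ZFSet → Prop}
    (h : D0 (fun (v : Fin 3 → ZFSet) => R (v 0) (v 1) (v 2)))
    {a b c : (Fin n → ZFSet) → ZFSet} (ha : Var a) (hb : Var b) (hc : Var c) :
    D0 (fun v => R (a v) (b v) (c v)) :=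
  h.rn (f := fun v => ![a v, b v, c v]) fun i => by fin_cases i; exacts [ha, hb, hc]

theorem D0.func3 : D0 (fun (v : Fin 3 → ZFSet) => ZFSet.IsFunc (v 1) (v 2) (v 0)) := by
  have h1 : D0 (fun (v : Fin 3 → ZFSet) => ∀ p ∈ v 0, ∃ x ∈ v 1, ∃ y ∈ v 2, p = ZFSet.pair x y) :=
   (D0.ball (.idx 0) (P := fun v p => ∃ x ∈ v 1, ∃ y ∈ v 2, p = ZFSet.pair x y)
    (D0.bex (.idx 1) (P := fun v x => ∃ y ∈ v 2, v 3 = ZFSet.pair x y)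
     (D0.bex (.idx 2) (P := fun v y => v 3 = ZFSet.pair (v 4) y)
      (D0.isOPair (.idx 3) (.idx 4) (.idx 5)))))
  have h2 : D0 (fun (v : Fin 3 → ZFSet) => ∀ z ∈ v 1, ∃ w ∈ v 2, ZFSet.pair z w ∈ v 0 ∧
      ∀ w' ∈ v 2, ZFSet.pair z w' ∈ v 0 → w' = w) :=
   (D0.ball (.idx 1) (P := fun v z => ∃ w ∈ v 2, ZFSet.pair z w ∈ v 0 ∧
      ∀ w' ∈ v 2, ZFSet.pair z w' ∈ v 0 → w' = w)
    (D0.bex (.idx 2) (P := fun v w => ZFSet.pair (v 3) w ∈ v 0 ∧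
      ∀ w' ∈ v 2, ZFSet.pair (v 3) w' ∈ v 0 → w' = w)
     ((D0.pairMem (.idx 0) (.idx 3) (.idx 4)).and
      (D0.ball (.idx 2) (P := fun v w' => ZFSet.pair (v 3) w' ∈ v 0 → w' = v 4)
       ((D0.pairMem (.idx 0) (.idx 3) (.idx 5)).imp (D0.eq (.idx 5) (.idx 4)))))))
  refine (h1.and h2).congr fun v => ?_
  unfold ZFSet.IsFunc
  constructor
  · rintro ⟨h1, h2⟩
    have h1' : v 0 ⊆ (v 1).prod (v 2) := fun p hp => by
      obtain ⟨x, hx, y, hy, rfl⟩ := h1 p hp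
      simp [hx, hy]
    refine ⟨h1', fun z hz => ?_⟩
    obtain ⟨w, hw, hp, hu⟩ := h2 z hz
    exact ⟨w, hp, fun w' hw' => hu w' (ZFSet.pair_mem_prod.1 (h1' hw')).2 hw'⟩
  · rintro ⟨h1, h2⟩
    refine ⟨fun p hp => by simpa [ZFSet.mem_prod] using h1 hp, fun z hz => ?_⟩
    obtain ⟨w, hw, hu⟩ := h2 z hz
    exact ⟨w, (ZFSet.pair_mem_prod.1 (h1 hw)).2, hw, fun w' _ h => hu w' h⟩

theorem D0.surj3 : D0 (fun (v : Fin 3 → ZFSet) => SurjFun (v 0) (v 1) (v 2)) :=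
  D0.func3.and (D0.ball (.idx 2) (P := fun v y => ∃ x ∈ v 1, ZFSet.pair x y ∈ v 0)
    (D0.bex (.idx 1) (P := fun v x => ZFSet.pair x (v 3) ∈ v 0)
      (D0.pairMem (.idx 0) (.idx 4) (.idx 3))))
theorem D0.surj {n : ℕ} {f a b : (Fin n → ZFSet) → ZFSet} (hf : Var f) (ha : Var a) (hb : Var b) :
    D0 (fun v => SurjFun (f v) (a v) (b v)) := D0.surj3.s3 hf ha hb

theorem D0.inj3 : D0 (fun (v : Fin 3 → ZFSet) => InjFun (v 0) (v 1) (v 2)) :=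
  (D0.func3.and (D0.ball (.idx 1) (P := fun v x => ∀ x' ∈ v 1, ∀ y ∈ v 2,
      ZFSet.pair x y ∈ v 0 → ZFSet.pair x' y ∈ v 0 → x = x')
    (D0.ball (.idx 1) (P := fun v x' => ∀ y ∈ v 2,
      ZFSet.pair (v 3) y ∈ v 0 → ZFSet.pair x' y ∈ v 0 → v 3 = x')
     (D0.ball (.idx 2) (P := fun v y =>
      ZFSet.pair (v 3) y ∈ v 0 → ZFSet.pair (v 4) y ∈ v 0 → v 3 = v 4)
      ((D0.pairMem (.idx 0) (.idx 3) (.idx 5)).imp ((D0.pairMem (.idx 0) (.idx 4) (.idx 5)).imp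
        (D0.eq (.idx 3) (.idx 4)))))))).congr fun v => by
    unfold InjFun
    refine and_congr_right fun h => ?_
    constructor
    · intro H x hx x' hx' y hp hp'
      exact H x hx x' hx' y (ZFSet.pair_mem_prod.1 (h.1 hp)).2 hp hp'
    · intro H x hx x' hx' y _ hp hp'
      exact H x hx x' hx' y hp hp'
theorem D0.inj {n : ℕ} {f a b : (Fin n → ZFSet) → ZFSet} (hf : Var f) (ha : Var a) (hb : Var b) :
    D0 (fun v => InjFun (f v) (a v) (b v)) := D0.inj3.s3 hf ha hb

/-! omega -/
theorem mem_omega {x : ZFSet.{u}} : x ∈ ZFSet.omega ↔ ∃ c, x = natZ c := by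
  constructor
  · intro h
    have : ∀ k : ℕ, ZFSet.mk (PSet.ofNat k) = natZ k := by
      intro k
      induction k with
      | zero => rfl
      | succ k ih => rw [natZ, ← ih]; rfl
    revert h
    refine Quotient.inductionOn x fun y h => ?_
    obtain ⟨⟨k⟩, hk⟩ := h
    exact ⟨k, (ZFSet.sound hk).trans (this k)⟩
  · rintro ⟨c, rfl⟩
    induction c with
    | zero => exact ZFSet.omega_zero
    | succ c ih => exact ZFSet.omega_succ ih

theorem D0.isOm1 : D0 (fun (v : Fin 1 → ZFSet.{u}) => v 0 = ZFSet.omega) := by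
  have h1 : D0 (fun (v : Fin 1 → ZFSet.{u}) => (∃ z ∈ v 0, z = natZ 0) ∧
      (∀ z ∈ v 0, ∃ y ∈ v 0, z ∈ y ∧ (∀ t ∈ z, t ∈ y) ∧ ∀ t ∈ y, t = z ∨ t ∈ z) ∧
      (∀ y ∈ v 0, y = natZ 0 ∨ ∃ z ∈ v 0, z ∈ y ∧ (∀ t ∈ z, t ∈ y) ∧
      ∀ t ∈ y, t = z ∨ t ∈ z)) :=
  ((D0.bex (.idx 0) (P := fun v z => z = natZ 0) (D0.isNat 0 (.idx 1))).and
   ((D0.ball (.idx 0) (P := fun v z => ∃ y ∈ v 0, z ∈ y ∧ (∀ t ∈ z, t ∈ y) ∧ ∀ t ∈ y, t = z ∨ t ∈ z)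
    (D0.bex (.idx 0) (P := fun v y => v 1 ∈ y ∧ (∀ t ∈ v 1, t ∈ y) ∧ ∀ t ∈ y, t = v 1 ∨ t ∈ v 1)
     ((D0.mem (.idx 1) (.idx 2)).and ((D0.ball (.idx 1) (P := fun v t => t ∈ v 2)
       (D0.mem (.idx 3) (.idx 2))).and (D0.ball (.idx 2) (P := fun v t => t = v 1 ∨ t ∈ v 1)
       ((D0.eq (.idx 3) (.idx 1)).or (D0.mem (.idx 3) (.idx 1)))))))).and
   (D0.ball (.idx 0) (P := fun v y => y = natZ 0 ∨ ∃ z ∈ v 0, z ∈ y ∧ (∀ t ∈ z, t ∈ y) ∧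
      ∀ t ∈ y, t = z ∨ t ∈ z)
    ((D0.isNat 0 (.idx 1)).or
    (D0.bex (.idx 0) (P := fun v z => z ∈ v 1 ∧ (∀ t ∈ z, t ∈ v 1) ∧ ∀ t ∈ v 1, t = z ∨ t ∈ z)
     ((D0.mem (.idx 2) (.idx 1)).and ((D0.ball (.idx 2) (P := fun v t => t ∈ v 1)
       (D0.mem (.idx 3) (.idx 1))).and (D0.ball (.idx 1) (P := fun v t => t = v 2 ∨ t ∈ v 2)
       ((D0.eq (.idx 3) (.idx 2)).or (D0.mem (.idx 3) (.idx 2)))))))))))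
  refine h1.congr fun v => ?_
  clear h1
  have key : ∀ z y : ZFSet.{u}, (z ∈ y ∧ (∀ t ∈ z, t ∈ y) ∧ ∀ t ∈ y, t = z ∨ t ∈ z) ↔
      y = insert z z := by
    intro z y
    constructor
    · rintro ⟨h1, h2, h3⟩
      ext t
      rw [ZFSet.mem_insert_iff]
      refine ⟨h3 t, ?_⟩
      rintro (rfl | h)
      exacts [h1, h2 t h]
    · rintro rfl
      simp
      tauto
  simp only [key]
  constructor
  · rintro ⟨⟨z, hz, rfl⟩, h2, h3⟩
    ext x
    rw [mem_omega]
    constructor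
    · intro hx
      induction x using ZFSet.inductionOn with
      | h x ih => 
        rcases h3 x hx with h | ⟨z, hz, h⟩
        · exact ⟨0, h⟩
        · obtain ⟨c, rfl⟩ := ih z (by rw [h]; simp) hz
          exact ⟨c+1, h⟩
    · rintro ⟨c, rfl⟩
      induction c with
      | zero => exact hz
      | succ c ih =>
        obtain ⟨y, hy, rfl⟩ := h2 _ ih
        exact hy
  · intro h
    simp only [h, mem_omega]
    refine ⟨⟨_, ⟨0, rfl⟩, rfl⟩, ?_, ?_⟩
    · rintro z ⟨c, rfl⟩
      exact ⟨_, ⟨c+1, rfl⟩, rfl⟩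
    · rintro z ⟨c, rfl⟩
      cases c with
      | zero => exact Or.inl rfl
      | succ c => exact Or.inr ⟨_, ⟨c, rfl⟩, rfl⟩
theorem D0.isOm {n : ℕ} {f : (Fin n → ZFSet) → ZFSet} (hf : Var f) :
    D0 (fun v => f v = ZFSet.omega) := D0.isOm1.s1 (R := fun x => x = ZFSet.omega) hf

/-! strong limits -/
theorem SD.card : PD 1 (fun S (v : Fin 1 → ZFSet) => IsCardIn S (v 0)) :=
  (((D0.ord (.idx 0)).pd 1).and (PD.all (P := fun S v f => ∀ α ∈ v 0, ¬ SurjFun f α (v 0))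
    ((D0.ball (.idx 0) (P := fun v α => ¬ SurjFun (v 1) α (v 0))
      (D0.surj (.idx 1) (.idx 2) (.idx 0)).not).pd 1))).congr fun S hS v hv => by
    unfold IsCardIn
    refine and_congr_right fun _ => ?_
    exact ⟨fun h α ha f hf => h f hf α ha, fun h f hf α ha => h α ha f hf⟩

theorem SD.slim : SD 2 (fun S (v : Fin 1 → ZFSet) => StrongLimitIn S (v 0)) := by
  have hD : D0 (fun v : Fin 4 → ZFSet => ∀ κ ∈ v 0, ∃ p ∈ v 2, (∀ z ∈ p, z ⊆ κ) ∧
      (∀ z ∈ v 1, z ⊆ κ → z ∈ p) ∧ ∃ α ∈ v 0, ∃ f ∈ v 3, InjFun f p α) :=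
    D0.ball (.idx 0) (P := fun v κ => ∃ p ∈ v 2, (∀ z ∈ p, z ⊆ κ) ∧
      (∀ z ∈ v 1, z ⊆ κ → z ∈ p) ∧ ∃ α ∈ v 0, ∃ f ∈ v 3, InjFun f p α)
    (D0.bex (.idx 2) (P := fun v p => (∀ z ∈ p, z ⊆ v 4) ∧
      (∀ z ∈ v 1, z ⊆ v 4 → z ∈ p) ∧ ∃ α ∈ v 0, ∃ f ∈ v 3, InjFun f p α)
    ((D0.ball (.idx 5) (P := fun v z => z ⊆ v 4) (D0.sub (.idx 6) (.idx 4))).and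
     ((D0.ball (.idx 1) (P := fun v z => z ⊆ v 4 → z ∈ v 5)
       ((D0.sub (.idx 6) (.idx 4)).imp (D0.mem (.idx 6) (.idx 5)))).and
     (D0.bex (.idx 0) (P := fun v α => ∃ f ∈ v 3, InjFun f (v 5) α)
      (D0.bex (.idx 3) (P := fun v f => InjFun f (v 5) (v 6))
       (D0.inj (.idx 7) (.idx 5) (.idx 6)))))))
  have h1 : SD 2 (fun S (v : Fin 1 → ZFSet) => ∃ q ∈ S, ∃ g1 ∈ S, ∃ g2 ∈ S,
      (∀ y ∈ S, y ⊆ v 0 → y ∈ q) ∧ ∀ κ ∈ v 0, ∃ p ∈ g1, (∀ z ∈ p, z ⊆ κ) ∧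
      (∀ z ∈ q, z ⊆ κ → z ∈ p) ∧ ∃ α ∈ v 0, ∃ f ∈ g2, InjFun f p α) :=
    SD.ex (P := fun S v q => ∃ g1 ∈ S, ∃ g2 ∈ S,
      (∀ y ∈ S, y ⊆ v 0 → y ∈ q) ∧ ∀ κ ∈ v 0, ∃ p ∈ g1, (∀ z ∈ p, z ⊆ κ) ∧
      (∀ z ∈ q, z ⊆ κ → z ∈ p) ∧ ∃ α ∈ v 0, ∃ f ∈ g2, InjFun f p α)
    (SD.ex (P := fun S v g1 => ∃ g2 ∈ S,
      (∀ y ∈ S, y ⊆ v 0 → y ∈ v 1) ∧ ∀ κ ∈ v 0, ∃ p ∈ g1, (∀ z ∈ p, z ⊆ κ) ∧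
      (∀ z ∈ v 1, z ⊆ κ → z ∈ p) ∧ ∃ α ∈ v 0, ∃ f ∈ g2, InjFun f p α)
    (SD.ex (P := fun S v g2 =>
      (∀ y ∈ S, y ⊆ v 0 → y ∈ v 1) ∧ ∀ κ ∈ v 0, ∃ p ∈ v 2, (∀ z ∈ p, z ⊆ κ) ∧
      (∀ z ∈ v 1, z ⊆ κ → z ∈ p) ∧ ∃ α ∈ v 0, ∃ f ∈ g2, InjFun f p α)
    ((PD.all (k := 0) (P := fun S v y => y ⊆ v 0 → y ∈ v 1)
      (((D0.sub (.idx 4) (.idx 0)).imp (D0.mem (.idx 4) (.idx 1))).pd 1)).and (hD.pd 1)).sd))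
  have h2 : SD 2 (fun S (v : Fin 1 → ZFSet) => ZFSet.omega ∈ v 0) :=
    ((D0.bex (.idx 0) (P := fun v x => x = ZFSet.omega) (D0.isOm (.idx 1))).sd 2).congr
      fun S hS v hv => by simp
  refine (SD.card.sd.and (h2.and h1)).congr fun S hS v hv => ?_
  unfold StrongLimitIn
  refine and_congr_right fun hc => and_congr_right fun ho => ?_
  have hμ := hv 0
  generalize v 0 = μ at *
  have htr : ∀ κ ∈ μ, κ ⊆ μ := fun κ hκ => hc.1.isTransitive κ hκ
  constructor
  · rintro ⟨q, hq, g1, hg1, g2, hg2, H1, H2⟩ κ hκ p hp hps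
    obtain ⟨p', hp', h1, h2, α, hα, f, hf, hi⟩ := H2 κ hκ
    have : p = p' := by
      ext z
      rw [hps]
      constructor
      · rintro ⟨hz, hzκ⟩
        exact h2 z (H1 z hz (fun t ht => htr κ hκ (hzκ ht))) hzκ
      · intro hz
        exact ⟨hS.tr _ (hS.tr _ hg1 _ hp') _ hz, h1 z hz⟩
    subst this
    exact ⟨α, hα, f, hS.tr _ hg2 _ hf, hi⟩
  · intro H
    obtain ⟨q, hq, hqm⟩ := hS.pow hμ
    obtain ⟨g1, hg1, hg1m⟩ := hS.pow hq
    obtain ⟨g2, hg2, hg2m⟩ := hS.pow (hS.prod hq hμ)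
    refine ⟨q, hq, g1, hg1, g2, hg2, fun y hy h => (hqm y).2 ⟨hy, h⟩, fun κ hκ => ?_⟩
    obtain ⟨p, hp, hpm⟩ := hS.pow (hS.tr _ hμ _ hκ)
    obtain ⟨α, hα, f, hf, hi⟩ := H κ hκ p hp hpm
    have hpq : p ⊆ q := fun z hz => by
      obtain ⟨h1, h2⟩ := (hpm z).1 hz
      exact (hqm z).2 ⟨h1, fun t ht => htr κ hκ (h2 ht)⟩
    refine ⟨p, (hg1m p).2 ⟨hp, hpq⟩, fun z hz => ((hpm z).1 hz).2, fun z hz hzκ => 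
      (hpm z).2 ⟨hS.tr _ hq _ hz, hzκ⟩, α, hα, f, (hg2m f).2 ⟨hf, fun t ht => ?_⟩, hi⟩
    have := hi.1.1 ht
    rw [ZFSet.mem_prod] at this ⊢
    obtain ⟨a, ha, b, hb, rfl⟩ := this
    exact ⟨a, hpq ha, b, htr α hα hb, rfl⟩

open FirstOrder FirstOrder.Language
set_option linter.unusedVariables false

theorem SurjFun.fn {f a b x y y' : ZFSet.{u}} (h : SurjFun f a b) (h1 : ZFSet.pair x y ∈ f)
    (h2 : ZFSet.pair x y' ∈ f) : y = y' :=
  (h.1.2 x (ZFSet.pair_mem_prod.1 (h.1.1 h1)).1).unique h1 h2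
theorem SurjFun.dom {f a b x y : ZFSet.{u}} (h : SurjFun f a b) (h1 : ZFSet.pair x y ∈ f) :
    x ∈ a ∧ y ∈ b := ZFSet.pair_mem_prod.1 (h.1.1 h1)

theorem hin_iff {S : Set ZFSet.{u}} (hS : IsInnerModel S) {μ : ZFSet.{u}} (h0 : ∅ ∈ μ)
    {x : ZFSet.{u}} : x ∈ HIn S μ ↔ x ∈ S ∧ ∃ t ∈ S, x ⊆ t ∧ t.IsTransitive ∧ ∃ κ ∈ μ,
      ∃ f ∈ S, SurjFun f κ t := by
  unfold HIn
  constructor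
  · rintro ⟨hx, t, ht, ⟨h1, h2, _⟩, κ, hκ, f, hf, hs⟩
    exact ⟨hx, t, ht, h1, h2, κ, hκ, f, hf, hs⟩
  · rintro ⟨hx, t, ht, h1, h2, κ, hκ, f, hf, hs⟩
    obtain ⟨t', ht', hc⟩ := hS.trcl x hx
    have hsub : t' ⊆ t := hc.2.2 t h1 h2
    refine ⟨hx, t', ht', hc, ?_⟩
    rcases ZFSet.eq_empty_or_nonempty t' with rfl | ⟨d, hd⟩
    · refine ⟨∅, h0, ∅, hS.emp, ⟨?_, ?_⟩, ?_⟩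
      · intro z hz; simp at hz
      · intro z hz; simp at hz
      · intro z hz; simp at hz
    · have hκS : κ ∈ S := hS.1.1.1 _ (by
        obtain ⟨y, hy, hp⟩ := hs.2 d (hsub hd)
        exact hS.sing (x := κ) (by
          -- κ is the domain of f
          obtain ⟨b, hb, hbm⟩ := hS.sep1 (R := fun S f a => ∃ y ∈ S, ZFSet.pair a y ∈ f)
            (UD.ex (P := fun S v y => ZFSet.pair (v 1) y ∈ v 0)
              (D0.pairMem (.idx 0) (.idx 1) (.idx 2)).ud) hf (hS.sU (hS.sU hf))
          have : b = κ := by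
            ext a
            rw [hbm]
            constructor
            · rintro ⟨_, y, _, hy⟩; exact (hs.dom hy).1
            · intro ha
              obtain ⟨y, hy, _⟩ := hs.1.2 a ha
              refine ⟨?_, y, (hS.memPair hf hy).2, hy⟩
              simp only [ZFSet.mem_sUnion]
              exact ⟨{a, y}, ⟨_, hy, by simp [ZFSet.pair]⟩, by simp⟩
          rwa [← this])) _ (by simp : κ ∈ ({κ} : ZFSet))
      obtain ⟨g, hg, hgm⟩ := hS.sep3 (R := fun S f d t' p => ∃ a ∈ S, ∃ y ∈ S, p = ZFSet.pair a y ∧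
          (ZFSet.pair a y ∈ f ∨ (y = d ∧ ∀ z ∈ t', ZFSet.pair a z ∉ f)))
        (UD.ex (P := fun S v a => ∃ y ∈ S, v 3 = ZFSet.pair a y ∧
          (ZFSet.pair a y ∈ v 0 ∨ (y = v 1 ∧ ∀ z ∈ v 2, ZFSet.pair a z ∉ v 0)))
         (UD.ex (P := fun S v y => v 3 = ZFSet.pair (v 4) y ∧
          (ZFSet.pair (v 4) y ∈ v 0 ∨ (y = v 1 ∧ ∀ z ∈ v 2, ZFSet.pair (v 4) z ∉ v 0)))
          ((D0.isOPair (.idx 3) (.idx 4) (.idx 5)).and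
           ((D0.pairMem (.idx 0) (.idx 4) (.idx 5)).or ((D0.eq (.idx 5) (.idx 1)).and
            (D0.ball (.idx 2) (P := fun v z => ZFSet.pair (v 4) z ∉ v 0)
             (D0.pairMem (.idx 0) (.idx 4) (.idx 6)).not)))).ud))
        hf (hS.tr _ ht' _ hd) ht' (hS.prod hκS ht')
      have hgp : ∀ a y, ZFSet.pair a y ∈ g ↔ (a ∈ κ ∧ y ∈ t') ∧
          (ZFSet.pair a y ∈ f ∨ (y = d ∧ ∀ z ∈ t', ZFSet.pair a z ∉ f)) := by
        intro a y
        rw [hgm, ZFSet.pair_mem_prod]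
        refine and_congr_right fun hay => ?_
        constructor
        · rintro ⟨a', _, y', _, he, h⟩
          obtain ⟨rfl, rfl⟩ := ZFSet.pair_injective he
          exact h
        · intro h
          exact ⟨a, hS.tr _ hκS _ hay.1, y, hS.tr _ ht' _ hay.2, rfl, h⟩
      refine ⟨κ, hκ, g, hg, ⟨fun p hp => ((hgm p).1 hp).1, fun a ha => ?_⟩, fun y hy => ?_⟩
      · by_cases h : ∃ z ∈ t', ZFSet.pair a z ∈ f
        · obtain ⟨z, hz, hp⟩ := h
          refine ⟨z, (hgp _ _).2 ⟨⟨ha, hz⟩, Or.inl hp⟩, fun z' hz' => ?_⟩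
          rcases ((hgp _ _).1 hz').2 with h | ⟨rfl, h⟩
          · exact hs.fn h hp
          · exact absurd hp (h z hz)
        · push Not at h
          refine ⟨d, (hgp _ _).2 ⟨⟨ha, hd⟩, Or.inr ⟨rfl, h⟩⟩, fun z' hz' => ?_⟩
          obtain ⟨⟨_, h2⟩, h3⟩ := (hgp _ _).1 hz'
          rcases h3 with h3 | ⟨rfl, _⟩
          · exact absurd h3 (h _ h2)
          · rfl
      · obtain ⟨a, ha, hp⟩ := hs.2 y (hsub hy)
        exact ⟨a, ha, (hgp _ _).2 ⟨⟨ha, hy⟩, Or.inl hp⟩⟩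

def Cd (c1 c2 κ x t f : ZFSet.{u}) : Prop :=
  x ⊆ t ∧ t.IsTransitive ∧ SurjFun f κ t ∧
  (∀ α ∈ κ, ∀ β ∈ κ, (ZFSet.pair α β ∈ c1 ↔ ∃ y ∈ t, ∃ z ∈ t, ZFSet.pair α y ∈ f ∧
    ZFSet.pair β z ∈ f ∧ y ∈ z)) ∧
  (∀ α ∈ κ, (α ∈ c2 ↔ ∃ y ∈ x, ZFSet.pair α y ∈ f))

theorem Cd.le {c1 c2 κ x t f x' t' f' : ZFSet.{u}} (h : Cd c1 c2 κ x t f)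
    (h' : Cd c1 c2 κ x' t' f') : x ⊆ x' := by
  obtain ⟨h1, h2, h3, h4, h5⟩ := h
  obtain ⟨h1', h2', h3', h4', h5'⟩ := h'
  have key : ∀ y α, ZFSet.pair α y ∈ f → ZFSet.pair α y ∈ f' := by
    intro y
    induction y using ZFSet.inductionOn with
    | h y ih => 
    intro α hp
    obtain ⟨hα, hy⟩ := h3.dom hp
    obtain ⟨y', hy', _⟩ := h3'.1.2 α hα
    have : y = y' := by
      ext z
      constructor
      · intro hz
        have hzt := h2 y hy hz
        obtain ⟨β, hβ, hpz⟩ := h3.2 z hzt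
        have hc := (h4 β hβ α hα).2 ⟨z, hzt, y, hy, hpz, hp, hz⟩
        obtain ⟨z1, _, y1, _, e1, e2, e3⟩ := (h4' β hβ α hα).1 hc
        rw [h3'.fn e2 hy', h3'.fn e1 (ih z hz β hpz)] at e3
        exact e3
      · intro hz
        have hyt' := (h3'.dom hy').2
        have hzt := h2' y' hyt' hz
        obtain ⟨β, hβ, hpz⟩ := h3'.2 z hzt
        have hc := (h4' β hβ α hα).2 ⟨z, hzt, y', hyt', hpz, hy', hz⟩
        obtain ⟨z1, _, y1, _, e1, e2, e3⟩ := (h4 β hβ α hα).1 hc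
        rw [h3.fn e2 hp] at e3
        rw [h3'.fn hpz (ih z1 e3 β e1)]
        exact e3
    rwa [this]
  intro z hz
  obtain ⟨β, hβ, hpz⟩ := h3.2 z (h1 hz)
  obtain ⟨z', hz', hp'⟩ := (h5' β hβ).1 ((h5 β hβ).2 ⟨z, hz, hpz⟩)
  rwa [h3'.fn (key _ _ hpz) hp']

theorem D0.cd : D0 (fun v : Fin 6 → ZFSet.{u} => Cd (v 0) (v 1) (v 2) (v 3) (v 4) (v 5)) := by
  have a1 : D0 (fun v : Fin 9 → ZFSet.{u} => ∃ z ∈ v 4,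
      ZFSet.pair (v 6) (v 8) ∈ v 5 ∧ ZFSet.pair (v 7) z ∈ v 5 ∧ v 8 ∈ z) :=
    D0.bex (.idx 4) (P := fun v z =>
      ZFSet.pair (v 6) (v 8) ∈ v 5 ∧ ZFSet.pair (v 7) z ∈ v 5 ∧ v 8 ∈ z)
      ((D0.pairMem (.idx 5) (.idx 6) (.idx 8)).and ((D0.pairMem (.idx 5) (.idx 7) (.idx 9)).and
          (D0.mem (.idx 8) (.idx 9))))
  have a2 : D0 (fun v : Fin 8 → ZFSet.{u} => ∃ y ∈ v 4, ∃ z ∈ v 4,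
      ZFSet.pair (v 6) y ∈ v 5 ∧ ZFSet.pair (v 7) z ∈ v 5 ∧ y ∈ z) :=
    D0.bex (.idx 4) (P := fun v y => ∃ z ∈ v 4,
      ZFSet.pair (v 6) y ∈ v 5 ∧ ZFSet.pair (v 7) z ∈ v 5 ∧ y ∈ z) a1
  have a3 : D0 (fun v : Fin 8 → ZFSet.{u} => (ZFSet.pair (v 6) (v 7) ∈ v 0 ↔ ∃ y ∈ v 4, ∃ z ∈ v 4,
      ZFSet.pair (v 6) y ∈ v 5 ∧ ZFSet.pair (v 7) z ∈ v 5 ∧ y ∈ z)) :=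
    (D0.pairMem (.idx 0) (.idx 6) (.idx 7)).iff a2
  have a4 : D0 (fun v : Fin 7 → ZFSet.{u} => ∀ β ∈ v 2, (ZFSet.pair (v 6) β ∈ v 0 ↔
      ∃ y ∈ v 4, ∃ z ∈ v 4, ZFSet.pair (v 6) y ∈ v 5 ∧ ZFSet.pair β z ∈ v 5 ∧ y ∈ z)) :=
    D0.ball (.idx 2) (P := fun v β => (ZFSet.pair (v 6) β ∈ v 0 ↔
      ∃ y ∈ v 4, ∃ z ∈ v 4, ZFSet.pair (v 6) y ∈ v 5 ∧ ZFSet.pair β z ∈ v 5 ∧ y ∈ z)) a3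
  have a5 : D0 (fun v : Fin 6 → ZFSet.{u} => ∀ α ∈ v 2, ∀ β ∈ v 2, (ZFSet.pair α β ∈ v 0 ↔
      ∃ y ∈ v 4, ∃ z ∈ v 4, ZFSet.pair α y ∈ v 5 ∧ ZFSet.pair β z ∈ v 5 ∧ y ∈ z)) :=
    D0.ball (.idx 2) (P := fun v α => ∀ β ∈ v 2, (ZFSet.pair α β ∈ v 0 ↔
      ∃ y ∈ v 4, ∃ z ∈ v 4, ZFSet.pair α y ∈ v 5 ∧ ZFSet.pair β z ∈ v 5 ∧ y ∈ z)) a4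
  have b1 : D0 (fun v : Fin 7 → ZFSet.{u} => (v 6 ∈ v 1 ↔ ∃ y ∈ v 3, ZFSet.pair (v 6) y ∈ v 5)) :=
    (D0.mem (.idx 6) (.idx 1)).iff (D0.bex (.idx 3) (P := fun v y => ZFSet.pair (v 6) y ∈ v 5)
      (D0.pairMem (.idx 5) (.idx 6) (.idx 7)))
  have b2 : D0 (fun v : Fin 6 → ZFSet.{u} => ∀ α ∈ v 2,
      (α ∈ v 1 ↔ ∃ y ∈ v 3, ZFSet.pair α y ∈ v 5)) :=
    D0.ball (.idx 2) (P := fun v α => (α ∈ v 1 ↔ ∃ y ∈ v 3, ZFSet.pair α y ∈ v 5)) b1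
  exact (D0.sub (.idx 3) (.idx 4)).and ((D0.transit (.idx 4)).and
   ((D0.surj (.idx 5) (.idx 2) (.idx 4)).and (a5.and b2)))

def Cde (S : Set ZFSet.{u}) (d x : ZFSet.{u}) : Prop :=
  ∃ c1 ∈ S, ∃ c2 ∈ S, ∃ κ ∈ S, ∃ e ∈ S, ∃ t ∈ S, ∃ f ∈ S, d = ZFSet.pair e κ ∧
    e = ZFSet.pair c1 c2 ∧ Cd c1 c2 κ x t f

theorem UD.cde : UD (fun S (v : Fin 2 → ZFSet) => Cde S (v 0) (v 1)) := by
  have h : UD (fun S (v : Fin 8 → ZFSet) => v 0 = ZFSet.pair (v 5) (v 4) ∧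
      v 5 = ZFSet.pair (v 2) (v 3) ∧ Cd (v 2) (v 3) (v 4) (v 1) (v 6) (v 7)) :=
    (D0.isOPair (.idx 0) (.idx 5) (.idx 4)).ud.and ((D0.isOPair (.idx 5) (.idx 2) (.idx 3)).ud.and
      (D0.cd.ud.sub (f := fun v : Fin 8 → ZFSet => ![v 2, v 3, v 4, v 1, v 6, v 7]) fun i => by
        fin_cases i <;> exact .idx _))
  have h := UD.ex (P := fun S v x => v 0 = ZFSet.pair (v 5) (v 4) ∧
      v 5 = ZFSet.pair (v 2) (v 3) ∧ Cd (v 2) (v 3) (v 4) (v 1) (v 6) x) h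
  have h := UD.ex (P := fun S v t => ∃ x ∈ S, v 0 = ZFSet.pair (v 5) (v 4) ∧
      v 5 = ZFSet.pair (v 2) (v 3) ∧ Cd (v 2) (v 3) (v 4) (v 1) t x) h
  have h := UD.ex (P := fun S v e => ∃ t ∈ S, ∃ x ∈ S, v 0 = ZFSet.pair e (v 4) ∧
      e = ZFSet.pair (v 2) (v 3) ∧ Cd (v 2) (v 3) (v 4) (v 1) t x) h
  have h := UD.ex (P := fun S v κ => ∃ e ∈ S, ∃ t ∈ S, ∃ x ∈ S, v 0 = ZFSet.pair e κ ∧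
      e = ZFSet.pair (v 2) (v 3) ∧ Cd (v 2) (v 3) κ (v 1) t x) h
  have h := UD.ex (P := fun S v c2 => ∃ κ ∈ S, ∃ e ∈ S, ∃ t ∈ S, ∃ x ∈ S, v 0 = ZFSet.pair e κ ∧
      e = ZFSet.pair (v 2) c2 ∧ Cd (v 2) c2 κ (v 1) t x) h
  exact UD.ex (P := fun S v c1 => ∃ c2 ∈ S, ∃ κ ∈ S, ∃ e ∈ S, ∃ t ∈ S, ∃ x ∈ S,
     v 0 = ZFSet.pair e κ ∧ e = ZFSet.pair c1 c2 ∧ Cd c1 c2 κ (v 1) t x) h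

theorem UD.c1 : UD (fun S (v : Fin 3 → ZFSet.{u}) => ∃ α ∈ S, ∃ β ∈ S, v 2 = ZFSet.pair α β ∧
        ∃ y ∈ v 0, ∃ z ∈ v 0, ZFSet.pair α y ∈ v 1 ∧ ZFSet.pair β z ∈ v 1 ∧ y ∈ z) := by
  have a1 : D0 (fun v : Fin 6 → ZFSet.{u} => ∃ z ∈ v 0, ZFSet.pair (v 3) (v 5) ∈ v 1 ∧
          ZFSet.pair (v 4) z ∈ v 1 ∧ v 5 ∈ z) :=
    (D0.bex (.idx 0) (P := fun v z => ZFSet.pair (v 3) (v 5) ∈ v 1 ∧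
          ZFSet.pair (v 4) z ∈ v 1 ∧ v 5 ∈ z)
          ((D0.pairMem (.idx 1) (.idx 3) (.idx 5)).and ((D0.pairMem (.idx 1) (.idx 4) (.idx 6)).and
          (D0.mem (.idx 5) (.idx 6)))))
  have a2 : D0 (fun v : Fin 5 → ZFSet.{u} => ∃ y ∈ v 0, ∃ z ∈ v 0, ZFSet.pair (v 3) y ∈ v 1 ∧
          ZFSet.pair (v 4) z ∈ v 1 ∧ y ∈ z) :=
    D0.bex (.idx 0) (P := fun v y => ∃ z ∈ v 0, ZFSet.pair (v 3) y ∈ v 1 ∧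
          ZFSet.pair (v 4) z ∈ v 1 ∧ y ∈ z) a1
  have a3 : UD (fun S (v : Fin 5 → ZFSet.{u}) => v 2 = ZFSet.pair (v 3) (v 4) ∧
      ∃ y ∈ v 0, ∃ z ∈ v 0, ZFSet.pair (v 3) y ∈ v 1 ∧
          ZFSet.pair (v 4) z ∈ v 1 ∧ y ∈ z) :=
    ((D0.isOPair (.idx 2) (.idx 3) (.idx 4)).and a2).ud
  have a4 := UD.ex (P := fun S v β => v 2 = ZFSet.pair (v 3) β ∧
        ∃ y ∈ v 0, ∃ z ∈ v 0, ZFSet.pair (v 3) y ∈ v 1 ∧ ZFSet.pair β z ∈ v 1 ∧ y ∈ z) a3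
  exact UD.ex (P := fun S v α => ∃ β ∈ S, v 2 = ZFSet.pair α β ∧
        ∃ y ∈ v 0, ∃ z ∈ v 0, ZFSet.pair α y ∈ v 1 ∧ ZFSet.pair β z ∈ v 1 ∧ y ∈ z) a4

theorem hin_set {S : Set ZFSet.{u}} (hS : IsInnerModel S) {μ : ZFSet.{u}} (h0 : ∅ ∈ μ)
    (ho : μ.IsOrdinal) : ∃ h ∈ S, ∀ x, x ∈ h ↔ x ∈ HIn S μ := by
  have hμ := hS.2 μ ho
  have htr : ∀ κ ∈ μ, κ ⊆ μ := fun κ hκ => ho.isTransitive κ hκ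
  obtain ⟨p1, hp1, hp1m⟩ := hS.pow (hS.prod hμ hμ)
  obtain ⟨p2, hp2, hp2m⟩ := hS.pow hμ
  obtain ⟨b, hb, hbm⟩ := hS.rep0 UD.cde (hS.prod (hS.prod hp1 hp2) hμ) (by
    rintro d hd x hx x' hx' ⟨c1, _, c2, _, κ, _, e, _, t, _, f, _, rfl, rfl, hC⟩
      ⟨c1', _, c2', _, κ', _, e', _, t', _, f', _, hdd, rfl, hC'⟩
    obtain ⟨he, rfl⟩ := ZFSet.pair_injective hdd
    obtain ⟨rfl, rfl⟩ := ZFSet.pair_injective he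
    ext z
    exact ⟨fun h => hC.le hC' h, fun h => hC'.le hC h⟩)
  have hsubb : ∀ x ∈ HIn S μ, x ∈ b := by
    intro x hx
    obtain ⟨hxS, t, ht, h1, h2, κ, hκ, f, hf, hs⟩ := (hin_iff hS h0).1 hx
    obtain ⟨c1, hc1, hc1m⟩ := hS.sep2 (R := fun S t f p => ∃ α ∈ S, ∃ β ∈ S, p = ZFSet.pair α β ∧
        ∃ y ∈ t, ∃ z ∈ t, ZFSet.pair α y ∈ f ∧ ZFSet.pair β z ∈ f ∧ y ∈ z)
      UD.c1 ht hf (hS.prod hμ hμ)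
    obtain ⟨c2, hc2, hc2m⟩ := hS.sep2 (R := fun S x f α => ∃ y ∈ x, ZFSet.pair α y ∈ f)
      (D0.bex (.idx 0) (P := fun v y => ZFSet.pair (v 2) y ∈ v 1)
        (D0.pairMem (.idx 1) (.idx 2) (.idx 3))).ud hxS hf hμ
    have hκS := hS.tr _ hμ _ hκ
    rw [hbm]
    refine ⟨ZFSet.pair (ZFSet.pair c1 c2) κ, ?_, hxS, c1, hc1, c2, hc2, κ, hκS, _, hS.pair hc1 hc2,
      t, ht, f, hf, rfl, rfl, h1, h2, hs, ?_, ?_⟩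
    · rw [ZFSet.pair_mem_prod, ZFSet.pair_mem_prod]
      exact ⟨⟨(hp1m _).2 ⟨hc1, fun p hp => ((hc1m p).1 hp).1⟩,
        (hp2m _).2 ⟨hc2, fun p hp => ((hc2m p).1 hp).1⟩⟩, hκ⟩
    · intro α hα β hβ
      rw [hc1m, ZFSet.pair_mem_prod]
      constructor
      · rintro ⟨_, α', _, β', _, he, h⟩
        obtain ⟨rfl, rfl⟩ := ZFSet.pair_injective he
        exact h
      · intro h
        exact ⟨⟨htr κ hκ hα, htr κ hκ hβ⟩, α, hS.tr _ hκS _ hα, β, hS.tr _ hκS _ hβ, rfl, h⟩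
    · intro α hα
      rw [hc2m]
      exact ⟨fun h => h.2, fun h => ⟨htr κ hκ hα, h⟩⟩
  -- separate
  obtain ⟨h, hh, hm⟩ := hS.sep1 (R := fun S μ x => ∃ t ∈ S, x ⊆ t ∧ t.IsTransitive ∧ ∃ κ ∈ μ,
      ∃ f ∈ S, SurjFun f κ t)
    (UD.ex (P := fun S v t => v 1 ⊆ t ∧ t.IsTransitive ∧ ∃ κ ∈ v 0, ∃ f ∈ S, SurjFun f κ t)
     ((D0.sub (.idx 1) (.idx 2)).ud.and ((D0.transit (.idx 2)).ud.and
      (UD.bex (.idx 0) (P := fun S v κ => ∃ f ∈ S, SurjFun f κ (v 2))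
       (UD.ex (P := fun S v f => SurjFun f (v 3) (v 2))
        (D0.surj (.idx 4) (.idx 3) (.idx 2)).ud))))) hμ hb
  refine ⟨h, hh, fun x => ?_⟩
  rw [hm, hin_iff hS h0]
  constructor
  · rintro ⟨h1, h2⟩; exact ⟨hS.tr _ hb _ h1, h2⟩
  · intro hx; exact ⟨hsubb x ((hin_iff hS h0).2 hx), hx.2⟩

def isH (S : Set ZFSet.{u}) (μ h : ZFSet.{u}) : Prop :=
  ∃ g3 ∈ S, ∃ g4 ∈ S,
    (∀ y ∈ h, ∃ t ∈ g3, y ⊆ t ∧ t.IsTransitive ∧ ∃ κ ∈ μ, ∃ f ∈ g4, SurjFun f κ t) ∧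
    (∀ y ∈ S, ∀ t ∈ S, ∀ f ∈ S, y ⊆ t → t.IsTransitive → (∃ κ ∈ μ, SurjFun f κ t) → y ∈ h)

theorem SD.isH : SD 2 (fun S (v : Fin 2 → ZFSet) => isH S (v 0) (v 1)) := by
  have h1 : D0 (fun v : Fin 4 → ZFSet => ∀ y ∈ v 1, ∃ t ∈ v 2, y ⊆ t ∧ t.IsTransitive ∧
      ∃ κ ∈ v 0, ∃ f ∈ v 3, SurjFun f κ t) :=
    D0.ball (.idx 1) (P := fun v y => ∃ t ∈ v 2, y ⊆ t ∧ t.IsTransitive ∧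
      ∃ κ ∈ v 0, ∃ f ∈ v 3, SurjFun f κ t)
    (D0.bex (.idx 2) (P := fun v t => v 4 ⊆ t ∧ t.IsTransitive ∧
      ∃ κ ∈ v 0, ∃ f ∈ v 3, SurjFun f κ t)
     ((D0.sub (.idx 4) (.idx 5)).and ((D0.transit (.idx 5)).and
      (D0.bex (.idx 0) (P := fun v κ => ∃ f ∈ v 3, SurjFun f κ (v 5))
       (D0.bex (.idx 3) (P := fun v f => SurjFun f (v 6) (v 5))
        (D0.surj (.idx 7) (.idx 6) (.idx 5)))))))
  have h2 : D0 (fun v : Fin 7 → ZFSet => v 4 ⊆ v 5 → (v 5).IsTransitive →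
      (∃ κ ∈ v 0, SurjFun (v 6) κ (v 5)) → v 4 ∈ v 1) :=
    (D0.sub (.idx 4) (.idx 5)).imp ((D0.transit (.idx 5)).imp
      ((D0.bex (.idx 0) (P := fun v κ => SurjFun (v 6) κ (v 5))
        (D0.surj (.idx 6) (.idx 7) (.idx 5))).imp (D0.mem (.idx 4) (.idx 1))))
  have h3 := PD.all (P := fun S v f => v 4 ⊆ v 5 → (v 5).IsTransitive →
      (∃ κ ∈ v 0, SurjFun f κ (v 5)) → v 4 ∈ v 1) (h2.pd 1)
  have h3 := PD.all (P := fun S v t => ∀ f ∈ S, v 4 ⊆ t → t.IsTransitive →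
      (∃ κ ∈ v 0, SurjFun f κ t) → v 4 ∈ v 1) h3
  have h3 := PD.all (P := fun S v y => ∀ t ∈ S, ∀ f ∈ S, y ⊆ t → t.IsTransitive →
      (∃ κ ∈ v 0, SurjFun f κ t) → y ∈ v 1) h3
  have h4 := ((h1.pd 1).and h3).sd
  have h4 := SD.ex (P := fun S v g4 => (∀ y ∈ v 1, ∃ t ∈ v 2, y ⊆ t ∧ t.IsTransitive ∧
      ∃ κ ∈ v 0, ∃ f ∈ g4, SurjFun f κ t) ∧ (∀ y ∈ S, ∀ t ∈ S, ∀ f ∈ S, y ⊆ t →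
      t.IsTransitive → (∃ κ ∈ v 0, SurjFun f κ t) → y ∈ v 1)) h4
  exact SD.ex (P := fun S v g3 => ∃ g4 ∈ S, (∀ y ∈ v 1, ∃ t ∈ g3, y ⊆ t ∧ t.IsTransitive ∧
      ∃ κ ∈ v 0, ∃ f ∈ g4, SurjFun f κ t) ∧ (∀ y ∈ S, ∀ t ∈ S, ∀ f ∈ S, y ⊆ t →
      t.IsTransitive → (∃ κ ∈ v 0, SurjFun f κ t) → y ∈ v 1)) h4

theorem isH_iff {S : Set ZFSet.{u}} (hS : IsInnerModel S) {μ h : ZFSet.{u}} (h0 : ∅ ∈ μ)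
    (ho : μ.IsOrdinal) (hh : h ∈ S) : isH S μ h ↔ {x | x ∈ h} = HIn S μ := by
  have hμ := hS.2 μ ho
  have htr : ∀ κ ∈ μ, κ ⊆ μ := fun κ hκ => ho.isTransitive κ hκ
  constructor
  · rintro ⟨g3, hg3, g4, hg4, H1, H2⟩
    ext y
    rw [hin_iff hS h0, Set.mem_ofPred_eq]
    constructor
    · intro hy
      obtain ⟨t, ht, h1, h2, κ, hκ, f, hf, hs⟩ := H1 y hy
      exact ⟨hS.tr _ hh _ hy, t, hS.tr _ hg3 _ ht, h1, h2, κ, hκ, f, hS.tr _ hg4 _ hf, hs⟩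
    · rintro ⟨hy, t, ht, h1, h2, κ, hκ, f, hf, hs⟩
      exact H2 y hy t ht f hf h1 h2 ⟨κ, hκ, hs⟩
  · intro H
    have hm : ∀ y, y ∈ h ↔ y ∈ HIn S μ := fun y => by rw [← H]; rfl
    obtain ⟨g3, hg3, hg3m⟩ := hS.pow hh
    obtain ⟨g4, hg4, hg4m⟩ := hS.pow (hS.prod hμ hh)
    refine ⟨g3, hg3, g4, hg4, fun y hy => ?_, fun y hy t ht f hf h1 h2 ⟨κ, hκ, hs⟩ => ?_⟩
    · obtain ⟨_, t, ht, h1, h2, κ, hκ, f, hf, hs⟩ := (hin_iff hS h0).1 ((hm y).1 hy)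
      have hth : t ⊆ h := fun z hz => by
        rw [hm, hin_iff hS h0]
        exact ⟨hS.tr _ ht _ hz, t, ht, h2 z hz, h2, κ, hκ, f, hf, hs⟩
      refine ⟨t, (hg3m t).2 ⟨ht, hth⟩, h1, h2, κ, hκ, f, (hg4m f).2 ⟨hf, fun p hp => ?_⟩, hs⟩
      have := hs.1.1 hp
      rw [ZFSet.mem_prod] at this ⊢
      obtain ⟨a, ha, b, hb, rfl⟩ := this
      exact ⟨a, htr κ hκ ha, b, hth hb, rfl⟩
    · rw [hm, hin_iff hS h0]
      exact ⟨hy, t, ht, h1, h2, κ, hκ, f, hf, hs⟩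

theorem SD.loc (θ : BF 1) : SD 2 (fun S (v : Fin 1 → ZFSet.{u}) => v 0 ∈ locClass S θ) := by
  have h1 : SD 2 (fun S (v : Fin 3 → ZFSet.{u}) => StrongLimitIn S (v 1)) :=
    SD.slim.sub (f := fun v : Fin 3 → ZFSet.{u} => ![v 1]) fun i => by fin_cases i; exact .idx 1
  have h2 : SD 2 (fun S (v : Fin 3 → ZFSet.{u}) => _root_.isH S (v 1) (v 2)) :=
    SD.isH.sub (f := fun v : Fin 3 → ZFSet.{u} => ![v 1, v 2]) fun i => by
      fin_cases i <;> exact .idx _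
  have h3 : D0 (fun (v : Fin 3 → ZFSet.{u}) => ZSat {x | x ∈ v 2} θ ![v 0]) :=
    ⟨relb ![0] 2 θ, relb_delta0 _ _ _, fun S hS v hv => by
      rw [ZSat_relb hS _ _ _ _ (hv 2)]
      have : v ∘ ![0] = ![v 0] := by funext i; fin_cases i; rfl
      rw [this]⟩
  have h4 := h1.and (h2.and (((D0.mem (.idx 0) (.idx 2)).and h3).sd 2))
  have h4 := SD.ex (P := fun S v h => StrongLimitIn S (v 1) ∧ _root_.isH S (v 1) h ∧
    v 0 ∈ h ∧ ZSat {x | x ∈ h} θ ![v 0]) h4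
  have h4 := SD.ex (P := fun S v μ => ∃ h ∈ S, StrongLimitIn S μ ∧ _root_.isH S μ h ∧
    v 0 ∈ h ∧ ZSat {x | x ∈ h} θ ![v 0]) h4
  refine h4.congr fun S hS v hv => ?_
  unfold locClass
  simp only [Set.mem_ofPred_eq]
  have hz : ∀ μ, StrongLimitIn S μ → ∅ ∈ μ := fun μ h =>
    h.1.1.isTransitive _ h.2.1 ZFSet.omega_zero
  constructor
  · rintro ⟨μ, hμ, h, hh, hs, hH, hx, hsat⟩
    rw [isH_iff hS (hz μ hs) hs.1.1 hh] at hH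
    refine ⟨μ, hμ, hs, ?_, ?_⟩
    · rw [← hH]; exact hx
    · rw [← hH]; exact hsat
  · rintro ⟨μ, hμ, hs, hx, hsat⟩
    obtain ⟨h, hh, hm⟩ := hin_set hS (hz μ hs) hs.1.1
    have e : {x | x ∈ h} = HIn S μ := Set.ext hm
    refine ⟨μ, hμ, h, hh, hs, (isH_iff hS (hz μ hs) hs.1.1 hh).2 e, (hm _).2 hx, ?_⟩
    rw [e]; exact hsat

theorem loc_formula (θ : BF 1) : ∃ γ : BF 1, LevySigma 2 γ ∧ ∀ S : Set ZFSet.{u}, IsInnerModel S →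
    {x | x ∈ S ∧ ZSat S γ ![x]} = locClass S θ := by
  obtain ⟨γ, h, e⟩ := SD.loc.{u} θ
  refine ⟨γ, h, fun S hS => ?_⟩
  ext x
  constructor
  · rintro ⟨hx, hs⟩
    exact (e S hS ![x] (by simpa using hx)).1 hs
  · intro hx
    have hxS : x ∈ S := by
      obtain ⟨μ, _, _, h, _⟩ := hx
      exact h.1
    exact ⟨hxS, (e S hS ![x] (by simpa using hxS)).2 hx⟩

open FirstOrder FirstOrder.Language
set_option linter.unusedVariables false

theorem SD.code {k : ℕ} {ψ : BF 3} (h : LevySigma (k+1) ψ) (c : ℕ) :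
    SD (k+1) (fun (S : Set ZFSet.{u}) (v : Fin 2 → ZFSet.{u}) => ZSat S ψ ![natZ c, v 0, v 1]) := by
  have h0 : SD (k+1) (fun (S : Set ZFSet.{u}) (v : Fin 3 → ZFSet.{u}) => ZSat S ψ v) :=
    ⟨ψ, h, fun _ _ _ _ => Iff.rfl⟩
  have h1 : SD (k+1) (fun (S : Set ZFSet.{u}) (w : Fin 3 → ZFSet.{u}) =>
      ZSat S ψ ![w (Fin.last 2), Fin.init w 0, Fin.init w 1]) :=
    h0.sub (f := fun w : Fin 3 → ZFSet.{u} => ![w (Fin.last 2), Fin.init w 0, Fin.init w 1])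
      (fun i => by
        fin_cases i
        · exact ⟨2, fun _ => rfl⟩
        · exact ⟨0, fun _ => rfl⟩
        · exact ⟨1, fun _ => rfl⟩)
  have h2 : SD (k+1) (fun (S : Set ZFSet.{u}) (w : Fin 3 → ZFSet.{u}) => w (Fin.last 2) = natZ c) :=
    (D0.isNat c (Var.last)).sd (k+1)
  have h3 := SD.ex (n := 2) (P := fun (S : Set ZFSet.{u}) (v : Fin 2 → ZFSet.{u}) u =>
    u = natZ c ∧ ZSat S ψ ![u, v 0, v 1]) (h2.and h1)
  refine h3.congr fun S hS v hv => ?_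
  constructor
  · rintro ⟨u, _, rfl, h⟩; exact h
  · intro h; exact ⟨_, hS.nat c, rfl, h⟩

theorem SD.comp2 {k : ℕ} {P Q : Set ZFSet.{u} → ZFSet.{u} → ZFSet.{u} → Prop}
    (hP : SD (k+1) (fun S (v : Fin 2 → ZFSet.{u}) => P S (v 0) (v 1)))
    (hQ : SD (k+1) (fun S (v : Fin 2 → ZFSet.{u}) => Q S (v 0) (v 1))) :
    SD (k+1) (fun S (v : Fin 2 → ZFSet.{u}) => ∃ z ∈ S, P S (v 0) z ∧ Q S z (v 1)) := by
  have h1 : SD (k+1) (fun (S : Set ZFSet.{u}) (w : Fin 3 → ZFSet.{u}) =>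
      P S (Fin.init w 0) (w (Fin.last 2))) :=
    hP.sub (f := fun w : Fin 3 → ZFSet.{u} => ![Fin.init w 0, w (Fin.last 2)])
      (fun i => by
        fin_cases i
        · exact ⟨0, fun _ => rfl⟩
        · exact ⟨2, fun _ => rfl⟩)
  have h2 : SD (k+1) (fun (S : Set ZFSet.{u}) (w : Fin 3 → ZFSet.{u}) =>
      Q S (w (Fin.last 2)) (Fin.init w 1)) :=
    hQ.sub (f := fun w : Fin 3 → ZFSet.{u} => ![w (Fin.last 2), Fin.init w 1])
      (fun i => by
        fin_cases i
        · exact ⟨2, fun _ => rfl⟩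
        · exact ⟨1, fun _ => rfl⟩)
  exact SD.ex (n := 2) (P := fun (S : Set ZFSet.{u}) (v : Fin 2 → ZFSet.{u}) z =>
    P S (v 0) z ∧ Q S z (v 1)) (h1.and h2)

theorem elem_surj_eq {A B : Set ZFSet.{u}} {f : ZFSet.{u} → ZFSet.{u}} (hA : IsInnerModel A)
    (hB : IsInnerModel B) (hf : IsElem A B f) (hs : ∀ y ∈ B, ∃ x ∈ A, f x = y) : B = A := by
  have hid : ∀ x : ZFSet.{u}, x ∈ A → f x = x := by
    intro x
    induction x using ZFSet.inductionOn with
    | _ x ih =>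
      intro hx
      ext z
      constructor
      · intro hz
        obtain ⟨w, hw, rfl⟩ := hs z (hB.tr _ (hf.1 x hx) z hz)
        have hwx := (hf.mem hw hx).2 hz
        rwa [ih w hwx hw]
      · intro hz
        have hzA := hA.tr x hx z hz
        have := (hf.mem hzA hx).1 hz
        rwa [ih z hz hzA] at this
  ext y
  constructor
  · intro hy
    obtain ⟨x, hx, rfl⟩ := hs y hy
    rwa [hid x hx]
  · intro hy
    rw [← hid y hy]; exact hf.1 y hy

theorem unique_main (n : ℕ) (hn : 1 ≤ n)
    (θT : setL.Sentence)
    (hT : THolds θT (Set.univ : Set ZFSet.{u}))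
    (code : setL.BoundedFormula Empty 1 → ℕ)
    (M N : Set ZFSet.{u}) 
    (hM : SigmaResemblesCore.{u} n θT code M) (hN : SigmaResemblesCore.{u} n θT code N)
    (hrig : SigmaRigid n M) :
    M = N := by
  obtain ⟨k, rfl⟩ : ∃ k, n = k + 1 := ⟨n - 1, by omega⟩
  have hU : IsInnerModel (Set.univ : Set ZFSet.{u}) := ⟨hT.1, fun _ _ => trivial⟩
  have hTS : ∀ S : Set ZFSet.{u}, IsInnerModel S → THolds θT S :=
    fun S hS => ⟨hS.1, fun A _ h => hT.2 A trivial h⟩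
  obtain ⟨θ, ψ, hψ, hθ, hMe, HM⟩ := hM
  obtain ⟨θ', ψ', hψ', hθ', hNe, HN⟩ := hN
  obtain ⟨γ, hγ, eγ⟩ := loc_formula.{u} θ
  obtain ⟨γ', hγ', eγ'⟩ := loc_formula.{u} θ'
  have hj : ∀ S : Set ZFSet.{u}, ∃ j : ZFSet.{u} → ZFSet.{u}, IsInnerModel S →
      IsElem (locClass S θ) (locClass (locClass S θ') θ) j ∧
      ∀ x y : ZFSet.{u}, ((x ∈ locClass S θ ∧ j x = y) ↔ ZSat S ψ ![natZ (code γ'), x, y]) := by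
    intro S
    by_cases hS : IsInnerModel S
    · have := (HM S hS (hTS S hS)).2.2 γ' hγ'
      rw [eγ' S hS] at this
      obtain ⟨j, hj⟩ := this (hθ'.1 S hS (hTS S hS)).1 (hθ'.2 S hS (hTS S hS))
      exact ⟨j, fun _ => hj⟩
    · exact ⟨id, fun h => absurd h hS⟩
  have hi : ∀ S : Set ZFSet.{u}, ∃ j : ZFSet.{u} → ZFSet.{u}, IsInnerModel S →
      IsElem (locClass S θ') (locClass (locClass S θ) θ') j ∧
      ∀ x y : ZFSet.{u}, ((x ∈ locClass S θ' ∧ j x = y) ↔ ZSat S ψ' ![natZ (code γ), x, y]) := by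
    intro S
    by_cases hS : IsInnerModel S
    · have := (HN S hS (hTS S hS)).2.2 γ hγ
      rw [eγ S hS] at this
      obtain ⟨j, hj⟩ := this (hθ.1 S hS (hTS S hS)).1 (hθ.2 S hS (hTS S hS))
      exact ⟨j, fun _ => hj⟩
    · exact ⟨id, fun h => absurd h hS⟩
  choose j hj using hj
  choose i hi using hi
  have jS : SD (k+1) (fun S (v : Fin 2 → ZFSet.{u}) => v 0 ∈ locClass S θ ∧ j S (v 0) = v 1) :=
    (SD.code hψ (code γ')).congr fun S hS v hv => ((hj S hS).2 _ _).symm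
  have iS : SD (k+1) (fun S (v : Fin 2 → ZFSet.{u}) => v 0 ∈ locClass S θ' ∧ i S (v 0) = v 1) :=
    (SD.code hψ' (code γ)).congr fun S hS v hv => ((hi S hS).2 _ _).symm
  have H : CoreHyp (fun S => locClass S θ) (fun S => locClass S θ') j i :=
    { hF := ⟨(SD.loc θ).ud, fun S hS => (hθ.1 S hS (hTS S hS)).1.1,
        fun S hS => (hθ.1 S hS (hTS S hS)).1.2⟩
      hG := ⟨(SD.loc θ').ud, fun S hS => (hθ'.1 S hS (hTS S hS)).1.1,
        fun S hS => (hθ'.1 S hS (hTS S hS)).1.2⟩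
      FF := fun S hS => (HM S hS (hTS S hS)).2.1
      GG := fun S hS => (HN S hS (hTS S hS)).2.1
      FH := fun S hS => (HM S hS (hTS S hS)).1
      GH := fun S hS => (HN S hS (hTS S hS)).1
      jE := fun S hS => (hj S hS).1
      iE := fun S hS => (hi S hS).1
      jU := jS.ud
      iU := iS.ud }
  have hMi : IsInnerModel M := hMe ▸ H.hF.inn _ hU
  have hNi : IsInnerModel N := hNe ▸ H.hG.inn _ hU
  have hFM : locClass M θ = M := by rw [hMe]; exact H.FF _ hU
  have hGM : locClass M θ' = M := H.core hMi hFM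
  have hiE : IsElem N M (i Set.univ) := by
    have := (hi _ hU).1
    rwa [← hMe, ← hNe, hGM] at this
  have hall : UD (fun (S : Set ZFSet.{u}) (v : Fin 0 → ZFSet.{u}) => ∀ x ∈ S, x ∈ locClass S θ) :=
    UD.all (P := fun S v x => x ∈ locClass S θ)
      (UD.sub1 (R := fun S x => x ∈ locClass S θ) (SD.loc θ).ud Var.last)
  have hFN : locClass N θ = N := by
    refine Set.Subset.antisymm (H.hF.sub N hNi) ?_
    refine (hall.trans hNi hMi hiE (v := finZeroElim) (fun i => i.elim0)).2 ?_
    intro x hx; rwa [hFM]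
  have hjE : IsElem M N (j Set.univ) := by
    have := (hj _ hU).1
    rwa [← hMe, ← hNe, hFN] at this
  have hcE : IsElem M M (fun x => i Set.univ (j Set.univ x)) := hjE.comp hiE
  obtain ⟨δ, hδ, eδ⟩ := SD.comp2 (P := fun S x y => x ∈ locClass S θ ∧ j S x = y)
    (Q := fun S x y => x ∈ locClass S θ' ∧ i S x = y) jS iS
  have hid : ∀ x ∈ M, i Set.univ (j Set.univ x) = x := by
    by_contra hc
    push Not at hc
    refine hrig ⟨_, δ, hδ, fun x y => ?_, hcE, hc⟩
    rw [eδ _ hU ![x, y] (fun _ => trivial)]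
    simp only [← hMe, ← hNe]
    constructor
    · rintro ⟨hx, hy⟩
      exact ⟨_, trivial, ⟨hx, rfl⟩, hjE.1 x hx, hy⟩
    · rintro ⟨z, _, ⟨hx, rfl⟩, _, hy⟩
      exact ⟨hx, hy⟩
  exact elem_surj_eq hNi hMi hiE fun y hy => ⟨_, hjE.1 y hy, hid y hy⟩

/-- Let `n ≥ 1` and let `T = ZFC + "∀ set of ordinals A, L[A] ⊨ θT"` be a
nice extension of ZFC.  Assume `T` (holds in `V`).  Suppose `M` and `N` are inner models
each of which Σ_n-resembles the core model over `T`, and `M` is Σ_n-rigid.  Then `M = N`. -/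
theorem core_model_uniqueness (n : ℕ) (hn : 1 ≤ n)
    (θT : setL.Sentence) (hθT : LevyPi 2 θT)
    (hT : THolds θT (Set.univ : Set ZFSet.{u}))
    (code : setL.BoundedFormula Empty 1 → ℕ) (hcode : Function.Injective code)
    (M N : Set ZFSet.{u}) (hMi : IsInnerModel M) (hNi : IsInnerModel N)
    (hM : SigmaResemblesCore.{u} n θT code M) (hN : SigmaResemblesCore.{u} n θT code N)
    (hrig : SigmaRigid n M) :
    M = N := by
  exact unique_main n hn θT hT code M N hM hN hrig
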